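/- arXiv:1205.5993 — 5 statements merged into one kernel-verified Lean document; each statement's English description precedes it below -/
import Mathlib

section
/- Let F be a family of metric spaces. Then one of the following two possibilities holds: either (i) for every finite metric space (M,d_M) and every ε > 0 there exists N ∈ F such that c_N(M) ≤ 1+ε; or (ii) there exist α, κ ∈ (0,∞) such that for each integer n ≥ 2 there exists an n-point metric space (M_n, d_{M_n}) with c_N(M_n) ≥ κ (log n)^α for every N ∈ F. -/
universe u v

/-- `d` is a metric on `A`. -/
def IsMetricOn {A : Type*} (d : A → A → ℝ) : Prop :=
  (∀ x y, 0 ≤ d x y) ∧ (∀ x y, d x y = 0 ↔ x = y) ∧ (∀ x y, d x y = d y x) ∧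
    ∀ x y z, d x z ≤ d x y + d y z

noncomputable def EE {G Y : Type*} [AddCommGroup G] [Fintype G] [MetricSpace Y]
    (F : G → Y) (g : G) : ℝ := ∑ x, dist (F (x + g)) (F x) ^ 2

lemma EE_shift {G Y : Type*} [AddCommGroup G] [Fintype G] [MetricSpace Y]
    (F : G → Y) (a b : G) :
    ∑ x, dist (F (x + a)) (F (x + b)) ^ 2 = EE F (a - b) := by
  unfold EE
  rw [← Equiv.sum_comp (Equiv.addRight b) (fun x => dist (F (x + (a - b))) (F x) ^ 2)]
  refine Finset.sum_congr rfl fun x _ => ?_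
  simp

lemma EE_shift' {G Y : Type*} [AddCommGroup G] [Fintype G] [MetricSpace Y]
    (F : G → Y) (a b : G) :
    ∑ x, dist (F (x + a)) (F (x + b)) ^ 2 = EE F (b - a) := by
  rw [← EE_shift]
  simp only [dist_comm]

lemma sq_add_le (a b h : ℝ) (hh : 0 < h) : (a + b) ^ 2 ≤ (1 + h) * (a ^ 2 + b ^ 2 / h) := by
  have : (1 + h) * (a ^ 2 + b ^ 2 / h) - (a + b) ^ 2 = (h * a - b) ^ 2 / h := by
    field_simp; ring
  have h2 : 0 ≤ (h * a - b) ^ 2 / h := by positivity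
  linarith

lemma EE_add {G Y : Type*} [AddCommGroup G] [Fintype G] [MetricSpace Y]
    (F : G → Y) (a b : G) (h : ℝ) (hh : 0 < h) :
    EE F (a + b) ≤ (1 + h) * (EE F a + EE F b / h) := by
  have e1 : EE F a = ∑ x, dist (F (x + (a + b))) (F (x + b)) ^ 2 := by
    rw [EE_shift]; simp
  rw [e1]
  unfold EE
  rw [Finset.sum_div, ← Finset.sum_add_distrib, Finset.mul_sum]
  refine Finset.sum_le_sum fun x _ => ?_
  refine le_trans ?_ (sq_add_le _ _ h hh)
  gcongr
  exact dist_triangle _ _ _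

lemma EE_scale {n : ℕ} {G Y : Type*} [AddCommGroup G] [Fintype G] [MetricSpace Y]
    (F : G → Y) (ψ : (Fin n → ℤ) →+ G) (Q : ℝ)
    (h1 : ∀ t : Fin n → ℤ, (∀ j, |t j| ≤ 1) → EE F (ψ t) ≤ Q) (h : ℕ) :
    ∀ t : Fin n → ℤ, (∀ j, |t j| ≤ (h : ℤ) + 1) → EE F (ψ t) ≤ Q * ((h : ℝ) + 1) ^ 2 := by
  induction h with
  | zero => intro t ht; simpa using h1 t (by simpa using ht)
  | succ h ih =>
    intro t ht
    have e : t = (fun j => (t j).sign) + (fun j => t j - (t j).sign) := by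
      ext j; simp
    rw [e, map_add]
    have hp : (0 : ℝ) < (h : ℝ) + 1 := by positivity
    refine (EE_add F _ _ ((h : ℝ) + 1) hp).trans ?_
    have i1 := h1 (fun j => (t j).sign) (fun j => by
      rcases lt_trichotomy (t j) 0 with h | h | h
      · simp [Int.sign_eq_neg_one_of_neg h]
      · simp [h]
      · simp [Int.sign_eq_one_of_pos h])
    have i2 := ih (fun j => t j - (t j).sign) (fun j => by
      have := ht j
      push_cast at this
      rw [abs_le] at this
      show |t j - (t j).sign| ≤ _
      rcases lt_trichotomy (t j) 0 with h | h | h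
      · rw [Int.sign_eq_neg_one_of_neg h, abs_le]; constructor <;> omega
      · simp [h]; positivity
      · rw [Int.sign_eq_one_of_pos h, abs_le]; constructor <;> omega)
    calc _ ≤ (1 + ((h : ℝ) + 1)) * (Q + (Q * ((h : ℝ) + 1) ^ 2) / ((h : ℝ) + 1)) := by
          gcongr
      _ = _ := by push_cast; field_simp; ring

lemma EE_scale' {n : ℕ} {G Y : Type*} [AddCommGroup G] [Fintype G] [MetricSpace Y]
    (F : G → Y) (ψ : (Fin n → ℤ) →+ G) (Q : ℝ)
    (h1 : ∀ t : Fin n → ℤ, (∀ j, |t j| ≤ 1) → EE F (ψ t) ≤ Q) (h : ℤ) (hh : 1 ≤ h)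
    (t : Fin n → ℤ) (ht : ∀ j, |t j| ≤ h) : EE F (ψ t) ≤ Q * (h : ℝ) ^ 2 := by
  obtain ⟨k, rfl⟩ : ∃ k : ℕ, h = (k : ℤ) + 1 := ⟨(h - 1).toNat, by omega⟩
  simpa using EE_scale F ψ Q h1 k t ht

lemma three_pt (a1 a2 a3 d s1 s2 s3 : ℝ) (hd : 0 ≤ d)
    (hle : d ≤ a1 + a2 + a3) (h1 : 1 ≤ s1) (h2 : 1 ≤ s2) (h3 : 1 ≤ s3) :
    (a2 / s2 - d / (s1 + s2 + s3)) ^ 2 ≤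
      2 * (a1 ^ 2 / s1 + a2 ^ 2 / s2 + a3 ^ 2 / s3 - d ^ 2 / (s1 + s2 + s3)) := by
  set R := s1 + s2 + s3 with hR
  set S := a1 + a2 + a3 with hS
  have hRp : 1 ≤ R := by linarith
  have p1 : 0 < s1 := by linarith
  have p2 : 0 < s2 := by linarith
  have p3 : 0 < s3 := by linarith
  have pR : 0 < R := by linarith
  have X : a1 ^ 2 / s1 + a2 ^ 2 / s2 + a3 ^ 2 / s3 - S ^ 2 / R =
      s1 * (a1 / s1 - S / R) ^ 2 + s2 * (a2 / s2 - S / R) ^ 2 + s3 * (a3 / s3 - S / R) ^ 2 := by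
    have : s1 * (a1 / s1 - S / R) ^ 2 + s2 * (a2 / s2 - S / R) ^ 2 + s3 * (a3 / s3 - S / R) ^ 2
      = a1 ^ 2 / s1 + a2 ^ 2 / s2 + a3 ^ 2 / s3 - 2 * (a1 + a2 + a3) * S / R
        + (s1 + s2 + s3) * S ^ 2 / R ^ 2 := by
      field_simp; ring
    rw [this, ← hR, ← hS]
    field_simp; ring
  have Y : (S / R - d / R) ^ 2 ≤ S ^ 2 / R - d ^ 2 / R := by
    rw [← sub_div, ← sub_div, div_pow, div_le_div_iff₀ (by positivity) pR]
    have k1 : (S - d) ^ 2 ≤ S ^ 2 - d ^ 2 := by nlinarith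
    have k2 : R ≤ R ^ 2 := by nlinarith
    have k3 := sq_nonneg (S - d)
    exact mul_le_mul k1 k2 pR.le (by linarith)
  have Z : (a2 / s2 - S / R) ^ 2 ≤ a1 ^ 2 / s1 + a2 ^ 2 / s2 + a3 ^ 2 / s3 - S ^ 2 / R := by
    rw [X]
    have := mul_nonneg p1.le (sq_nonneg (a1 / s1 - S / R))
    have := mul_nonneg p3.le (sq_nonneg (a3 / s3 - S / R))
    have := mul_le_mul_of_nonneg_right h2 (sq_nonneg (a2 / s2 - S / R))
    linarith
  nlinarith [sq_nonneg ((a2 / s2 - S / R) - (S / R - d / R))]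

/-- comparison with the long segment -/
lemma seg {n m : ℕ} (hm : 1 ≤ m) {G Y : Type*} [AddCommGroup G] [Fintype G] [MetricSpace Y]
    (F : G → Y) (ψ : (Fin n → ℤ) →+ G) (Q β : ℝ)
    (h1 : ∀ t : Fin n → ℤ, (∀ j, |t j| ≤ 1) → EE F (ψ t) ≤ Q) (b : Fin n)
    (h2 : β * (4 * (m : ℝ)) ^ 2 * Q < EE F (ψ (Pi.single b (4 * (m : ℤ)))))
    (p q : Fin n → ℤ) (hp : ∀ j, 0 ≤ p j ∧ p j ≤ m) (hq : ∀ j, 0 ≤ q j ∧ q j ≤ m)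
    (h : ℤ) (hh : 1 ≤ h) (hb : q b - p b = h) (hj : ∀ j, |q j - p j| ≤ h) :
    ∑ x, (dist (F (x + ψ p)) (F (x + ψ q)) / (h : ℝ)
      - dist (F (x + ψ (Pi.single b (-2 * (m : ℤ))))) (F (x + ψ (Pi.single b (2 * (m : ℤ)))))
        / (4 * (m : ℝ))) ^ 2 ≤ 8 * (m : ℝ) * (1 - β) * Q := by
  set P : Fin n → ℤ := Pi.single b (-2 * (m : ℤ)) with hP
  set R : Fin n → ℤ := Pi.single b (2 * (m : ℤ)) with hR
  have hpb := hp b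
  have hqb := hq b
  set s1 : ℤ := p b + 2 * m with hs1
  set s3 : ℤ := 2 * m - q b with hs3
  have i1 : ∑ x, dist (F (x + ψ P)) (F (x + ψ p)) ^ 2 ≤ Q * (s1 : ℝ) ^ 2 := by
    rw [EE_shift', ← map_sub]
    refine EE_scale' F ψ Q h1 s1 (by omega) _ fun j => ?_
    have := hp j
    by_cases hjb : j = b
    · subst hjb; simp [hP, abs_le]; omega
    · simp [hP, hjb, abs_le]; omega
  have i3 : ∑ x, dist (F (x + ψ q)) (F (x + ψ R)) ^ 2 ≤ Q * (s3 : ℝ) ^ 2 := by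
    rw [EE_shift', ← map_sub]
    refine EE_scale' F ψ Q h1 s3 (by omega) _ fun j => ?_
    have := hq j
    by_cases hjb : j = b
    · subst hjb; simp [hR, abs_le]; omega
    · simp [hR, hjb, abs_le]; omega
  have i2 : ∑ x, dist (F (x + ψ p)) (F (x + ψ q)) ^ 2 ≤ Q * (h : ℝ) ^ 2 := by
    rw [EE_shift', ← map_sub]
    exact EE_scale' F ψ Q h1 h hh _ fun j => hj j
  have i4 : β * (4 * (m : ℝ)) ^ 2 * Q < ∑ x, dist (F (x + ψ P)) (F (x + ψ R)) ^ 2 := by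
    rw [EE_shift', ← map_sub, hP, hR, ← Pi.single_sub]
    have e : (2 * (m : ℤ) - -2 * m) = 4 * m := by ring
    rw [e]; exact h2
  have r1 : (1 : ℝ) ≤ s1 := by exact_mod_cast (by omega : 1 ≤ s1)
  have r2 : (1 : ℝ) ≤ h := by exact_mod_cast hh
  have r3 : (1 : ℝ) ≤ s3 := by exact_mod_cast (by omega : 1 ≤ s3)
  have rs : (s1 : ℝ) + h + s3 = 4 * m := by
    have : s1 + h + s3 = 4 * m := by omega
    exact_mod_cast this
  have hmr : (1 : ℝ) ≤ m := by exact_mod_cast hm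
  have key : ∀ x, (dist (F (x + ψ p)) (F (x + ψ q)) / (h : ℝ)
      - dist (F (x + ψ P)) (F (x + ψ R)) / (4 * (m : ℝ))) ^ 2 ≤
      2 * (dist (F (x + ψ P)) (F (x + ψ p)) ^ 2 / s1 + dist (F (x + ψ p)) (F (x + ψ q)) ^ 2 / h
        + dist (F (x + ψ q)) (F (x + ψ R)) ^ 2 / s3
        - dist (F (x + ψ P)) (F (x + ψ R)) ^ 2 / (4 * m)) := by
    intro x
    rw [← rs]
    exact three_pt _ _ _ _ _ _ _ dist_nonneg (dist_triangle4 _ _ _ _) r1 r2 r3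
  refine (Finset.sum_le_sum fun x _ => key x).trans ?_
  rw [← Finset.mul_sum, Finset.sum_sub_distrib, Finset.sum_add_distrib, Finset.sum_add_distrib,
    ← Finset.sum_div, ← Finset.sum_div, ← Finset.sum_div, ← Finset.sum_div]
  have j1 : (∑ x, dist (F (x + ψ P)) (F (x + ψ p)) ^ 2) / s1 ≤ Q * s1 := by
    rw [div_le_iff₀ (by linarith)]; linarith
  have j2 : (∑ x, dist (F (x + ψ p)) (F (x + ψ q)) ^ 2) / h ≤ Q * h := by
    rw [div_le_iff₀ (by linarith)]; linarith
  have j3 : (∑ x, dist (F (x + ψ q)) (F (x + ψ R)) ^ 2) / s3 ≤ Q * s3 := by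
    rw [div_le_iff₀ (by linarith)]; linarith
  have j4 : β * (4 * m) * Q ≤ (∑ x, dist (F (x + ψ P)) (F (x + ψ R)) ^ 2) / (4 * m) := by
    rw [le_div_iff₀ (by linarith)]; linarith
  have : Q * s1 + Q * h + Q * s3 = Q * (4 * m) := by rw [← rs]; ring
  linarith

lemma core {n m : ℕ} (hn : 0 < n) (hm : 1 ≤ m) {G Y : Type*} [AddCommGroup G] [Fintype G]
    [MetricSpace Y]
    (F : G → Y) (ψ : (Fin n → ℤ) →+ G) (Q β : ℝ) (hβ : 1 - β = 1 / (256 * (n : ℝ) ^ 2 * m ^ 3))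
    (h1 : ∀ t : Fin n → ℤ, (∀ j, |t j| ≤ 1) → EE F (ψ t) ≤ Q)
    (h2 : ∀ b, β * (4 * (m : ℝ)) ^ 2 * Q < EE F (ψ (Pi.single b (4 * (m : ℤ)))))
    (K : Fin n → Fin n → ℤ) (hK : ∀ x j, 0 ≤ K x j ∧ K x j ≤ m) (H : Fin n → Fin n → ℤ)
    (hH : ∀ x y, (∀ j, |K x j - K y j| ≤ H x y) ∧ ∃ j, |K x j - K y j| = H x y) :
    ∃ (g : Fin n → Y) (lam : ℝ), 0 < lam ∧ ∀ x y, |dist (g x) (g y) - H x y * lam| ≤ lam := by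
  have hmr : (1 : ℝ) ≤ m := by exact_mod_cast hm
  have hnr : (1 : ℝ) ≤ n := by exact_mod_cast hn
  have hσ : 256 * (n : ℝ) ^ 2 * m ^ 3 * (1 - β) = 1 := by rw [hβ]; field_simp
  have hn2 : (1 : ℝ) ≤ (n : ℝ) ^ 2 := one_le_pow₀ hnr
  have hm2 : (1 : ℝ) ≤ (m : ℝ) ^ 2 := one_le_pow₀ hmr
  have hσ0 : 0 < 1 - β := by rw [hβ]; positivity
  have hσm : 256 * (m : ℝ) * (1 - β) ≤ 1 := by
    rw [← hσ]
    have : 1 * 1 ≤ (n : ℝ) ^ 2 * (m : ℝ) ^ 2 := mul_le_mul hn2 hm2 zero_le_one (by positivity)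
    have h3 : 0 ≤ 256 * (m : ℝ) * (1 - β) := by positivity
    nlinarith
  have hβ1 : 255 / 256 ≤ β := by nlinarith
  let b0 : Fin n := ⟨0, hn⟩
  have hQ : 0 < Q := by
    have := EE_scale' F ψ Q h1 (4 * m) (by omega) (Pi.single b0 (4 * (m : ℤ))) (fun j => by
      by_cases hj : j = b0
      · subst hj; simp
      · simp [hj])
    have h3 := h2 b0
    push_cast at this
    have h4 : 0 < (1 - β) * (4 * (m : ℝ)) ^ 2 * Q := by linarith
    have h5 : 0 < (1 - β) * (4 * (m : ℝ)) ^ 2 := by positivity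
    exact (mul_pos_iff_of_pos_left h5).1 h4
  -- reference pair
  let w : G → ℝ := fun x => dist (F (x + ψ 0)) (F (x + ψ 1))
  let r : Fin n → G → ℝ := fun b x =>
    dist (F (x + ψ (Pi.single b (-2 * (m : ℤ))))) (F (x + ψ (Pi.single b (2 * (m : ℤ)))))
        / (4 * (m : ℝ))
  have hw : ∀ b, ∑ x, (w x - r b x) ^ 2 ≤ 8 * (m : ℝ) * (1 - β) * Q := by
    intro b
    have := seg hm F ψ Q β h1 b (h2 b) 0 1 (by simp) (by simp; omega) 1 le_rfl (by simp) (by simp)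
    simpa [w, r] using this
  have hr : β * Q ≤ ∑ x, r b0 x ^ 2 := by
    have h3 := h2 b0
    simp only [r, div_pow]
    rw [← Finset.sum_div, EE_shift', ← map_sub, ← Pi.single_sub, le_div_iff₀ (by positivity)]
    have e : (2 * (m : ℤ) - -2 * m) = 4 * m := by ring
    rw [e]; linarith
  have hwl : Q / 4 ≤ ∑ x, w x ^ 2 := by
    have : ∑ x, r b0 x ^ 2 ≤ ∑ x, (2 * w x ^ 2 + 2 * (w x - r b0 x) ^ 2) :=
      Finset.sum_le_sum fun x _ => by nlinarith [sq_nonneg (r b0 x - 2 * w x)]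
    rw [Finset.sum_add_distrib, ← Finset.mul_sum, ← Finset.mul_sum] at this
    have h3 := hw b0
    nlinarith
  have hpair : ∀ x y, ∑ z, (dist (F (z + ψ (K x))) (F (z + ψ (K y))) - H x y * w z) ^ 2
      ≤ 32 * (m : ℝ) ^ 3 * (1 - β) * Q := by
    have main : ∀ x y b, 1 ≤ H x y → K y b - K x b = H x y →
      ∑ z, (dist (F (z + ψ (K x))) (F (z + ψ (K y))) - H x y * w z) ^ 2
      ≤ 32 * (m : ℝ) ^ 3 * (1 - β) * Q := by
      intro x y b hh hb
      have h3 := seg hm F ψ Q β h1 b (h2 b) (K x) (K y) (hK x) (hK y) (H x y) hh hb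
        (fun j => by rw [abs_sub_comm]; exact (hH x y).1 j)
      have h4 := hw b
      have hhr : (1 : ℝ) ≤ H x y := by exact_mod_cast hh
      have hhm : (H x y : ℝ) ≤ m := by
        have := (hK x b); have := hK y b
        exact_mod_cast (by omega : H x y ≤ m)
      have : ∑ z, (dist (F (z + ψ (K x))) (F (z + ψ (K y))) - H x y * w z) ^ 2 ≤
          ∑ z, (H x y : ℝ) ^ 2 * (2 * (dist (F (z + ψ (K x))) (F (z + ψ (K y))) / H x y - r b z) ^ 2
            + 2 * (w z - r b z) ^ 2) := by
        refine Finset.sum_le_sum fun z _ => ?_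
        have e : dist (F (z + ψ (K x))) (F (z + ψ (K y))) - H x y * w z =
          H x y * (dist (F (z + ψ (K x))) (F (z + ψ (K y))) / H x y - w z) := by
          field_simp
        rw [e, mul_pow]
        gcongr
        nlinarith [sq_nonneg ((dist (F (z + ψ (K x))) (F (z + ψ (K y))) / H x y - r b z) +
          (w z - r b z))]
      rw [← Finset.mul_sum, Finset.sum_add_distrib, ← Finset.mul_sum, ← Finset.mul_sum] at this
      refine this.trans ?_
      calc _ ≤ (m : ℝ) ^ 2 * (2 * (8 * (m : ℝ) * (1 - β) * Q) + 2 * (8 * (m : ℝ) * (1 - β) * Q)) := by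
            gcongr
        _ = _ := by ring
    intro x y
    obtain ⟨b, hb⟩ := (hH x y).2
    have h0 : 0 ≤ H x y := by rw [← hb]; exact abs_nonneg _
    rcases h0.eq_or_lt with h0 | h0
    · have : K x = K y := by
        ext j
        have := (hH x y).1 j
        rw [← h0, abs_le] at this; omega
      simp [this, ← h0]
      positivity
    · rcases abs_cases (K x b - K y b) with ⟨h5, _⟩ | ⟨h5, _⟩
      · have hs : H x y = H y x := by
          obtain ⟨c, hc⟩ := (hH y x).2
          have a1 := (hH x y).1 c
          have a2 := (hH y x).1 b
          rw [abs_sub_comm] at a1 a2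
          omega
        have := main y x b (by omega) (by omega)
        rw [hs]
        simpa only [dist_comm] using this
      · exact main x y b (by omega) (by omega)
  have hall : ∑ z, ∑ x, ∑ y, (dist (F (z + ψ (K x))) (F (z + ψ (K y))) - H x y * w z) ^ 2
      < ∑ z, w z ^ 2 := by
    rw [Finset.sum_comm]
    have : ∀ x, ∑ z, ∑ y, (dist (F (z + ψ (K x))) (F (z + ψ (K y))) - H x y * w z) ^ 2
       ≤ n * (32 * (m : ℝ) ^ 3 * (1 - β) * Q) := by
      intro x
      rw [Finset.sum_comm]
      refine (Finset.sum_le_sum fun y _ => hpair x y).trans ?_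
      simp
    refine (Finset.sum_le_sum fun x _ => this x).trans_lt ?_
    simp
    refine lt_of_lt_of_le ?_ hwl
    have : (n : ℝ) * (n * (32 * (m : ℝ) ^ 3 * (1 - β) * Q)) = Q / 8 := by
      linear_combination (Q / 8) * hσ
    rw [this]; linarith
  obtain ⟨z, -, hz⟩ := Finset.exists_lt_of_sum_lt hall
  have hz0 : 0 < w z := by
    have : 0 < w z ^ 2 := lt_of_le_of_lt (by positivity) hz
    have h3 : 0 ≤ w z := dist_nonneg
    exact lt_of_le_of_ne h3 (fun h => by rw [← h] at this; simp at this)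
  refine ⟨fun x => F (z + ψ (K x)), w z, hz0, fun x y => ?_⟩
  refine abs_le_of_sq_le_sq ?_ hz0.le
  refine le_trans ?_ hz.le
  refine le_trans ?_ (Finset.single_le_sum (f := fun x => ∑ y, (dist (F (z + ψ (K x))) (F (z + ψ (K y))) - H x y * w z) ^ 2) (fun i _ => by positivity) (Finset.mem_univ x))
  exact (Finset.single_le_sum (f := fun y => (dist (F (z + ψ (K x))) (F (z + ψ (K y))) - H x y * w z) ^ 2) (fun i _ => by positivity) (Finset.mem_univ y))

lemma iter {n m : ℕ} (hn : 0 < n) (hm : 1 ≤ m) {G Y : Type*} [AddCommGroup G] [Fintype G]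
    [MetricSpace Y]
    (F : G → Y) (β : ℝ) (hβ : 1 - β = 1 / (256 * (n : ℝ) ^ 2 * m ^ 3))
    (K : Fin n → Fin n → ℤ) (hK : ∀ x j, 0 ≤ K x j ∧ K x j ≤ m) (H : Fin n → Fin n → ℤ)
    (hH : ∀ x y, (∀ j, |K x j - K y j| ≤ H x y) ∧ ∃ j, |K x j - K y j| = H x y)
    (hno : ¬ ∃ (g : Fin n → Y) (lam : ℝ), 0 < lam ∧
      ∀ x y, |dist (g x) (g y) - H x y * lam| ≤ lam) (k : ℕ) :
    ∀ (φ : ((Fin k → Fin n) → ℤ) →+ G) (Q : ℝ),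
      (∀ u : (Fin k → Fin n) → ℤ, (∀ v, |u v| ≤ 1) → EE F (φ u) ≤ Q) →
      ∃ w : (Fin k → Fin n) → ℤ, (∃ v, w v = 1) ∧
        EE F (φ (fun v => (4 * (m : ℤ)) ^ k * w v)) ≤ (β * (4 * (m : ℝ)) ^ 2) ^ k * Q := by
  induction k with
  | zero =>
    intro φ Q h
    refine ⟨fun _ => 1, ⟨Fin.elim0, rfl⟩, ?_⟩
    simpa using h (fun _ => 1) (by simp)
  | succ k ih =>
    intro φ Q h
    by_cases hb : ∃ b : Fin n, ∀ u : (Fin k → Fin n) → ℤ, (∀ v, |u v| ≤ 1) →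
        EE F (φ (fun v => if v 0 = b then 4 * (m : ℤ) * u (Fin.tail v) else 0)) ≤
          β * (4 * (m : ℝ)) ^ 2 * Q
    · obtain ⟨b, hb⟩ := hb
      let e : ((Fin k → Fin n) → ℤ) →+ ((Fin (k + 1) → Fin n) → ℤ) :=
        { toFun := fun u v => if v 0 = b then 4 * (m : ℤ) * u (Fin.tail v) else 0
          map_zero' := by ext v; simp
          map_add' := by
            intro x y; ext v
            by_cases hv : v 0 = b <;> simp [hv, mul_add] }
      obtain ⟨w, ⟨v, hv⟩, hw⟩ := ih (φ.comp e) _ hb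
      refine ⟨fun v => if v 0 = b then w (Fin.tail v) else 0, ⟨Fin.cons b v, by simp [hv]⟩, ?_⟩
      have e1 : (fun v : Fin (k + 1) → Fin n => (4 * (m : ℤ)) ^ (k + 1) *
          (if v 0 = b then w (Fin.tail v) else 0)) = e (fun v => (4 * (m : ℤ)) ^ k * w v) := by
        ext v
        by_cases hv : v 0 = b
        · simp [e, hv]; ring
        · simp [e, hv]
      rw [e1]
      refine hw.trans (le_of_eq ?_)
      ring
    · exfalso
      push Not at hb
      choose u hu hu2 using hb
      let e : (Fin n → ℤ) →+ ((Fin (k + 1) → Fin n) → ℤ) :=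
        { toFun := fun t v => t (v 0) * u (v 0) (Fin.tail v)
          map_zero' := by ext v; simp
          map_add' := by
            intro x y; ext v
            simp [add_mul] }
      apply hno
      refine core hn hm F (φ.comp e) Q β hβ ?_ ?_ K hK H hH
      · intro t ht
        refine h _ fun v => ?_
        show |t (v 0) * u (v 0) (Fin.tail v)| ≤ 1
        rw [abs_mul]
        exact mul_le_one₀ (ht _) (abs_nonneg _) (hu _ _)
      · intro b
        refine (hu2 b).trans_eq ?_
        refine congrArg (fun z => EE F (φ z)) ?_
        funext v
        by_cases hv : v 0 = b
        · subst hv; simp [e]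
        · simp [e, hv]

lemma kuratowski {n : ℕ} (d : Fin n → Fin n → ℝ) (hd : (∀ x y, 0 ≤ d x y) ∧
    (∀ x y, d x y = 0 ↔ x = y) ∧ (∀ x y, d x y = d y x) ∧
    ∀ x y z, d x z ≤ d x y + d y z) (ε : ℝ) (hε : 0 < ε) (hn : 0 < n) :
    ∃ (m : ℕ) (K H : Fin n → Fin n → ℤ), 1 ≤ m ∧ (∀ x j, 0 ≤ K x j ∧ K x j ≤ m) ∧
      (∀ x y, (∀ j, |K x j - K y j| ≤ H x y) ∧ ∃ j, |K x j - K y j| = H x y) ∧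
      ∀ (Y : Type*) [MetricSpace Y] (g : Fin n → Y) (lam : ℝ), 0 < lam →
        (∀ x y, |dist (g x) (g y) - H x y * lam| ≤ lam) →
        ∃ lam' : ℝ, 0 < lam' ∧ ∀ x y : Fin n, lam' * d x y ≤ dist (g x) (g y) ∧
          dist (g x) (g y) ≤ (1 + ε) * (lam' * d x y) := by
  obtain ⟨h0, h1, h2, h3⟩ := hd
  have : Nonempty (Fin n) := ⟨⟨0, hn⟩⟩
  obtain ⟨δ, hδ, hδd⟩ : ∃ δ : ℝ, 0 < δ ∧ ∀ x y, x ≠ y → δ ≤ d x y := by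
    let f : Fin n × Fin n → ℝ := fun p => if p.1 = p.2 then 1 else d p.1 p.2
    obtain ⟨p, hp⟩ := Finite.exists_min f
    refine ⟨f p, ?_, fun x y hxy => ?_⟩
    · by_cases h : p.1 = p.2
      · simp [f, h]
      · simp only [f, h, if_false]
        exact lt_of_le_of_ne (h0 _ _) (fun h' => h ((h1 _ _).1 h'.symm))
    · have := hp (x, y)
      simpa [f, hxy] using this
  -- scale
  set q : ℝ := (4 + 2 * ε) / (ε * δ) with hq
  have hqp : 0 < q := by positivity
  obtain ⟨p, hp⟩ := Finite.exists_max (fun p : Fin n × Fin n => d p.1 p.2)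
  let K : Fin n → Fin n → ℤ := fun x j => ⌊q * d x j⌋
  have hHex : ∀ x y, ∃ h : ℤ, (∀ j, |K x j - K y j| ≤ h) ∧ ∃ j, |K x j - K y j| = h := by
    intro x y
    obtain ⟨j, hj⟩ := Finite.exists_max (fun j => |K x j - K y j|)
    exact ⟨_, hj, j, rfl⟩
  choose H hH using hHex
  have hHd : ∀ x y, |(H x y : ℝ) - q * d x y| ≤ 1 := by
    intro x y
    have fl := fun x j => Int.floor_le (q * d x j)
    have fu := fun x j => Int.lt_floor_add_one (q * d x j)
    rw [abs_le]
    constructor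
    · have a1 := (hH x y).1 y
      have a2 := (le_abs_self _).trans a1
      have a3 : (K x y : ℝ) - K y y ≤ H x y := by exact_mod_cast a2
      have a4 : K y y = 0 := by simp [K, (h1 y y).2 rfl]
      have a5 := fu x y
      rw [a4] at a3
      simp only [K] at a3
      push_cast at a3
      linarith
    · obtain ⟨j, hj⟩ := (hH x y).2
      have hj' : |(K x j : ℝ) - K y j| = H x y := by exact_mod_cast hj
      rw [← hj']
      have b1 : q * d x j ≤ q * d x y + q * d y j := by
        rw [← mul_add]; exact mul_le_mul_of_nonneg_left (h3 _ _ _) hqp.le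
      have b2 : q * d y j ≤ q * d x y + q * d x j := by
        rw [← mul_add, h2 x y]; exact mul_le_mul_of_nonneg_left (h3 _ _ _) hqp.le
      have : |(K x j : ℝ) - K y j| ≤ q * d x y + 1 := by
        rw [abs_le]
        have := fl x j; have := fu x j; have := fl y j; have := fu y j
        simp only [K]
        constructor <;> linarith
      linarith
  refine ⟨⌊q * d p.1 p.2⌋.toNat + 1, K, H, by omega, fun x j => ⟨?_, ?_⟩, hH, ?_⟩
  · exact Int.floor_nonneg.2 (mul_nonneg hqp.le (h0 _ _))
  · have : K x j ≤ ⌊q * d p.1 p.2⌋ :=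
      Int.floor_le_floor (mul_le_mul_of_nonneg_left (hp (x, j)) hqp.le)
    omega
  · intro Y _ g lam hlam hg
    have hq2 : 2 / δ < q := by
      rw [hq, div_lt_div_iff₀ hδ (by positivity)]
      nlinarith [mul_pos hε hδ]
    have hq3 : q + 2 / δ = (1 + ε) * (q - 2 / δ) := by
      rw [hq]; field_simp; ring
    refine ⟨lam * (q - 2 / δ), mul_pos hlam (by linarith), fun x y => ?_⟩
    by_cases hxy : x = y
    · subst hxy; simp [(h1 x x).2 rfl]
    · have c1 := hδd x y hxy
      have c2 : 2 ≤ 2 / δ * d x y := by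
        have : 2 / δ * δ = 2 := by field_simp
        have := mul_le_mul_of_nonneg_left c1 (by positivity : 0 ≤ 2 / δ)
        linarith
      have c3 := abs_le.1 (hg x y)
      have c4 := abs_le.1 (hHd x y)
      constructor
      · have : lam * (q * d x y - 2 / δ * d x y) ≤ lam * (H x y - 1) :=
          mul_le_mul_of_nonneg_left (by linarith) hlam.le
        linarith
      · have e : (1 + ε) * (lam * (q - 2 / δ) * d x y) = lam * ((q + 2 / δ) * d x y) := by
          rw [hq3]; ring
        rw [e]
        have : lam * (H x y + 1) ≤ lam * ((q + 2 / δ) * d x y) :=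
          mul_le_mul_of_nonneg_left (by linarith) hlam.le
        linarith

lemma torus {n m : ℕ} (hn : 0 < n) (hm : 1 ≤ m) {Y : Type*} [MetricSpace Y]
    (β : ℝ) (hβ : 1 - β = 1 / (256 * (n : ℝ) ^ 2 * m ^ 3))
    (K : Fin n → Fin n → ℤ) (hK : ∀ x j, 0 ≤ K x j ∧ K x j ≤ m) (H : Fin n → Fin n → ℤ)
    (hH : ∀ x y, (∀ j, |K x j - K y j| ≤ H x y) ∧ ∃ j, |K x j - K y j| = H x y)
    (hno : ¬ ∃ (g : Fin n → Y) (lam : ℝ), 0 < lam ∧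
      ∀ x y, |dist (g x) (g y) - H x y * lam| ≤ lam) (k T : ℕ) [NeZero T]
    (hT : T = 2 * (4 * m) ^ k) (F : ((Fin k → Fin n) → ZMod T) → Y) (lam D : ℝ)
    (hlam : 0 < lam) (hD : 0 ≤ D)
    (hF : ∀ x y : (Fin k → Fin n) → ZMod T,
      lam * dist (fun j => ZMod.toAddCircle (x j)) (fun j => ZMod.toAddCircle (y j))
        ≤ dist (F x) (F y) ∧
      dist (F x) (F y) ≤ D *
        (lam * dist (fun j => ZMod.toAddCircle (x j)) (fun j => ZMod.toAddCircle (y j)))) :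
    1 ≤ β ^ k * D ^ 2 := by
  let φ : ((Fin k → Fin n) → ℤ) →+ ((Fin k → Fin n) → ZMod T) :=
    { toFun := fun u j => (u j : ZMod T)
      map_zero' := by ext; simp
      map_add' := by intro x y; ext; simp }
  have hTp : (0 : ℝ) < T := by exact_mod_cast Nat.pos_of_ne_zero (NeZero.ne T)
  have hA : (0 : ℝ) < (4 * (m : ℝ)) ^ k := by
    have : (1 : ℝ) ≤ m := by exact_mod_cast hm
    positivity
  have hTr : (T : ℝ) = 2 * (4 * (m : ℝ)) ^ k := by rw [hT]; push_cast; ring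
  have hT2 : (4 * (m : ℝ)) ^ k / T = 1 / 2 := by rw [hTr]; field_simp
  have hT1 : (1 : ℝ) / T ≤ 1 / 2 := by
    have : (1 : ℝ) ≤ (4 * (m : ℝ)) ^ k := one_le_pow₀ (by
      have : (1 : ℝ) ≤ m := by exact_mod_cast hm
      linarith)
    rw [← hT2]; gcongr
  have hnorm : ∀ a : ℤ, |(a : ℝ) / T| ≤ 1 / 2 →
      ‖ZMod.toAddCircle (a : ZMod T)‖ = |(a : ℝ) / T| := by
    intro a ha
    rw [ZMod.toAddCircle_intCast]
    exact (AddCircle.norm_coe_eq_abs_iff 1 one_ne_zero).2 (by simpa using ha)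
  set c : ℝ := ((Fintype.card ((Fin k → Fin n) → ZMod T) : ℕ) : ℝ) with hc
  have hcp : 0 < c := by rw [hc]; exact_mod_cast Fintype.card_pos
  obtain ⟨w, ⟨v, hv⟩, hw⟩ := iter hn hm F β hβ K hK H hH hno k φ (c * (D * (lam * (1 / T))) ^ 2) (by
    intro u hu
    unfold EE
    refine (Finset.sum_le_sum (g := fun _ => (D * (lam * (1 / T))) ^ 2) fun x _ => ?_).trans
      (by simp [hc])
    refine pow_le_pow_left₀ dist_nonneg ((hF _ _).2.trans ?_) 2
    gcongr
    rw [dist_pi_le_iff (by positivity)]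
    intro j
    rw [dist_eq_norm, ← map_sub]
    have : (x + φ u) j - x j = (u j : ZMod T) := by simp [φ]
    rw [this]
    have h1 : |((u j : ℤ) : ℝ)| ≤ 1 := by exact_mod_cast hu j
    have h2 : |((u j : ℤ) : ℝ) / T| ≤ 1 / T := by
      rw [abs_div, abs_of_pos hTp]; gcongr
    rw [hnorm _ (h2.trans hT1)]
    exact h2)
  have hlow : c * (lam * ((4 * (m : ℝ)) ^ k / T)) ^ 2 ≤
      EE F (φ (fun v => (4 * (m : ℤ)) ^ k * w v)) := by
    unfold EE
    refine le_trans (by simp [hc]) (Finset.sum_le_sum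
      (f := fun _ => (lam * ((4 * (m : ℝ)) ^ k / T)) ^ 2) fun x _ => ?_)
    refine pow_le_pow_left₀ (by positivity) (le_trans ?_ (hF _ _).1) 2
    gcongr
    refine le_trans ?_ (dist_le_pi_dist _ _ v)
    rw [dist_eq_norm, ← map_sub]
    have e : (x + φ (fun v => (4 * (m : ℤ)) ^ k * w v)) v - x v
        = (((4 * (m : ℤ)) ^ k : ℤ) : ZMod T) := by simp [φ, hv]
    have e2 : |(((4 * (m : ℤ)) ^ k : ℤ) : ℝ) / T| = (4 * (m : ℝ)) ^ k / T := by
      push_cast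
      exact abs_of_pos (by positivity)
    rw [e, hnorm _ (by rw [e2, hT2]), e2]
  have h := hlow.trans hw
  have e1 : c * (lam * ((4 * (m : ℝ)) ^ k / T)) ^ 2 =
    (c * lam ^ 2 / T ^ 2 * ((4 * (m : ℝ)) ^ 2) ^ k) * 1 := by
    rw [← pow_mul, mul_comm 2 k, pow_mul]; field_simp
  have e2 : (β * (4 * (m : ℝ)) ^ 2) ^ k * (c * (D * (lam * (1 / T))) ^ 2) =
    (c * lam ^ 2 / T ^ 2 * ((4 * (m : ℝ)) ^ 2) ^ k) * (β ^ k * D ^ 2) := by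
    rw [mul_pow β]; field_simp
  rw [e1, e2] at h
  refine le_of_mul_le_mul_left h ?_
  have : (1 : ℝ) ≤ m := by exact_mod_cast hm
  positivity

/-- the p-point space -/
lemma space {n : ℕ} (k T p : ℕ) [NeZero T] (hn : 0 < n) (hp : T ^ (n ^ k) ≤ p) :
    ∃ (e : Fin p → ((Fin k → Fin n) → UnitAddCircle))
      (s : ((Fin k → Fin n) → ZMod T) → Fin p), Function.Injective e ∧
      ∀ x, e (s x) = fun j => ZMod.toAddCircle (x j) := by
  classical
  have : Nonempty (Fin k → Fin n) := ⟨fun _ => ⟨0, hn⟩⟩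
  have : Infinite UnitAddCircle := by
    have : Infinite (Set.Ico (0 : ℝ) (0 + 1)) := by
      exact (Set.Ico_infinite (by norm_num)).to_subtype
    exact Infinite.of_injective _ (AddCircle.equivIco (1 : ℝ) 0).symm.injective
  let Θ : ((Fin k → Fin n) → ZMod T) → ((Fin k → Fin n) → UnitAddCircle) :=
    fun x j => ZMod.toAddCircle (x j)
  obtain ⟨S, hS, hcard⟩ := Infinite.exists_superset_card_eq (Finset.univ.image Θ) p (by
    refine Finset.card_image_le.trans (le_trans (le_of_eq ?_) hp)
    simp [ZMod.card])
  let eq := S.equivFinOfCardEq hcard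
  refine ⟨fun i => (eq.symm i : (Fin k → Fin n) → UnitAddCircle),
    fun x => eq ⟨Θ x, hS (Finset.mem_image_of_mem _ (Finset.mem_univ _))⟩, ?_, ?_⟩
  · exact Subtype.val_injective.comp eq.symm.injective
  · intro x; simp [Θ]

theorem metric_dichotomy {ι : Type u} (N : ι → Type v) [∀ i, MetricSpace (N i)] :
    (∀ (n : ℕ) (d : Fin n → Fin n → ℝ), IsMetricOn d → ∀ ε : ℝ, 0 < ε →
      ∃ (i : ι) (f : Fin n → N i) (lam : ℝ), 0 < lam ∧
        ∀ x y : Fin n, lam * d x y ≤ dist (f x) (f y) ∧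
          dist (f x) (f y) ≤ (1 + ε) * (lam * d x y)) ∨
    (∃ α κ : ℝ, 0 < α ∧ 0 < κ ∧ ∀ n : ℕ, 2 ≤ n →
      ∃ d : Fin n → Fin n → ℝ, IsMetricOn d ∧
        ∀ (i : ι) (f : Fin n → N i) (lam D : ℝ), 0 < lam →
          (∀ x y : Fin n, lam * d x y ≤ dist (f x) (f y) ∧
            dist (f x) (f y) ≤ D * (lam * d x y)) →
          κ * Real.log (n : ℝ) ^ α ≤ D) := by
  refine or_iff_not_imp_left.2 fun hnot => ?_
  push Not at hnot
  obtain ⟨n, d, hd, ε, hε, hnot⟩ := hnot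
  rcases Nat.eq_zero_or_pos n with rfl | hn
  · refine ⟨1, 1, one_pos, one_pos, fun p hp => ⟨fun x y => dist (x : ℕ) (y : ℕ), ?_, ?_⟩⟩
    · exact ⟨fun _ _ => dist_nonneg, fun x y => by rw [dist_eq_zero, Fin.ext_iff],
        fun _ _ => dist_comm _ _, fun _ _ _ => dist_triangle _ _ _⟩
    · intro i f
      obtain ⟨x, _⟩ := hnot i Fin.elim0 1 one_pos
      exact x.elim0
  obtain ⟨m, K, H, hm, hK, hH, hemb⟩ := kuratowski d hd ε hε hn
  have hmr : (1 : ℝ) ≤ m := by exact_mod_cast hm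
  have hnr : (1 : ℝ) ≤ n := by exact_mod_cast hn
  have hno : ∀ i, ¬ ∃ (g : Fin n → N i) (lam : ℝ), 0 < lam ∧
      ∀ x y, |dist (g x) (g y) - H x y * lam| ≤ lam := by
    rintro i ⟨g, lam, hlam, hg⟩
    obtain ⟨lam', h1, h2⟩ := hemb (N i) g lam hlam hg
    obtain ⟨x, y, hxy⟩ := hnot i g lam' h1
    exact absurd (h2 x y).2 (not_le.2 (hxy (h2 x y).1))
  set β : ℝ := 1 - 1 / (256 * (n : ℝ) ^ 2 * m ^ 3) with hβ
  have hβ0 : 0 < β := by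
    have : 1 * 1 ≤ (n : ℝ) ^ 2 * m ^ 3 :=
      mul_le_mul (one_le_pow₀ hnr) (one_le_pow₀ hmr) zero_le_one (by positivity)
    rw [hβ, sub_pos, div_lt_one (by positivity)]; linarith
  have hβ1 : β < 1 := by
    have : 0 < 1 / (256 * (n : ℝ) ^ 2 * m ^ 3) := by positivity
    linarith
  set γ : ℝ := (Real.sqrt β)⁻¹ with hγ
  have hsq : 0 < Real.sqrt β := Real.sqrt_pos.2 hβ0
  have hγ1 : 1 < γ := by
    rw [hγ]; apply (one_lt_inv₀ hsq).2
    rw [Real.sqrt_lt' one_pos]; simpa using hβ1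
  set B : ℝ := 2 * n with hB
  have hB1 : 1 < B := by linarith
  set α : ℝ := Real.log γ / Real.log B with hα
  have hα0 : 0 < α := div_pos (Real.log_pos hγ1) (Real.log_pos hB1)
  have hBα : B ^ α = γ := by
    rw [Real.rpow_def_of_pos (by linarith), hα, mul_div_cancel₀ _ (Real.log_pos hB1).ne',
      Real.exp_log (by linarith)]
  set C : ℝ := 2 * B * Real.log (4 * m) with hC
  have hlogA : 0 < Real.log (4 * m) := Real.log_pos (by linarith)
  have hC0 : 0 < C := by rw [hC]; positivity
  refine ⟨α, (C ^ α)⁻¹, hα0, by positivity, fun p hp => ?_⟩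
  -- choose k
  have hex : ∃ k, p < (2 * (4 * m) ^ k) ^ (n ^ k) := by
    refine ⟨p, ?_⟩
    have h1 : p < 2 ^ p := Nat.lt_two_pow_self
    have h2 : 2 ^ p ≤ (4 * m) ^ p := Nat.pow_le_pow_left (by omega) _
    have h3 : 2 * (4 * m) ^ p ≤ (2 * (4 * m) ^ p) ^ (n ^ p) :=
      Nat.le_self_pow (by positivity) _
    omega
  classical
  obtain ⟨k, hk1, hk2⟩ : ∃ k, (2 * (4 * m) ^ k) ^ (n ^ k) ≤ p ∧
      p < (2 * (4 * m) ^ (k + 1)) ^ (n ^ (k + 1)) := by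
    have hs := Nat.find_spec hex
    have hmin := fun j => Nat.find_min (H := hex) (m := j)
    rcases hkk : Nat.find hex with _ | k
    · rw [hkk] at hs; simp at hs; omega
    · rw [hkk] at hs hmin
      exact ⟨k, not_lt.1 (hmin k (by omega)), hs⟩
  obtain ⟨T, hT⟩ : ∃ T, T = 2 * (4 * m) ^ k := ⟨_, rfl⟩
  have : NeZero T := ⟨by rw [hT]; positivity⟩
  obtain ⟨e, s, he, hes⟩ := space (n := n) k T p hn (by rw [hT]; exact hk1)
  refine ⟨fun x y => dist (e x) (e y), ⟨fun _ _ => dist_nonneg, fun x y => ?_,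
    fun _ _ => dist_comm _ _, fun _ _ _ => dist_triangle _ _ _⟩, ?_⟩
  · rw [dist_eq_zero]; exact he.eq_iff
  intro i f lam D hlam hf
  have hD : 0 ≤ D := by
    let x : Fin p := ⟨0, by omega⟩
    let y : Fin p := ⟨1, by omega⟩
    have hxy : 0 < dist (e x) (e y) := dist_pos.2 (fun h => by
      have := he h
      simp [x, y] at this)
    have h1 := (hf x y).1.trans (hf x y).2
    have h2 : 0 < lam * dist (e x) (e y) := by positivity
    by_contra h
    push Not at h
    nlinarith [mul_neg_of_neg_of_pos h h2]
  have h1 : 1 ≤ β ^ k * D ^ 2 := by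
    refine torus hn hm β (by rw [hβ]; ring) K hK H hH (hno i) k T hT (fun x => f (s x)) lam D
      hlam hD fun x y => ?_
    have := hf (s x) (s y)
    simpa only [hes] using this
  have hDγ : γ ^ k ≤ D := by
    refine (pow_le_pow_iff_left₀ (by positivity) hD two_ne_zero).1 ?_
    have : γ ^ 2 = β⁻¹ := by rw [hγ, inv_pow, Real.sq_sqrt hβ0.le]
    rw [← pow_mul, mul_comm, pow_mul, this, inv_pow, inv_le_iff_one_le_mul₀ (by positivity)]
    linarith
  have hlog : Real.log p ≤ C * B ^ k := by
    have hp0 : (0 : ℝ) < p := by exact_mod_cast (by omega : 0 < p)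
    have h2 : (p : ℝ) ≤ (2 * (4 * (m : ℝ)) ^ (k + 1)) ^ (n ^ (k + 1)) := by exact_mod_cast hk2.le
    have h3 := Real.log_le_log hp0 h2
    rw [Real.log_pow, Real.log_mul (by norm_num) (by positivity), Real.log_pow] at h3
    have h4 : Real.log 2 ≤ Real.log (4 * m) := Real.log_le_log (by norm_num) (by linarith)
    have h5 : ((k : ℝ) + 2) ≤ 2 ^ (k + 2) := by
      have : k + 2 < 2 ^ (k + 2) := Nat.lt_two_pow_self
      exact_mod_cast this.le
    refine h3.trans ?_
    push_cast
    calc (n : ℝ) ^ (k + 1) * (Real.log 2 + ((k : ℝ) + 1) * Real.log (4 * m))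
        ≤ (n : ℝ) ^ (k + 1) * (((k : ℝ) + 2) * Real.log (4 * m)) := by gcongr; linarith
      _ ≤ (n : ℝ) ^ (k + 1) * (2 ^ (k + 2) * Real.log (4 * m)) := by gcongr
      _ = C * B ^ k := by rw [hC, hB, mul_pow]; ring
  have hlog0 : 0 ≤ Real.log p := Real.log_natCast_nonneg p
  have hfin : Real.log p ^ α ≤ C ^ α * γ ^ k := by
    refine (Real.rpow_le_rpow hlog0 hlog hα0.le).trans (le_of_eq ?_)
    have hB0 : 0 ≤ B := by linarith
    rw [Real.mul_rpow hC0.le (by positivity), ← hBα, ← Real.rpow_natCast, ← Real.rpow_natCast,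
      ← Real.rpow_mul hB0, ← Real.rpow_mul hB0, mul_comm (k : ℝ)]
  rw [inv_mul_le_iff₀ (by positivity)]
  exact hfin.trans (by gcongr)
end

section
/- For every ε ∈ (0,1) there exists c_ε ∈ [1,∞) with the following property. Let (M,d_M) be a compact metric space and let μ be a Borel probability measure on M. Then there exist a compact subset S ⊆ M and a Borel probability measure ν supported on S such that: (i) (S,d_M) embeds into an ultrametric space with distortion at most 9/ε, i.e., there is an ultrametric ρ on S with d_M(x,y) ≤ ρ(x,y) ≤ (9/ε) d_M(x,y) for all x,y ∈ S; and (ii) ν(B(x,r) ∩ S) ≤ (μ(B(x, c_ε r)))^{1−ε} for every x ∈ M and r ∈ [0,∞), where B(x,r) = {y ∈ M : d_M(x,y) ≤ r}. -/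
open MeasureTheory Metric

universe u

/-- `ρ` is an ultrametric on `A`. -/
def IsUltrametricOn {A : Type*} (ρ : A → A → ℝ) : Prop :=
  IsMetricOn ρ ∧ ∀ x y z, ρ x z ≤ max (ρ x y) (ρ y z)

open Classical in
noncomputable def skBl {M : Type u} [MetricSpace M] (X : Finset M) (y : M) (r : ℝ) : Finset M :=
  X.filter (fun z => dist z y ≤ r)

def skWt {M : Type u} (w : M → ℝ) (X : Finset M) : ℝ := ∑ z ∈ X, w z

noncomputable def skH {M : Type u} [MetricSpace M] (w : M → ℝ) (k n : ℕ) (Δ : ℝ)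
    (X : Finset M) (y : M) : ℝ :=
  (∏ i ∈ Finset.range k, skWt w (skBl X y ((1/5 + i * (3/25/n)) * Δ))) ^ ((1:ℝ)/n)

def skOut {M : Type u} [MetricSpace M] (D : ℝ) (B : M → ℝ → ℝ) (X : Finset M) (Δ m : ℝ) : Prop :=
  ∃ (S : Finset M) (p : M → ℝ) (ρ : M → M → ℝ), S ⊆ X ∧ (∀ z, 0 ≤ p z) ∧ ∑ z ∈ S, p z = m ∧
    (∀ x ∈ S, ρ x x = 0) ∧ (∀ x ∈ S, ∀ y ∈ S, ρ x y = ρ y x) ∧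
    (∀ x ∈ S, ∀ y ∈ S, ∀ z ∈ S, ρ x z ≤ max (ρ x y) (ρ y z)) ∧
    (∀ x ∈ S, ∀ y ∈ S, dist x y ≤ ρ x y ∧ ρ x y ≤ D * dist x y ∧ ρ x y ≤ Δ) ∧
    ∀ y r, 0 ≤ r → ∑ z ∈ skBl S y r, p z ≤ B y r

section basic
set_option linter.unusedSectionVars false
variable {M : Type u} [MetricSpace M] {w : M → ℝ}

lemma mem_skBl {X : Finset M} {y : M} {r : ℝ} {z : M} : z ∈ skBl X y r ↔ z ∈ X ∧ dist z y ≤ r := by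
  simp [skBl]

lemma skBl_sub (X : Finset M) (y : M) (r : ℝ) : skBl X y r ⊆ X := fun _ hz => (mem_skBl.1 hz).1

lemma skBl_mono {X X' : Finset M} {y : M} {r r' : ℝ} (h : X ⊆ X') (hr : r ≤ r') :
    skBl X y r ⊆ skBl X' y r' := fun z hz => by
  rw [mem_skBl] at *
  exact ⟨h hz.1, hz.2.trans hr⟩

lemma skWt_mono (hw : ∀ z, 0 < w z) {X X' : Finset M} (h : X ⊆ X') : skWt w X ≤ skWt w X' :=
  Finset.sum_le_sum_of_subset_of_nonneg h fun z _ _ => (hw z).le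

lemma skWt_nonneg (hw : ∀ z, 0 < w z) (X : Finset M) : 0 ≤ skWt w X :=
  Finset.sum_nonneg fun z _ => (hw z).le

lemma skWt_pos (hw : ∀ z, 0 < w z) {X : Finset M} (h : X.Nonempty) : 0 < skWt w X :=
  Finset.sum_pos (fun z _ => hw z) h

lemma skWt_bl_pos (hw : ∀ z, 0 < w z) {X : Finset M} {x : M} (h : x ∈ X) {r : ℝ} (hr : 0 ≤ r) :
    0 < skWt w (skBl X x r) := skWt_pos hw ⟨x, mem_skBl.2 ⟨h, by simpa using hr⟩⟩

lemma skH_nonneg (hw : ∀ z, 0 < w z) (k n : ℕ) (Δ : ℝ) (X : Finset M) (y : M) :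
    0 ≤ skH w k n Δ X y :=
  Real.rpow_nonneg (Finset.prod_nonneg fun _ _ => skWt_nonneg hw _) _

lemma skH_mono (hw : ∀ z, 0 < w z) (k n : ℕ) {Δ Δ' : ℝ} (hΔ : Δ ≤ Δ')
    {X X' : Finset M} (h : X ⊆ X') (y : M) : skH w k n Δ X y ≤ skH w k n Δ' X' y := by
  unfold skH
  refine Real.rpow_le_rpow (Finset.prod_nonneg fun _ _ => skWt_nonneg hw _) ?_ (by positivity)
  refine Finset.prod_le_prod (fun _ _ => skWt_nonneg hw _) fun i _ => skWt_mono hw ?_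
  exact skBl_mono h (by gcongr)

lemma skH_pow (hw : ∀ z, 0 < w z) (k : ℕ) {n : ℕ} (hn : 0 < n) (Δ : ℝ) (X : Finset M) (y : M) :
    skH w k n Δ X y ^ n = ∏ i ∈ Finset.range k, skWt w (skBl X y ((1/5 + i * (3/25/n)) * Δ)) := by
  unfold skH
  rw [← Real.rpow_natCast, ← Real.rpow_mul (Finset.prod_nonneg fun _ _ => skWt_nonneg hw _)]
  rw [one_div_mul_cancel (by positivity), Real.rpow_one]

lemma le_skH (hw : ∀ z, 0 < w z) (k : ℕ) (n : ℕ) {Δ : ℝ} (hΔ : 0 ≤ Δ) (X : Finset M) (y : M) :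
    skWt w (skBl X y (Δ/5)) ^ ((k:ℝ)/n) ≤ skH w k n Δ X y := by
  unfold skH
  rw [show (k:ℝ)/n = k * (1/n) by ring, Real.rpow_mul (skWt_nonneg hw _), Real.rpow_natCast]
  refine Real.rpow_le_rpow (pow_nonneg (skWt_nonneg hw _) _) ?_ (by positivity)
  rw [← Finset.card_range k, ← Finset.prod_const, Finset.card_range]
  refine Finset.prod_le_prod (fun _ _ => skWt_nonneg hw _) fun i _ => skWt_mono hw ?_
  refine skBl_mono subset_rfl ?_
  have : 0 ≤ (i:ℝ) * (3/25/n) := by positivity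
  nlinarith

lemma sk_pigeon (hw : ∀ z, 0 < w z) (k : ℕ) {n : ℕ} (hn : 0 < n) {Δ : ℝ} (hΔ : 0 < Δ)
    {X : Finset M} {x : M} (hx : x ∈ X) : ∃ j < n,
      skWt w (skBl X x ((2/25 + (j + k : ℕ) * (3/25/n)) * Δ)) * skH w k n (2/5*Δ) X x ≤
      skWt w (skBl X x ((2/25 + j * (3/25/n)) * Δ)) * skH w k n Δ X x := by
  by_contra! hcon
  set f : ℕ → ℝ := fun j => skWt w (skBl X x ((2/25 + j * (3/25/n)) * Δ)) with hf
  have hfpos : ∀ j, 0 < f j := fun j => skWt_bl_pos hw hx (by positivity)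
  have hHpos : 0 < skH w k n Δ X x :=
    Real.rpow_pos_of_pos (Finset.prod_pos fun i _ => skWt_bl_pos hw hx (by positivity)) _
  have h1 : ∏ j ∈ Finset.range n, (f j * skH w k n Δ X x) <
      ∏ j ∈ Finset.range n, (f (j + k) * skH w k n (2/5*Δ) X x) := by
    refine Finset.prod_lt_prod_of_nonempty (fun j _ => mul_pos (hfpos j) hHpos) (fun j hj => ?_)
      ⟨0, by simpa using hn⟩
    exact hcon j (by simpa using hj)
  rw [Finset.prod_mul_distrib, Finset.prod_mul_distrib, Finset.prod_const, Finset.prod_const,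
    Finset.card_range, skH_pow hw k hn, skH_pow hw k hn] at h1
  have e1 : ∏ i ∈ Finset.range k, skWt w (skBl X x ((1/5 + i * (3/25/n)) * Δ))
      = ∏ i ∈ Finset.range k, f (n + i) := by
    refine Finset.prod_congr rfl fun i _ => ?_
    simp only [hf]
    congr 3
    push_cast
    field_simp
    ring
  have e2 : ∏ i ∈ Finset.range k, skWt w (skBl X x ((1/5 + i * (3/25/n)) * (2/5*Δ)))
      ≤ ∏ i ∈ Finset.range k, f i := by
    refine Finset.prod_le_prod (fun _ _ => skWt_nonneg hw _) fun i _ => skWt_mono hw ?_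
    refine skBl_mono subset_rfl ?_
    have : 0 ≤ (i:ℝ) * (3/25/n) := by positivity
    nlinarith
  have e3 := Finset.prod_range_add f n k
  have e4 := Finset.prod_range_add f k n
  rw [add_comm k n] at e4
  have e5 : ∏ j ∈ Finset.range n, f (j + k) = ∏ j ∈ Finset.range n, f (k + j) := by
    simp [add_comm]
  rw [e1, ← e3, e5, e4, mul_comm] at h1
  have := mul_le_mul_of_nonneg_left e2
    (Finset.prod_nonneg fun j (_ : j ∈ Finset.range n) => (hfpos (k+j)).le)
  linarith

lemma skOut_mono {D : ℝ} {B : M → ℝ → ℝ} {X X' : Finset M} {Δ Δ' m : ℝ} (hX : X ⊆ X')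
    (hΔ : Δ ≤ Δ') (h : skOut D B X Δ m) : skOut D B X' Δ' m := by
  obtain ⟨S, p, ρ, h1, h2, h3, h4, h5, h6, h7, h8⟩ := h
  exact ⟨S, p, ρ, h1.trans hX, h2, h3, h4, h5, h6,
    fun x hx y hy => ⟨(h7 x hx y hy).1, (h7 x hx y hy).2.1, (h7 x hx y hy).2.2.trans hΔ⟩, h8⟩

lemma skOut_zero {D : ℝ} {B : M → ℝ → ℝ} (hB : ∀ y r, 0 ≤ B y r) {X : Finset M} {Δ : ℝ} :
    skOut D B X Δ 0 :=
  ⟨∅, fun _ => 0, fun _ _ => 0, by simp, by simp, by simp, by simp, by simp, by simp, by simp,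
    fun y r _ => by simpa using hB y r⟩

lemma skOut_single {D : ℝ} {B : M → ℝ → ℝ} (hB : ∀ y r, 0 ≤ B y r) {X : Finset M} {Δ m : ℝ}
    (hΔ : 0 ≤ Δ) (hm : 0 ≤ m) {x : M} (hx : x ∈ X)
    (h : ∀ y r, 0 ≤ r → dist x y ≤ r → m ≤ B y r) :
    skOut D B X Δ m := by
  refine ⟨{x}, fun _ => m, fun _ _ => 0, by simpa using hx, fun _ => hm, by simp, by simp,
    by simp, by simp, by simpa using hΔ, fun y r hr => ?_⟩
  by_cases hxy : dist x y ≤ r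
  · have : skBl {x} y r = {x} := by
      ext z; simp only [mem_skBl, Finset.mem_singleton]
      constructor
      · exact fun h => h.1
      · rintro rfl; exact ⟨rfl, hxy⟩
    rw [this]; simpa using h y r hr hxy
  · have : skBl {x} y r = ∅ := by
      ext z; simp only [mem_skBl, Finset.mem_singleton, Finset.notMem_empty, iff_false]
      rintro ⟨rfl, h'⟩; exact hxy h'
    rw [this]; simpa using hB y r

open Classical in
lemma skOut_merge {D : ℝ} (hD : 0 < D) {B : M → ℝ → ℝ} {X C X' : Finset M}
    {Δ Δ1 m1 m2 : ℝ} (hΔ : 0 < Δ) (hC : C ⊆ X) (hX' : X' ⊆ X) (hΔ1 : Δ1 ≤ Δ)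
    (h1 : skOut D B C Δ1 m1) (h2 : skOut D B X' Δ m2)
    (hdiam : ∀ x ∈ X, ∀ y ∈ X, dist x y ≤ Δ)
    (hsep : ∀ x ∈ C, ∀ y ∈ X', Δ / D ≤ dist x y)
    (hball : ∀ y r, 0 ≤ r → Δ / D ≤ 2 * r → (∃ x ∈ X, dist x y ≤ r) → m1 + m2 ≤ B y r) :
    skOut D B X Δ (m1 + m2) := by
  obtain ⟨S, p, ρ, a1, a2, a3, a4, a5, a6, a7, a8⟩ := h1
  obtain ⟨T, q, σ, b1, b2, b3, b4, b5, b6, b7, b8⟩ := h2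
  have hdisj : ∀ x ∈ S, x ∉ T := fun x hx hx' => by
    have := hsep x (a1 hx) x (b1 hx')
    rw [dist_self] at this
    have : 0 < Δ / D := by positivity
    linarith
  have hdisj' : ∀ x ∈ T, x ∉ S := fun x hx hx' => hdisj x hx' hx
  have hsep1 : ∀ x ∈ S, ∀ y ∈ T, Δ ≤ D * dist x y := fun x hx y hy => by
    have := hsep x (a1 hx) y (b1 hy)
    rw [div_le_iff₀ hD] at this
    linarith
  set P : M → ℝ := fun z => if z ∈ S then p z else q z with hP
  set R : M → M → ℝ := fun x y => if x ∈ S then (if y ∈ S then ρ x y else Δ) else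
    (if y ∈ S then Δ else σ x y) with hR
  have hPs : ∀ A ⊆ S, ∑ z ∈ A, P z = ∑ z ∈ A, p z := fun A hA =>
    Finset.sum_congr rfl fun z hz => by simp [hP, hA hz]
  have hPt : ∀ A ⊆ T, ∑ z ∈ A, P z = ∑ z ∈ A, q z := fun A hA =>
    Finset.sum_congr rfl fun z hz => by simp [hP, hdisj' z (hA hz)]
  have hPst : ∑ z ∈ S ∪ T, P z = m1 + m2 := by
    rw [Finset.sum_union (Finset.disjoint_left.2 hdisj), hPs S subset_rfl, hPt T subset_rfl, a3, b3]
  have hPnn : ∀ z, 0 ≤ P z := fun z => by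
    simp only [hP]; split_ifs <;> [exact a2 z; exact b2 z]
  refine ⟨S ∪ T, P, R, Finset.union_subset (a1.trans hC) (b1.trans hX'), hPnn, hPst, ?_, ?_, ?_, ?_, ?_⟩
  · intro x hx
    rcases Finset.mem_union.1 hx with hx | hx
    · simp [hR, hx, a4 x hx]
    · simp [hR, hdisj' x hx, b4 x hx]
  · intro x hx y hy
    rcases Finset.mem_union.1 hx with hx | hx <;> rcases Finset.mem_union.1 hy with hy | hy
    · simp [hR, hx, hy, a5 x hx y hy]
    · simp [hR, hx, hdisj' y hy]
    · simp [hR, hdisj' x hx, hy]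
    · simp [hR, hdisj' x hx, hdisj' y hy, b5 x hx y hy]
  · intro x hx y hy z hz
    rcases Finset.mem_union.1 hx with hx | hx <;> rcases Finset.mem_union.1 hy with hy | hy <;>
      rcases Finset.mem_union.1 hz with hz | hz
    · simpa [hR, hx, hy, hz] using a6 x hx y hy z hz
    · simp [hR, hx, hy, hdisj' z hz]
    · simpa [hR, hx, hdisj' y hy, hz] using (a7 x hx z hz).2.2.trans hΔ1
    · simp [hR, hx, hdisj' y hy, hdisj' z hz]
    · simp [hR, hdisj' x hx, hy, hz]
    · simpa [hR, hdisj' x hx, hy, hdisj' z hz] using (b7 x hx z hz).2.2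
    · simp [hR, hdisj' x hx, hdisj' y hy, hz]
    · simpa [hR, hdisj' x hx, hdisj' y hy, hdisj' z hz] using b6 x hx y hy z hz
  · intro x hx y hy
    rcases Finset.mem_union.1 hx with hx | hx <;> rcases Finset.mem_union.1 hy with hy | hy
    · have := a7 x hx y hy
      simp only [hR, hx, hy, if_true]
      exact ⟨this.1, this.2.1, this.2.2.trans hΔ1⟩
    · simp only [hR, hx, hdisj' y hy, if_true, if_false]
      exact ⟨hdiam x (hC (a1 hx)) y (hX' (b1 hy)), hsep1 x hx y hy, le_rfl⟩
    · simp only [hR, hdisj' x hx, hy, if_true, if_false]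
      exact ⟨hdiam x (hX' (b1 hx)) y (hC (a1 hy)), dist_comm x y ▸ hsep1 y hy x hx, le_rfl⟩
    · simp only [hR, hdisj' x hx, hdisj' y hy, if_false]
      exact b7 x hx y hy
  · intro y r hr
    by_cases hs : ∃ s ∈ S, dist s y ≤ r
    · by_cases ht : ∃ t ∈ T, dist t y ≤ r
      · obtain ⟨s, hs, hsy⟩ := hs
        obtain ⟨t, ht, hty⟩ := ht
        have h := hball y r hr ?_ ⟨s, hC (a1 hs), hsy⟩
        · rw [← hPst] at h
          exact (Finset.sum_le_sum_of_subset_of_nonneg (skBl_sub _ _ _) fun z _ _ => hPnn z).trans h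
        · have := hsep s (a1 hs) t (b1 ht)
          have := dist_triangle_right s t y
          linarith
      · have : skBl (S ∪ T) y r = skBl S y r := by
          ext z; simp only [mem_skBl, Finset.mem_union]
          push Not at ht
          constructor
          · rintro ⟨h | h, h'⟩
            · exact ⟨h, h'⟩
            · exact absurd h' (not_le.2 (ht z h))
          · rintro ⟨h, h'⟩; exact ⟨Or.inl h, h'⟩
        rw [this, hPs _ (skBl_sub _ _ _)]
        exact a8 y r hr
    · have : skBl (S ∪ T) y r = skBl T y r := by
        ext z; simp only [mem_skBl, Finset.mem_union]
        push Not at hs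
        constructor
        · rintro ⟨h | h, h'⟩
          · exact absurd h' (not_le.2 (hs z h))
          · exact ⟨h, h'⟩
        · rintro ⟨h, h'⟩; exact ⟨Or.inr h, h'⟩
      rw [this, hPt _ (skBl_sub _ _ _)]
      exact b8 y r hr

end basic

section carve
variable {M : Type u} [MetricSpace M] {w : M → ℝ}

open Classical in
lemma sk_carve (hw : ∀ z, 0 < w z) {k n : ℕ} (hn : 0 < n) {D : ℝ} (hD : 0 < D)
    (hkD : 1 / D ≤ 3/25 * ((k:ℝ)/n))
    {B : M → ℝ → ℝ} (hB : ∀ y r, 0 ≤ B y r) {b : ℝ} (hb : 0 ≤ b) {Δ : ℝ} (hΔ : 0 < Δ)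
    {t' H Q W U : ℝ} (hQ : 0 ≤ Q) (hQW : Q * W ≤ t') (hQH : Q * H * U ^ b ≤ 1) :
    ∀ X : Finset M,
      (∀ C' ⊆ X, C'.Nonempty → (∀ x ∈ C', ∀ y ∈ C', dist x y ≤ 2/5*Δ) → ∀ m' H', 0 ≤ m' →
        m' ≤ t' → (∀ y ∈ C', skH w k n (2/5*Δ) C' y ≤ H') →
        m' * H' ≤ skWt w C' ^ (1 - b) → skOut D B C' (2/5*Δ) m') →
      (∀ x ∈ X, ∀ y ∈ X, dist x y ≤ Δ) →
      (∀ y ∈ X, skH w k n Δ X y ≤ H) →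
      (∀ y ∈ X, skWt w (skBl X y ((1/5 + 3/25*((k:ℝ)/n)) * Δ)) ≤ W) →
      (∀ y ∈ X, skWt w (skBl X y (Δ/5)) ≤ U) →
      ∀ m, 0 ≤ m → m ≤ Q * skWt w X →
      (∀ y r, 0 ≤ r → Δ / D ≤ 2 * r → (∃ x ∈ X, dist x y ≤ r) → m ≤ B y r) →
      skOut D B X Δ m := by
  intro X
  induction X using Finset.strongInduction with
  | H X ih =>
  intro hchild hdiam hH hW hU m hm hmQ hball
  rcases X.eq_empty_or_nonempty with rfl | hne
  · have : m = 0 := by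
      simp [skWt] at hmQ; linarith
    rw [this]; exact skOut_zero hB
  obtain ⟨x, hx, hmax⟩ := Finset.exists_max_image X (fun y => skH w k n (2/5*Δ) X y) hne
  obtain ⟨j, hj, hpig⟩ := sk_pigeon hw k hn hΔ hx
  have hn' : (0:ℝ) < n := by exact_mod_cast hn
  have hjn : (j:ℝ) * (3/25/n) ≤ 3/25 := by
    have : (j:ℝ) ≤ n := by exact_mod_cast hj.le
    rw [← mul_div_assoc, div_le_iff₀ hn']; nlinarith
  have hj0 : 0 ≤ (j:ℝ) * (3/25/n) := by positivity
  have hkn : (k:ℝ) * (3/25/n) = 3/25 * ((k:ℝ)/n) := by ring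
  have hkn0 : 0 ≤ (k:ℝ)/n := by positivity
  set r1 := (2/25 + j * (3/25/n)) * Δ with hr1
  set r2 := (2/25 + (j + k : ℕ) * (3/25/n)) * Δ with hr2
  have hr12 : r2 = r1 + 3/25 * ((k:ℝ)/n) * Δ := by
    rw [hr1, hr2, ← hkn]; push_cast; ring
  have hr1' : r1 ≤ Δ / 5 := by rw [hr1]; nlinarith
  have hr10 : 0 ≤ r1 := by positivity
  have hr20 : 0 ≤ r2 := by positivity
  have hr2' : r2 ≤ (1/5 + 3/25*((k:ℝ)/n)) * Δ := by rw [hr12]; nlinarith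
  set C := skBl X x r1 with hC
  set A := skBl X x r2 with hA
  set h' := skH w k n (2/5*Δ) X x with hh'
  have hxC : x ∈ C := mem_skBl.2 ⟨hx, by simpa using hr10⟩
  have hxA : x ∈ A := mem_skBl.2 ⟨hx, by simpa using hr20⟩
  have hCX : C ⊆ X := skBl_sub _ _ _
  have hAX : A ⊆ X := skBl_sub _ _ _
  have hωW : skWt w A ≤ W := (skWt_mono hw (skBl_mono subset_rfl hr2')).trans (hW x hx)
  have hCU : skWt w C ≤ U := (skWt_mono hw (skBl_mono subset_rfl hr1')).trans (hU x hx)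
  have hCpos : 0 < skWt w C := skWt_pos hw ⟨x, hxC⟩
  have hω0 : 0 ≤ skWt w A := skWt_nonneg hw _
  have hh0 : 0 ≤ h' := skH_nonneg hw _ _ _ _ _
  have hm1 : 0 ≤ min m (Q * skWt w A) := le_min hm (by positivity)
  have hm12 : m = min m (Q * skWt w A) + (m - min m (Q * skWt w A)) := by ring
  rw [hm12]
  have hX'X : X \ A ⊂ X := Finset.sdiff_ssubset hAX ⟨x, hxA⟩
  have hsum : skWt w (X \ A) + skWt w A = skWt w X := Finset.sum_sdiff hAX
  refine skOut_merge (Δ1 := 2/5*Δ) hD hΔ hCX hX'X.1 (by linarith) ?_ ?_ hdiam ?_ ?_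
  · refine hchild C hCX ⟨x, hxC⟩ ?_ _ h' hm1 ?_ ?_ ?_
    · intro a ha c hc
      have := dist_triangle_right a c x
      have := (mem_skBl.1 ha).2
      have := (mem_skBl.1 hc).2
      linarith
    · exact (min_le_right _ _).trans ((mul_le_mul_of_nonneg_left hωW hQ).trans hQW)
    · intro y hy
      exact (skH_mono hw k n le_rfl hCX y).trans (hmax y (hCX hy))
    · have e : skWt w C = skWt w C ^ b * skWt w C ^ (1 - b) := by
        rw [← Real.rpow_add hCpos]; simp
      have hUb : skWt w C ^ b ≤ U ^ b := Real.rpow_le_rpow hCpos.le hCU hb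
      have hHH := hH x hx
      have hH0 : 0 ≤ H := (skH_nonneg hw _ _ _ _ _).trans hHH
      calc min m (Q * skWt w A) * h' ≤ Q * skWt w A * h' :=
            mul_le_mul_of_nonneg_right (min_le_right _ _) hh0
        _ = Q * (skWt w A * h') := by ring
        _ ≤ Q * (skWt w C * skH w k n Δ X x) := mul_le_mul_of_nonneg_left hpig hQ
        _ ≤ Q * (skWt w C * H) := by gcongr
        _ = Q * H * skWt w C ^ b * skWt w C ^ (1 - b) := by
            conv_lhs => rw [e]
            ring
        _ ≤ Q * H * U ^ b * skWt w C ^ (1 - b) := by gcongr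
        _ ≤ 1 * skWt w C ^ (1 - b) := by gcongr
        _ = _ := one_mul _
  · have hb1 : min m (Q * skWt w A) ≤ m := min_le_left _ _
    refine ih _ hX'X (fun C' hC' => hchild C' (hC'.trans hX'X.1))
      (fun a ha c hc => hdiam a (hX'X.1 ha) c (hX'X.1 hc))
      (fun y hy => (skH_mono hw k n le_rfl hX'X.1 y).trans (hH y (hX'X.1 hy)))
      (fun y hy => (skWt_mono hw (skBl_mono hX'X.1 le_rfl)).trans (hW y (hX'X.1 hy)))
      (fun y hy => (skWt_mono hw (skBl_mono hX'X.1 le_rfl)).trans (hU y (hX'X.1 hy)))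
      _ (by linarith) ?_ ?_
    · have h0 : 0 ≤ Q * skWt w (X \ A) := mul_nonneg hQ (skWt_nonneg hw _)
      have : Q * skWt w (X \ A) + Q * skWt w A = Q * skWt w X := by rw [← hsum]; ring
      rcases min_cases m (Q * skWt w A) with ⟨h, _⟩ | ⟨h, _⟩ <;> rw [h] <;> linarith
    · rintro y r hr h2 ⟨z, hz, hzy⟩
      have := hball y r hr h2 ⟨z, hX'X.1 hz, hzy⟩
      linarith
  · intro a ha c hc
    have h1 := (mem_skBl.1 ha).2
    rw [Finset.mem_sdiff, hA, mem_skBl] at hc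
    have h2 : r2 < dist c x := by
      by_contra! h; exact hc.2 ⟨hc.1, h⟩
    have h3 := dist_triangle_left c x a
    have h4 : Δ / D ≤ 3/25 * ((k:ℝ)/n) * Δ := by
      rw [div_eq_mul_one_div, mul_comm]; gcongr
    linarith
  · rw [← hm12]; exact hball
end carve

section node
variable {M : Type u} [MetricSpace M] {w : M → ℝ}

set_option maxHeartbeats 2000000 in
lemma sk_node (hw : ∀ z, 0 < w z) {k n : ℕ} (hn : 0 < n) {ε : ℝ} (hε0 : 0 < ε) (hε1 : ε < 1)
    (hlo : 25/27 * ε ≤ (k:ℝ)/n) (hhi : (k:ℝ)/n ≤ 15/16 * ε)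
    {b K1 κ c e : ℝ} (hbdef : b = ε/32) (hK1 : K1 = (ε - b) / ((k:ℝ)/n)) (hκ : κ = (K1 - 1) * b)
    {J : ℕ} (hJ : 1 - ε ≤ κ * J) (hc : c = 1 + 4 * (9/ε) * 4^J) (he : 0 < e)
    {X0 : Finset M} (hX0 : skWt w X0 = 1) {B : M → ℝ → ℝ}
    (hBdef : ∀ y r, B y r = skWt w (skBl X0 y (c * (r + e))) ^ (1 - ε)) :
    ∀ (d : ℕ) (C : Finset M), C ⊆ X0 → C.Nonempty → ∀ Δ : ℝ, 0 < Δ →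
      (∀ x ∈ C, ∀ y ∈ C, dist x y ≤ Δ) → Δ ≤ e * (5/2)^d → ∀ m t H : ℝ, 0 ≤ m → m ≤ t →
      (∀ y ∈ C, skH w k n Δ C y ≤ H) → m * H ≤ skWt w C ^ (1 - b) →
      (∀ (j : ℕ), ∀ z ∈ C, t ≤ skWt w (skBl X0 z (4^j * Δ)) ^ (min (κ * j) (1 - ε))) →
      skOut (9/ε) B C Δ m := by
  have hkn : 0 < (k:ℝ)/n := by nlinarith
  have hb0 : 0 < b := by rw [hbdef]; positivity
  have hb1 : b ≤ 1/32 := by rw [hbdef]; linarith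
  have hK1' : 31/30 ≤ K1 := by
    rw [hK1, le_div_iff₀ hkn, hbdef]; linarith
  have hκ0 : 0 < κ := by rw [hκ]; exact mul_pos (by linarith) hb0
  have hκK : κ ≤ K1 - (1 + κ) := by rw [hκ]; nlinarith
  have hD : 0 < 9/ε := by positivity
  have hD9 : 9 ≤ 9/ε := by rw [le_div_iff₀ hε0]; linarith
  have hkD : 1 / (9/ε) ≤ 3/25 * ((k:ℝ)/n) := by
    rw [one_div_div]; linarith
  have h4J : (1:ℝ) ≤ 4^J := one_le_pow₀ (by norm_num)
  have hB : ∀ y r, 0 ≤ B y r := fun y r => by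
    rw [hBdef]; exact Real.rpow_nonneg (skWt_nonneg hw _) _
  have hle1 : ∀ A ⊆ X0, skWt w A ≤ 1 := fun A hA => hX0 ▸ skWt_mono hw hA
  have hc1 : 1 ≤ c := by rw [hc]; nlinarith
  -- general ball bound
  have gen : ∀ (C : Finset M) (Δ t : ℝ), C ⊆ X0 →
      (∀ (j : ℕ), ∀ z ∈ C, t ≤ skWt w (skBl X0 z (4^j * Δ)) ^ (min (κ * j) (1 - ε))) →
      ∀ y r, (∃ z ∈ C, dist z y ≤ r) → 4^J * Δ + r ≤ c * (r + e) → t ≤ B y r := by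
    rintro C Δ t hC hinv y r ⟨z, hz, hzy⟩ hr
    have h := hinv J z hz
    rw [min_eq_right hJ] at h
    rw [hBdef]
    refine h.trans (Real.rpow_le_rpow (skWt_nonneg hw _) (skWt_mono hw ?_) (by linarith))
    intro a ha
    rw [mem_skBl] at ha ⊢
    exact ⟨ha.1, (dist_triangle a z y).trans (by linarith)⟩
  intro d
  induction d with
  | zero =>
    intro C hC hne Δ hΔ hdiam hΔe m t H hm hmt hH hmH hinv
    obtain ⟨x, hx⟩ := hne
    refine skOut_single hB hΔ.le hm hx fun y r hr hxy => hmt.trans ?_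
    refine gen C Δ t hC hinv y r ⟨x, hx, hxy⟩ ?_
    rw [pow_zero, mul_one] at hΔe
    have h1 : (4:ℝ)^J * Δ ≤ 4^J * e := by gcongr
    have h2 : (4:ℝ)^J ≤ c := by rw [hc]; nlinarith
    nlinarith
  | succ d ih =>
    intro C hC hne Δ hΔ hdiam hΔe m t H hm hmt hH hmH hinv
    set v := skWt w C with hv
    have hv0 : 0 < v := skWt_pos hw hne
    have hv1 : v ≤ 1 := hle1 C hC
    have hH0 : 0 ≤ H := by
      obtain ⟨x, hx⟩ := hne
      exact (skH_nonneg hw _ _ _ _ _).trans (hH x hx)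
    have ht1 : t ≤ 1 := by
      obtain ⟨x, hx⟩ := hne
      have := hinv 0 x hx
      rwa [Nat.cast_zero, mul_zero, min_eq_left (by linarith), Real.rpow_zero] at this
    have ht0 : 0 ≤ t := hm.trans hmt
    -- invariant for children
    have child : ∀ (Δc t' : ℝ), Δ ≤ 4 * Δc → t' ≤ 1 → (t' ≤ v ^ (1 - ε) ∨ t' ≤ t * v ^ κ) →
        ∀ C' ⊆ C, ∀ (j : ℕ), ∀ z ∈ C',
          t' ≤ skWt w (skBl X0 z (4^j * Δc)) ^ (min (κ * j) (1 - ε)) := by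
      intro Δc t' hΔc ht'1 ht' C' hC' j z hz
      rcases j with _ | j
      · rwa [Nat.cast_zero, mul_zero, min_eq_left (by linarith), Real.rpow_zero]
      have hzC := hC' hz
      set a := skWt w (skBl X0 z (4^j * Δ)) with ha
      have h4j : (1:ℝ) ≤ 4^j := one_le_pow₀ (by norm_num)
      have hva : v ≤ a := by
        refine skWt_mono hw fun y hy => mem_skBl.2 ⟨hC hy, (hdiam y hy z hzC).trans ?_⟩
        nlinarith
      have ha0 : 0 < a := hv0.trans_le hva
      have ha1 : a ≤ 1 := hle1 _ (skBl_sub _ _ _)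
      have haa : a ≤ skWt w (skBl X0 z (4^(j+1) * Δc)) := by
        refine skWt_mono hw (skBl_mono subset_rfl ?_)
        rw [pow_succ, mul_assoc]; gcongr
      have hexp0 : 0 ≤ min (κ * ((j+1 : ℕ):ℝ)) (1 - ε) := le_min (by positivity) (by linarith)
      refine le_trans ?_ (Real.rpow_le_rpow ha0.le haa hexp0)
      rcases ht' with ht' | ht'
      · calc t' ≤ v ^ (1 - ε) := ht'
          _ ≤ a ^ (1 - ε) := Real.rpow_le_rpow hv0.le hva (by linarith)
          _ ≤ _ := Real.rpow_le_rpow_of_exponent_ge ha0 ha1 (min_le_right _ _)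
      · calc t' ≤ t * v ^ κ := ht'
          _ ≤ a ^ (min (κ * j) (1 - ε)) * a ^ κ := by
              refine mul_le_mul (hinv j z hzC) (Real.rpow_le_rpow hv0.le hva hκ0.le)
                (Real.rpow_nonneg hv0.le _) (Real.rpow_nonneg ha0.le _)
          _ = a ^ (min (κ * j) (1 - ε) + κ) := by rw [Real.rpow_add ha0]
          _ ≤ _ := by
              refine Real.rpow_le_rpow_of_exponent_ge ha0 ha1 ?_
              rw [min_add]
              refine le_min ((min_le_left _ _).trans ?_) ((min_le_right _ _).trans ?_)
              · push_cast; linarith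
              · linarith
    have hvb : v ^ (1 - b) = v * (v ^ b)⁻¹ := by
      rw [Real.rpow_sub hv0, Real.rpow_one, div_eq_mul_inv]
    have hvb0 : 0 < v ^ b := Real.rpow_pos_of_pos hv0 _
    have hQHv : m / v * H * v ^ b ≤ 1 := by
      rw [hvb] at hmH
      have : m / v * H * v ^ b = (m * H) * v ^ b / v := by ring
      rw [this, div_le_one hv0]
      calc m * H * v ^ b ≤ v * (v ^ b)⁻¹ * v ^ b := by gcongr
        _ = v := by field_simp
    have ballC : ∀ (Δ2 : ℝ), 5/8 * Δ ≤ Δ2 → ∀ C' ⊆ C,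
        (∀ y r, 0 ≤ r → Δ2 / (9/ε) ≤ 2 * r → (∃ x ∈ C', dist x y ≤ r) → m ≤ B y r) := by
      rintro Δ2 hΔ2 C' hC' y r hr h2 ⟨x, hx, hxy⟩
      refine hmt.trans (gen C Δ t hC hinv y r ⟨x, hC' hx, hxy⟩ ?_)
      rw [div_le_iff₀ hD] at h2
      have hr9 : 0 ≤ r * (9/ε) := by positivity
      have h3 : Δ ≤ 4 * (9/ε) * r := by nlinarith
      have h4 : (4:ℝ)^J * Δ ≤ 4^J * (4 * (9/ε) * r) := by gcongr
      have h5 : c * r = r + 4^J * (4 * (9/ε) * r) := by rw [hc]; ring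
      have h6 : 0 ≤ c * e := mul_nonneg (by linarith) he.le
      rw [mul_add]
      linarith
    have hsub : ∀ y r, skWt w (skBl C y r) ≤ v := fun y r => skWt_mono hw (skBl_sub _ _ _)
    have hΔd : 2/5 * Δ ≤ e * (5/2)^d := by
      rw [pow_succ] at hΔe; linarith
    by_cases hgood : m ≤ v ^ (1 - ε)
    · -- good case
      refine sk_carve hw hn hD hkD hB hb0.le hΔ (t' := m) (H := H) (Q := m / v) (W := v) (U := v)
        (by positivity) (by rw [div_mul_cancel₀ _ hv0.ne']) hQHv C ?_ hdiam hH
        (fun y _ => hsub y _) (fun y _ => hsub y _) m hm (by rw [div_mul_cancel₀ _ hv0.ne'])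
        (ballC Δ (by linarith) C subset_rfl)
      intro C' hC' hne' hdiam' m' H' hm' hmt' hH' hmH'
      exact ih C' (hC'.trans hC) hne' _ (by positivity) hdiam' hΔd m' m H' hm' hmt' hH' hmH'
        (child _ _ (by linarith) (hmt.trans ht1) (Or.inl hgood) C' hC')
    push Not at hgood
    have hm0 : 0 < m := (Real.rpow_pos_of_pos hv0 _).trans hgood
    have htκ1 : t * v ^ κ ≤ 1 := by
      have : v ^ κ ≤ 1 := Real.rpow_le_one hv0.le hv1 hκ0.le
      have : 0 ≤ v ^ κ := Real.rpow_nonneg hv0.le _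
      nlinarith
    have hvK : v ^ (1 + κ) = v * v ^ κ := by rw [Real.rpow_add hv0, Real.rpow_one]
    have hvκ0 : 0 < v ^ κ := Real.rpow_pos_of_pos hv0 _
    by_cases hB1 : ∀ y ∈ C, skWt w (skBl C y ((1/5 + 3/25*((k:ℝ)/n)) * Δ)) ≤ v ^ (1 + κ)
    · refine sk_carve hw hn hD hkD hB hb0.le hΔ (t' := t * v ^ κ) (H := H) (Q := m / v)
        (W := v ^ (1 + κ)) (U := v)
        (by positivity) ?_ hQHv C ?_ hdiam hH
        hB1 (fun y _ => hsub y _) m hm (by rw [div_mul_cancel₀ _ hv0.ne'])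
        (ballC Δ (by linarith) C subset_rfl)
      · rw [hvK, ← mul_assoc, div_mul_cancel₀ _ hv0.ne']; gcongr
      intro C' hC' hne' hdiam' m' H' hm' hmt' hH' hmH'
      exact ih C' (hC'.trans hC) hne' _ (by positivity) hdiam' hΔd m' _ H' hm' hmt' hH' hmH'
        (child _ _ (by linarith) htκ1 (Or.inr le_rfl) C' hC')
    push Not at hB1
    obtain ⟨y, hy, hyK⟩ := hB1
    -- small balls
    have hHv : H ≤ v ^ (ε - b) := by
      have h1 : v ^ (1 - ε) * H ≤ v ^ (1 - b) := (by gcongr : _ ≤ m * H).trans hmH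
      have h2 : v ^ (1 - b) = v ^ (1 - ε) * v ^ (ε - b) := by
        rw [← Real.rpow_add hv0]; congr 1; ring
      rw [h2] at h1
      exact le_of_mul_le_mul_left h1 (Real.rpow_pos_of_pos hv0 _)
    have hsmall : ∀ z ∈ C, skWt w (skBl C z (Δ/5)) ≤ v ^ K1 := by
      intro z hz
      have h1 := ((le_skH hw k n hΔ.le C z).trans (hH z hz)).trans hHv
      have h2 := Real.rpow_le_rpow (Real.rpow_nonneg (skWt_nonneg hw _) _) h1
        (inv_nonneg.2 hkn.le)
      rwa [Real.rpow_rpow_inv (skWt_nonneg hw _) hkn.ne', ← Real.rpow_mul hv0.le,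
        ← div_eq_mul_inv, ← hK1] at h2
    set C' := skBl C y (5/16 * Δ) with hC'
    have hC'C : C' ⊆ C := skBl_sub _ _ _
    have hτ : 1/5 + 3/25*((k:ℝ)/n) ≤ 5/16 := by linarith
    have hv' : v ^ (1 + κ) ≤ skWt w C' :=
      hyK.le.trans (skWt_mono hw (skBl_mono subset_rfl (by gcongr)))
    have hvK0 : 0 < v ^ (1 + κ) := Real.rpow_pos_of_pos hv0 _
    have hv'0 : 0 < skWt w C' := hvK0.trans_le hv'
    have hvK10 : 0 < v ^ K1 := Real.rpow_pos_of_pos hv0 _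
    refine skOut_mono (X := C') (Δ := 5/8 * Δ) hC'C (by linarith) ?_
    refine sk_carve hw hn hD hkD hB hb0.le (by positivity) (t' := t * v ^ κ) (H := H)
        (Q := m / skWt w C') (W := v ^ K1) (U := v ^ K1)
        (by positivity) ?_ ?_ C' ?_ ?_ ?_
        ?_ ?_ m hm (by rw [div_mul_cancel₀ _ hv'0.ne'])
        (ballC _ le_rfl C' hC'C)
    · calc m / skWt w C' * v ^ K1 ≤ t / v ^ (1 + κ) * v ^ K1 := by gcongr
        _ = t * v ^ (K1 - (1 + κ)) := by rw [Real.rpow_sub hv0]; ring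
        _ ≤ t * v ^ κ := by
          refine mul_le_mul_of_nonneg_left ?_ ht0
          exact Real.rpow_le_rpow_of_exponent_ge hv0 hv1 hκK
    · calc m / skWt w C' * H * (v ^ K1) ^ b = m * H * (v ^ K1) ^ b / skWt w C' := by ring
        _ ≤ v ^ (1 - b) * (v ^ K1) ^ b / v ^ (1 + κ) := by gcongr
        _ = v ^ (1 - b + K1 * b - (1 + κ)) := by
          rw [Real.rpow_sub hv0 _ (1+κ), Real.rpow_add hv0 (1-b) (K1*b), Real.rpow_mul hv0.le]
        _ = 1 := by rw [hκ, show 1 - b + K1 * b - (1 + (K1 - 1) * b) = 0 by ring, Real.rpow_zero]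
        _ ≤ 1 := le_rfl
    · intro C2 hC2 hne' hdiam' m' H' hm' hmt' hH' hmH'
      exact ih C2 (hC2.trans (hC'C.trans hC)) hne' _ (by positivity) hdiam' (by linarith) m' _ H'
        hm' hmt' hH' hmH' (child _ _ (by linarith) htκ1 (Or.inr le_rfl) C2 (hC2.trans hC'C))
    · intro a ha a' ha'
      have := dist_triangle_right a a' y
      have := (mem_skBl.1 ha).2
      have := (mem_skBl.1 ha').2
      linarith
    · intro z hz
      exact (skH_mono hw k n (by linarith) hC'C z).trans (hH z (hC'C hz))
    · intro z hz
      refine le_trans (skWt_mono hw (skBl_mono hC'C ?_)) (hsmall z (hC'C hz))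
      calc _ ≤ 5/16 * (5/8*Δ) := by gcongr
        _ ≤ Δ/5 := by linarith
    · intro z hz
      exact le_trans (skWt_mono hw (skBl_mono hC'C (by linarith))) (hsmall z (hC'C hz))

end node

lemma sk_finite (ε : ℝ) (hε0 : 0 < ε) (hε1 : ε < 1) : ∃ c : ℝ, 1 ≤ c ∧
    ∀ (M : Type u) [MetricSpace M] (w : M → ℝ), (∀ z, 0 < w z) → ∀ X0 : Finset M,
      skWt w X0 = 1 → ∀ e : ℝ, 0 < e → ∃ Δ : ℝ,
      skOut (9/ε) (fun y r => skWt w (skBl X0 y (c * (r + e))) ^ (1 - ε)) X0 Δ 1 := by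
  obtain ⟨q, hq1, hq2⟩ := exists_rat_btwn (show 25/27*ε < 15/16*ε by linarith)
  have hq0 : 0 < q := by
    have : (0:ℝ) < q := by linarith
    exact_mod_cast this
  obtain ⟨k, n, hn, hkn⟩ : ∃ k n : ℕ, 0 < n ∧ (k:ℝ)/n = q := by
    refine ⟨q.num.toNat, q.den, q.den_pos, ?_⟩
    have h1 : ((q.num.toNat : ℤ)) = q.num := Int.toNat_of_nonneg (Rat.num_nonneg.2 hq0.le)
    have h2 : ((q.num.toNat : ℕ) : ℝ) = (q.num : ℝ) := by exact_mod_cast h1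
    rw [h2]
    exact (Rat.cast_def q).symm
  rw [← hkn] at hq1 hq2
  have hkn0 : 0 < (k:ℝ)/n := by linarith
  set b := ε/32 with hb
  set K1 := (ε - b) / ((k:ℝ)/n) with hK1
  set κ := (K1 - 1) * b with hκ
  have hκ0 : 0 < κ := by
    have : 1 < K1 := by rw [hK1, lt_div_iff₀ hkn0, hb]; linarith
    exact mul_pos (by linarith) (by positivity)
  obtain ⟨J, hJ⟩ := exists_nat_ge ((1 - ε)/κ)
  rw [div_le_iff₀ hκ0, mul_comm] at hJ
  refine ⟨1 + 4 * (9/ε) * 4^J, by linarith [show 0 < 4 * (9/ε) * 4^J by positivity], ?_⟩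
  intro M _ w hw X0 hX0 e he
  have hne : X0.Nonempty := by
    rcases X0.eq_empty_or_nonempty with rfl | h
    · simp [skWt] at hX0
    · exact h
  set Δ := diam (X0 : Set M) + 1 with hΔ
  have hΔ0 : 0 < Δ := by have := diam_nonneg (s := (X0 : Set M)); linarith
  obtain ⟨d, hd⟩ := pow_unbounded_of_one_lt (Δ/e) (show (1:ℝ) < 5/2 by norm_num)
  rw [div_lt_iff₀ he, mul_comm] at hd
  refine ⟨Δ, sk_node hw hn hε0 hε1 hq1.le hq2.le hb hK1 hκ hJ rfl he hX0 (fun _ _ => rfl) d X0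
    subset_rfl hne Δ hΔ0 ?_ hd.le 1 1 1 zero_le_one le_rfl ?_ ?_ ?_⟩
  · intro x hx y hy
    have := dist_le_diam_of_mem X0.finite_toSet.isBounded hx hy
    linarith
  · intro y _
    refine Real.rpow_le_one (Finset.prod_nonneg fun _ _ => skWt_nonneg hw _) ?_ (by positivity)
    exact Finset.prod_le_one (fun _ _ => skWt_nonneg hw _)
      fun i _ => hX0 ▸ skWt_mono hw (skBl_sub _ _ _)
  · rw [hX0]; simp
  · intro j z hz
    have : skBl X0 z (4^j * Δ) = X0 := by
      refine Finset.Subset.antisymm (skBl_sub _ _ _) fun y hy => mem_skBl.2 ⟨hy, ?_⟩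
      have h1 := dist_le_diam_of_mem X0.finite_toSet.isBounded hy hz
      have h4j : (1:ℝ) ≤ 4^j := one_le_pow₀ (by norm_num)
      nlinarith
    rw [this, hX0]; simp

open Classical in
lemma sk_disc {M : Type u} [MetricSpace M] [CompactSpace M] [MeasurableSpace M] [BorelSpace M]
    (μ : Measure M) [IsProbabilityMeasure μ] (e : ℝ) (he : 0 < e) :
    ∃ w : M → ℝ, (∀ z, 0 < w z) ∧ ∃ X0 : Finset M, skWt w X0 = 1 ∧
      ∀ y s, skWt w (skBl X0 y s) ≤ μ.real (closedBall y (s + e)) := by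
  have : Nonempty M := μ.nonempty_of_neZero
  obtain ⟨N, hN⟩ : ∃ N : ℕ, ∀ x : M, ∃ j ≤ N, dist (TopologicalSpace.denseSeq M j) x < e := by
    obtain ⟨t, ht⟩ := isCompact_univ.elim_finite_subcover
      (fun j : ℕ => ball (TopologicalSpace.denseSeq M j) e) (fun _ => isOpen_ball) (by
        intro x _
        obtain ⟨j, hj⟩ := (TopologicalSpace.denseRange_denseSeq M).exists_dist_lt x he
        exact Set.mem_iUnion.2 ⟨j, hj⟩)
    refine ⟨t.sup id, fun x => ?_⟩
    obtain ⟨j, hj, hx⟩ := Set.mem_iUnion₂.1 (ht (Set.mem_univ x))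
    exact ⟨j, Finset.le_sup (f := id) hj, by rw [dist_comm]; exact hx⟩
  set f := SimpleFunc.nearestPt (TopologicalSpace.denseSeq M) N with hf
  have hfd : ∀ x, dist (f x) x < e := by
    intro x
    obtain ⟨j, hj, hx⟩ := hN x
    refine lt_of_le_of_lt ?_ hx
    have := SimpleFunc.edist_nearestPt_le (TopologicalSpace.denseSeq M) x hj
    rwa [edist_dist, edist_dist, ENNReal.ofReal_le_ofReal_iff dist_nonneg] at this
  set g : M → ℝ := fun z => μ.real (f ⁻¹' {z}) with hg
  set X0 := f.range.filter (fun z => g z ≠ 0) with hX0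
  have hsum : ∀ A : Finset M, ∑ z ∈ A, g z = μ.real (f ⁻¹' A) := fun A =>
    sum_measureReal_preimage_singleton A (fun z _ => f.measurableSet_fiber z)
  refine ⟨fun z => if z ∈ X0 then g z else 1, ?_, X0, ?_, ?_⟩
  · intro z
    dsimp only
    split_ifs with h
    · exact lt_of_le_of_ne measureReal_nonneg (Ne.symm (Finset.mem_filter.1 h).2)
    · exact one_pos
  · have h1 : ∑ z ∈ X0, (if z ∈ X0 then g z else 1) = ∑ z ∈ X0, g z :=
      Finset.sum_congr rfl fun z hz => by simp [hz]
    unfold skWt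
    rw [h1, hX0, Finset.sum_filter_ne_zero, hsum]
    simp
  · intro y s
    have h1 : ∑ z ∈ skBl X0 y s, (if z ∈ X0 then g z else 1) = ∑ z ∈ skBl X0 y s, g z :=
      Finset.sum_congr rfl fun z hz => by simp [skBl_sub _ _ _ hz]
    unfold skWt
    rw [h1, hsum]
    refine measureReal_mono ?_
    intro x hx
    have h2 := (mem_skBl.1 (Finset.mem_coe.1 (Set.mem_preimage.1 hx))).2
    have := hfd x
    rw [mem_closedBall]
    have := dist_triangle_left x y (f x)
    linarith

lemma sk_level (ε : ℝ) (hε0 : 0 < ε) (hε1 : ε < 1) : ∃ c : ℝ, 1 ≤ c ∧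
    ∀ (M : Type u) [MetricSpace M] [CompactSpace M] [MeasurableSpace M] [BorelSpace M]
    (μ : Measure M) [IsProbabilityMeasure μ] (e : ℝ) (_ : 0 < e),
    ∃ (S : Finset M) (p : M → ℝ) (ρ : M → M → ℝ), (∀ z, 0 ≤ p z) ∧ ∑ z ∈ S, p z = 1 ∧
    (∀ x ∈ S, ∀ y ∈ S, ρ x y = ρ y x) ∧
    (∀ x ∈ S, ∀ y ∈ S, ∀ z ∈ S, ρ x z ≤ max (ρ x y) (ρ y z)) ∧
    (∀ x ∈ S, ∀ y ∈ S, dist x y ≤ ρ x y ∧ ρ x y ≤ (9/ε) * dist x y) ∧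
    ∀ y r, 0 ≤ r → ∑ z ∈ skBl S y r, p z ≤ μ.real (closedBall y (c * (r + e) + e)) ^ (1 - ε) := by
  obtain ⟨c, hc, h⟩ := sk_finite ε hε0 hε1
  refine ⟨c, hc, fun M _ _ _ _ μ _ e he => ?_⟩
  obtain ⟨w, hw, X0, hX0, hball⟩ := sk_disc μ e he
  obtain ⟨Δ, S, p, ρ, -, h2, h3, -, h5, h6, h7, h8⟩ := h M w hw X0 hX0 e he
  refine ⟨S, p, ρ, h2, h3, h5, h6, fun x hx y hy => ⟨(h7 x hx y hy).1, (h7 x hx y hy).2.1⟩, ?_⟩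
  intro y r hr
  exact (h8 y r hr).trans (Real.rpow_le_rpow (skWt_nonneg hw _) (hball _ _) (by linarith))

noncomputable def skNu {M : Type u} [MeasurableSpace M] (S : Finset M) (p : M → ℝ) : Measure M :=
  ∑ z ∈ S, ENNReal.ofReal (p z) • Measure.dirac z

open Classical in
lemma skNu_apply {M : Type u} [MeasurableSpace M] (S : Finset M) (p : M → ℝ) (hp : ∀ z, 0 ≤ p z)
    {A : Set M} (hA : MeasurableSet A) :
    skNu S p A = ENNReal.ofReal (∑ z ∈ S.filter (· ∈ A), p z) := by
  unfold skNu
  rw [Measure.finsetSum_apply, Finset.sum_filter, ENNReal.ofReal_sum_of_nonneg]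
  · refine Finset.sum_congr rfl fun z _ => ?_
    by_cases h : z ∈ A <;> simp [Measure.dirac_apply' _ hA, h]
  · intro z _; split_ifs <;> simp [hp]

open Filter Topology in
theorem sk_main (ε : ℝ) (hε : ε ∈ Set.Ioo (0 : ℝ) 1) :
    ∃ c : ℝ, 1 ≤ c ∧
      ∀ (M : Type u) [MetricSpace M] [CompactSpace M] [MeasurableSpace M] [BorelSpace M]
        (μ : Measure M), IsProbabilityMeasure μ →
        ∃ (S : Set M) (ν : Measure M), IsCompact S ∧ IsProbabilityMeasure ν ∧ ν Sᶜ = 0 ∧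
          (∃ ρ : S → S → ℝ, IsUltrametricOn ρ ∧
            ∀ x y : S, dist (x : M) (y : M) ≤ ρ x y ∧
              ρ x y ≤ (9 / ε) * dist (x : M) (y : M)) ∧
          ∀ (x : M) (r : ℝ), 0 ≤ r →
            ν (closedBall x r ∩ S) ≤ (μ (closedBall x (c * r))) ^ (1 - ε) := by
  obtain ⟨hε0, hε1⟩ := hε
  obtain ⟨c, hc, hlev⟩ := sk_level ε hε0 hε1
  refine ⟨c, hc, ?_⟩
  classical
  intro M _ _ _ _ μ hμ
  have hepos : ∀ N : ℕ, 0 < 1 / ((N:ℝ) + 1) := fun N => Nat.one_div_pos_of_nat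
  choose T p σ hp hp1 hsymm hultra hdist hball using
    fun N : ℕ => hlev M μ (1 / ((N:ℝ) + 1)) (hepos N)
  have hprob : ∀ N, IsProbabilityMeasure (skNu (T N) (p N)) := fun N => by
    constructor
    rw [skNu_apply _ _ (hp N) MeasurableSet.univ]
    simp [hp1 N]
  set νs : ℕ → ProbabilityMeasure M := fun N => ⟨skNu (T N) (p N), hprob N⟩ with hνs
  set U : Ultrafilter ℕ := hyperfilter ℕ with hU
  have hUtop : (U : Filter ℕ) ≤ atTop := by
    rw [← Nat.cofinite_eq_atTop]; exact hyperfilter_le_cofinite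
  set ν : ProbabilityMeasure M := (U.map νs).lim with hν
  have hlim : Tendsto νs U (𝓝 ν) := (U.map νs).le_nhds_lim
  have hopen : ∀ G : Set M, IsOpen G → ∀ a : ENNReal,
      (∀ᶠ N in (U : Filter ℕ), skNu (T N) (p N) G ≤ a) → (ν : Measure M) G ≤ a := by
    intro G hG a ha
    refine (ProbabilityMeasure.le_liminf_measure_open_of_tendsto hlim hG).trans ?_
    exact liminf_le_of_frequently_le' ha.frequently
  have hTne : ∀ N, (T N).Nonempty := fun N => by
    rcases (T N).eq_empty_or_nonempty with h | h
    · have := hp1 N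
      rw [h] at this; simp at this
    · exact h
  choose a haT hamin using fun (x : M) (N : ℕ) =>
    Finset.exists_min_image (T N) (fun z => dist z x) (hTne N)
  set S : Set M := {x | Tendsto (a x) U (𝓝 x)} with hS
  have hclosed : IsClosed S := by
    refine isClosed_of_closure_subset fun x hx => ?_
    show Tendsto (a x) U (𝓝 x)
    rw [Metric.tendsto_nhds]
    intro δ hδ
    obtain ⟨x', hx', hd⟩ := Metric.mem_closure_iff.1 hx (δ/2) (by positivity)
    have hx'' : Tendsto (a x') U (𝓝 x') := hx'
    filter_upwards [Metric.tendsto_nhds.1 hx'' (δ/2) (by positivity)] with N hN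
    have h1 := hamin x N (a x' N) (haT x' N)
    have h2 := dist_triangle (a x' N) x' x
    rw [dist_comm] at hd
    linarith
  have hnull : (ν : Measure M) Sᶜ = 0 := by
    refine measure_null_of_locally_null _ fun x hx => ?_
    have hx' : ¬ Tendsto (a x) U (𝓝 x) := hx
    rw [Metric.tendsto_nhds] at hx'
    push Not at hx'
    obtain ⟨δ, hδ, hx'⟩ := hx'
    have hev : ∀ᶠ N in (U : Filter ℕ), ¬ dist (a x N) x < δ := by
      simpa using hx'
    refine ⟨ball x δ, mem_nhdsWithin_of_mem_nhds (ball_mem_nhds x hδ), ?_⟩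
    refine le_antisymm (hopen _ isOpen_ball 0 ?_) bot_le
    filter_upwards [hev] with N hN
    rw [skNu_apply _ _ (hp N) measurableSet_ball]
    rw [Finset.sum_eq_zero]
    · simp
    · intro z hz
      exfalso
      have hz := Finset.mem_filter.1 hz
      have := hamin x N z hz.1
      exact hN (this.trans_lt hz.2)
  have hbdd : ∀ x y : M, ∃ l : ℝ, Tendsto (fun N => σ N (a x N) (a y N)) U (𝓝 l) := by
    intro x y
    have hmem : ∀ N, σ N (a x N) (a y N) ∈ Set.Icc 0 ((9/ε) * diam (Set.univ : Set M)) := fun N => by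
      have h := hdist N _ (haT x N) _ (haT y N)
      refine ⟨dist_nonneg.trans h.1, h.2.trans ?_⟩
      have := dist_le_diam_of_mem (isCompact_univ (X := M)).isBounded (Set.mem_univ (a x N))
        (Set.mem_univ (a y N))
      gcongr
    obtain ⟨l, _, hl⟩ := isCompact_Icc.ultrafilter_le_nhds
      (U.map fun N => σ N (a x N) (a y N)) (by
        rw [le_principal_iff]
        exact Filter.mem_map.2 (Filter.univ_mem' hmem))
    exact ⟨l, hl⟩
  choose L hL using hbdd
  have hdl : ∀ x ∈ S, ∀ y ∈ S, Tendsto (fun N => dist (a x N) (a y N)) U (𝓝 (dist x y)) :=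
    fun x hx y hy => Tendsto.dist hx hy
  have hL1 : ∀ x ∈ S, ∀ y ∈ S, dist x y ≤ L x y := fun x hx y hy =>
    le_of_tendsto_of_tendsto' (hdl x hx y hy) (hL x y)
      fun N => (hdist N _ (haT x N) _ (haT y N)).1
  have hL2 : ∀ x ∈ S, ∀ y ∈ S, L x y ≤ (9/ε) * dist x y := fun x hx y hy =>
    le_of_tendsto_of_tendsto' (hL x y) ((hdl x hx y hy).const_mul _)
      fun N => (hdist N _ (haT x N) _ (haT y N)).2
  have hL3 : ∀ x y, L x y = L y x := fun x y => by
    refine tendsto_nhds_unique (hL x y) ?_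
    have : (fun N => σ N (a x N) (a y N)) = fun N => σ N (a y N) (a x N) :=
      funext fun N => hsymm N _ (haT x N) _ (haT y N)
    rw [this]; exact hL y x
  have hL4 : ∀ x y z, L x z ≤ max (L x y) (L y z) := fun x y z =>
    le_of_tendsto_of_tendsto' (hL x z) ((hL x y).max (hL y z))
      fun N => hultra N _ (haT x N) _ (haT y N) _ (haT z N)
  refine ⟨S, ν, hclosed.isCompact, inferInstance, hnull, ⟨fun x y => L x y, ⟨⟨?_, ?_, ?_, ?_⟩, ?_⟩, ?_⟩, ?_⟩
  · exact fun x y => dist_nonneg.trans (hL1 x x.2 y y.2)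
  · intro x y
    constructor
    · intro h
      have := hL1 x x.2 y y.2
      rw [show L x y = 0 from h] at this
      exact Subtype.ext (dist_le_zero.1 this)
    · rintro rfl
      show L x x = 0
      have h1 := hL1 x x.2 x x.2
      have h2 := hL2 x x.2 x x.2
      rw [dist_self] at h1 h2
      linarith
  · exact fun x y => hL3 x y
  · intro x y z
    have h1 : 0 ≤ L x y := dist_nonneg.trans (hL1 x x.2 y y.2)
    have h2 : 0 ≤ L y z := dist_nonneg.trans (hL1 y y.2 z z.2)
    exact (hL4 x y z).trans (max_le_add_of_nonneg h1 h2)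
  · exact fun x y z => hL4 x y z
  · exact fun x y => ⟨hL1 x x.2 y y.2, hL2 x x.2 y y.2⟩
  intro x r hr
  refine (measure_mono Set.inter_subset_left).trans ?_
  have hc0 : 0 < c := by linarith
  have step : ∀ s, r < s → (ν : Measure M) (closedBall x r) ≤ μ (closedBall x (c * s)) ^ (1 - ε) := by
    intro s hs
    set r' := (r + s)/2 with hr'
    have h1 : r < r' := by linarith
    have h2 : r' < s := by linarith
    refine (measure_mono (closedBall_subset_ball h1)).trans (hopen _ isOpen_ball _ ?_)
    have ht : Tendsto (fun N : ℕ => c * (r' + 1 / ((N:ℝ)+1)) + 1 / ((N:ℝ)+1)) atTop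
        (𝓝 (c * (r' + 0) + 0)) :=
      ((tendsto_one_div_add_atTop_nhds_zero_nat.const_add r').const_mul c).add
        tendsto_one_div_add_atTop_nhds_zero_nat
    have hlt : c * (r' + 0) + 0 < c * s := by rw [add_zero, add_zero]; gcongr
    filter_upwards [hUtop (ht.eventually_lt_const hlt)] with N hN
    rw [skNu_apply _ _ (hp N) measurableSet_ball]
    rw [← ENNReal.ofReal_toReal (measure_ne_top μ (closedBall x (c * s))),
      ENNReal.ofReal_rpow_of_nonneg ENNReal.toReal_nonneg (by linarith)]
    refine ENNReal.ofReal_le_ofReal ?_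
    calc _ ≤ ∑ z ∈ skBl (T N) x r', p N z := by
          refine Finset.sum_le_sum_of_subset_of_nonneg ?_ fun z _ _ => hp N z
          intro z hz
          have hz := Finset.mem_filter.1 hz
          exact mem_skBl.2 ⟨hz.1, (mem_ball.1 hz.2).le⟩
      _ ≤ _ := hball N x r' (by linarith)
      _ ≤ _ := Real.rpow_le_rpow measureReal_nonneg
          (measureReal_mono (closedBall_subset_closedBall hN.le)) (by linarith)
  have hinter : closedBall x (c * r) = ⋂ m : ℕ, closedBall x (c * (r + 1 / ((m:ℝ)+1))) := by
    ext z
    simp only [mem_closedBall, Set.mem_iInter]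
    constructor
    · intro h m
      have := hepos m
      exact h.trans (by gcongr; linarith)
    · intro h
      have ht : Tendsto (fun N : ℕ => c * (r + 1 / ((N:ℝ)+1))) atTop (𝓝 (c * (r + 0))) :=
        (tendsto_one_div_add_atTop_nhds_zero_nat.const_add r).const_mul c
      rw [add_zero] at ht
      exact ge_of_tendsto' ht h
  have htm : Tendsto (fun m : ℕ => μ (closedBall x (c * (r + 1 / ((m:ℝ)+1))))) atTop
      (𝓝 (μ (closedBall x (c * r)))) := by
    rw [hinter]
    refine tendsto_measure_iInter_atTop (fun m => measurableSet_closedBall.nullMeasurableSet) ?_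
      ⟨0, measure_ne_top _ _⟩
    intro m m' hmm
    refine closedBall_subset_closedBall ?_
    have := Nat.one_div_le_one_div (α := ℝ) hmm
    gcongr
  have htm2 := ((ENNReal.continuous_rpow_const (y := 1 - ε)).tendsto _).comp htm
  refine ge_of_tendsto' htm2 fun m => step _ ?_
  have := hepos m
  linarith

/-- **Ultrametric skeleton theorem (Mendel–Naor).** For every `ε ∈ (0,1)` there is
`c_ε ∈ [1,∞)` such that every compact metric space `M` with a Borel probability measure `μ`
admits a compact subset `S ⊆ M` and a Borel probability measure `ν` supported on `S` such that
`(S, d_M)` embeds into an ultrametric space with distortion at most `9/ε` and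
`ν(B(x,r) ∩ S) ≤ μ(B(x, c_ε r))^{1-ε}` for all `x ∈ M`, `r ≥ 0`. -/
theorem ultrametric_skeleton (ε : ℝ) (hε : ε ∈ Set.Ioo (0 : ℝ) 1) :
    ∃ c : ℝ, 1 ≤ c ∧
      ∀ (M : Type u) [MetricSpace M] [CompactSpace M] [MeasurableSpace M] [BorelSpace M]
        (μ : Measure M), IsProbabilityMeasure μ →
        ∃ (S : Set M) (ν : Measure M), IsCompact S ∧ IsProbabilityMeasure ν ∧ ν Sᶜ = 0 ∧
          (∃ ρ : S → S → ℝ, IsUltrametricOn ρ ∧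
            ∀ x y : S, dist (x : M) (y : M) ≤ ρ x y ∧
              ρ x y ≤ (9 / ε) * dist (x : M) (y : M)) ∧
          ∀ (x : M) (r : ℝ), 0 ≤ r →
            ν (closedBall x r ∩ S) ≤ (μ (closedBall x (c * r))) ^ (1 - ε) :=
  sk_main ε hε
end

section
/- There exists a universal constant c ∈ (0,∞) such that for every ε ∈ (0,1) and every n-point metric space (M,d_M) there is a subset S ⊆ M with |S| ≥ n^{1−ε} such that (S,d_M) embeds into an ultrametric space with distortion at most c/ε, i.e., there is an ultrametric ρ on S with d_M(x,y) ≤ ρ(x,y) ≤ (c/ε) d_M(x,y) for all x,y ∈ S. -/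
universe u

structure GoodUM {M : Type u} [MetricSpace M] (K : ℝ) (S : Finset M) (ρ : M → M → ℝ) (D : ℝ) :
    Prop where
  symm : ∀ x ∈ S, ∀ y ∈ S, ρ x y = ρ y x
  ultra : ∀ x ∈ S, ∀ y ∈ S, ∀ z ∈ S, ρ x z ≤ max (ρ x y) (ρ y z)
  lower : ∀ x ∈ S, ∀ y ∈ S, dist x y ≤ ρ x y
  upper : ∀ x ∈ S, ∀ y ∈ S, ρ x y ≤ K * dist x y
  bdd : ∀ x ∈ S, ∀ y ∈ S, ρ x y ≤ D

theorem GoodUM.mono {M : Type u} [MetricSpace M] {K : ℝ} {S : Finset M} {ρ : M → M → ℝ} {D D' : ℝ}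
    (h : GoodUM K S ρ D) (hD : D ≤ D') : GoodUM K S ρ D' :=
  ⟨h.symm, h.ultra, h.lower, h.upper, fun x hx y hy => (h.bdd x hx y hy).trans hD⟩

theorem glue_um {M : Type u} [MetricSpace M] [DecidableEq M] {K : ℝ} {S T : Finset M}
    {ρ σ : M → M → ℝ} {D : ℝ} (h : GoodUM K S ρ D) (g : GoodUM K T σ D) (hST : Disjoint S T)
    (h1 : ∀ x ∈ S, ∀ y ∈ T, dist x y ≤ D) (h2 : ∀ x ∈ S, ∀ y ∈ T, D ≤ K * dist x y) :
    ∃ τ, GoodUM K (S ∪ T) τ D := by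
  classical
  have hd : ∀ x ∈ T, x ∉ S := fun x hx hx' => Finset.disjoint_left.1 hST hx' hx
  obtain ⟨a1, a2, a3, a4, a5⟩ := h
  obtain ⟨b1, b2, b3, b4, b5⟩ := g
  refine ⟨fun x y => if x ∈ S then (if y ∈ S then ρ x y else D) else
    (if y ∈ S then D else σ x y), ?_, ?_, ?_, ?_, ?_⟩
  · intro x hx y hy
    rcases Finset.mem_union.1 hx with hx | hx <;> rcases Finset.mem_union.1 hy with hy | hy <;>
      simp [hx, hy, hd] <;> simp_all
  · intro x hx y hy z hz
    rcases Finset.mem_union.1 hx with hx | hx <;> rcases Finset.mem_union.1 hy with hy | hy <;>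
      rcases Finset.mem_union.1 hz with hz | hz <;>
      simp only [hx, hy, hz, hd, if_true, if_false, not_false_eq_true] <;>
      first
      | exact a2 _ hx _ hy _ hz
      | exact b2 _ hx _ hy _ hz
      | exact le_max_left _ _
      | exact le_max_right _ _
      | exact le_max_of_le_left (a5 _ hx _ hz)
      | exact le_max_of_le_left (b5 _ hx _ hz)
  · intro x hx y hy
    rcases Finset.mem_union.1 hx with hx | hx <;> rcases Finset.mem_union.1 hy with hy | hy <;>
      simp only [hx, hy, hd, if_true, if_false, not_false_eq_true]
    · exact a3 _ hx _ hy
    · exact h1 _ hx _ hy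
    · rw [dist_comm]; exact h1 _ hy _ hx
    · exact b3 _ hx _ hy
  · intro x hx y hy
    rcases Finset.mem_union.1 hx with hx | hx <;> rcases Finset.mem_union.1 hy with hy | hy <;>
      simp only [hx, hy, hd, if_true, if_false, not_false_eq_true]
    · exact a4 _ hx _ hy
    · exact h2 _ hx _ hy
    · rw [dist_comm]; exact h2 _ hy _ hx
    · exact b4 _ hx _ hy
  · intro x hx y hy
    rcases Finset.mem_union.1 hx with hx | hx <;> rcases Finset.mem_union.1 hy with hy | hy <;>
      simp only [hx, hy, hd, if_true, if_false, not_false_eq_true, le_refl]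
    · exact a5 _ hx _ hy
    · exact b5 _ hx _ hy

theorem exists_slow_step (k : ℕ) (hk : 0 < k) (a : ℕ → ℝ) (ha : ∀ i, 0 < a i) :
    ∃ i < k, a (i + 1) * (a 0) ^ (1 / (k : ℝ)) ≤ a i * (a k) ^ (1 / (k : ℝ)) := by
  by_contra! hc
  set p := (a 0) ^ (1 / (k : ℝ)) with hp
  set q := (a k) ^ (1 / (k : ℝ)) with hq
  have hp0 : 0 < p := Real.rpow_pos_of_pos (ha 0) _
  have hq0 : 0 < q := Real.rpow_pos_of_pos (ha k) _
  have hpk : p ^ k = a 0 := by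
    rw [hp, one_div]; exact Real.rpow_inv_natCast_pow (ha 0).le hk.ne'
  have hqk : q ^ k = a k := by
    rw [hq, one_div]; exact Real.rpow_inv_natCast_pow (ha k).le hk.ne'
  have key : ∀ j, j + 1 ≤ k → a 0 * q ^ (j + 1) < a (j + 1) * p ^ (j + 1) := by
    intro j
    induction j with
    | zero => intro h; simpa using hc 0 (by omega)
    | succ j ih =>
      intro h
      have h1 := ih (by omega)
      have h2 := hc (j + 1) (by omega)
      calc a 0 * q ^ (j + 1 + 1) = (a 0 * q ^ (j + 1)) * q := by ring
        _ < (a (j + 1) * p ^ (j + 1)) * q := by gcongr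
        _ = (a (j + 1) * q) * p ^ (j + 1) := by ring
        _ < (a (j + 1 + 1) * p) * p ^ (j + 1) := by gcongr
        _ = _ := by ring
  have := key (k - 1) (by omega)
  rw [Nat.sub_add_cancel hk, hpk, hqk, mul_comm] at this
  exact lt_irrefl _ this

theorem core_um {M : Type u} [MetricSpace M] [DecidableEq M] (k : ℕ) (hk : 0 < k) (n : ℕ) :
    ∀ X : Finset M, X.card = n → ∀ D : ℝ, 0 ≤ D → (∀ x ∈ X, ∀ y ∈ X, dist x y ≤ D) →
    ∀ m : ℝ, 1 ≤ m → (∀ v ∈ X, ((X.filter (fun y => dist v y ≤ D / 4)).card : ℝ) ≤ m) →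
    ∃ S ⊆ X, (X.card : ℝ) ≤ S.card * m ^ (1 / (k : ℝ)) ∧ ∃ ρ, GoodUM (8 * k) S ρ D := by
  induction n using Nat.strong_induction_on with
  | _ n ih =>
  intro X hX D₀ hD₀ hdiam m hm hball
  have hk' : (0 : ℝ) < k := by exact_mod_cast hk
  have hm1 : 1 ≤ m ^ (1 / (k : ℝ)) := Real.one_le_rpow hm (by positivity)
  by_cases hc : X.card ≤ 1
  · refine ⟨X, subset_rfl, le_mul_of_one_le_right (by positivity) hm1, fun _ _ => 0, ?_⟩
    have he : ∀ x ∈ X, ∀ y ∈ X, x = y := fun x hx y hy => Finset.card_le_one.1 hc x hx y hy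
    refine ⟨by simp, by simp, ?_, ?_, ?_⟩
    · intro x hx y hy; simp [he x hx y hy]
    · intro x hx y hy; positivity
    · intro x hx y hy; exact hD₀
  push Not at hc
  obtain ⟨u, hu, w, hw, huw⟩ := Finset.one_lt_card.1 hc
  obtain ⟨⟨a, b⟩, hab, hmax⟩ := Finset.exists_max_image (X ×ˢ X) (fun p => dist p.1 p.2)
    ⟨(u, w), by simp [hu, hw]⟩
  simp only [Finset.mem_product] at hab hmax
  obtain ⟨D, hD⟩ : ∃ D, D = dist a b := ⟨_, rfl⟩
  rw [← hD] at hmax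
  have hdD : ∀ x ∈ X, ∀ y ∈ X, dist x y ≤ D := fun x hx y hy => hmax (x, y) ⟨hx, hy⟩
  have hDpos : 0 < D := (dist_pos.2 huw).trans_le (hdD u hu w hw)
  have hDD : D ≤ D₀ := hD ▸ hdiam a hab.1 b hab.2
  have hball' : ∀ v ∈ X, ((X.filter (fun y => dist v y ≤ D / 4)).card : ℝ) ≤ m := by
    intro v hv
    refine le_trans ?_ (hball v hv)
    norm_cast
    apply Finset.card_le_card
    apply Finset.monotone_filter_right
    intro y _ hy
    exact hy.trans (by linarith)
  clear hball hdiam hmax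
  obtain ⟨v, hv, hvmax⟩ := Finset.exists_max_image X
    (fun v => (X.filter (fun y => dist v y ≤ D / 8)).card) ⟨u, hu⟩
  set A : ℕ → Finset M := fun i => X.filter (fun y => dist v y ≤ D / 8 + i * (D / (8 * k))) with hA
  have memA : ∀ i y, y ∈ A i ↔ y ∈ X ∧ dist v y ≤ D / 8 + i * (D / (8 * k)) := by
    intro i y; simp [hA]
  have hstep : 0 < D / (8 * k) := by positivity
  have hvA : ∀ i, v ∈ A i := fun i => (memA _ _).2 ⟨hv, by simp; positivity⟩
  have hApos : ∀ i, (0 : ℝ) < (A i).card := fun i => by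
    exact_mod_cast Finset.card_pos.2 ⟨v, hvA i⟩
  have hkk : (k : ℝ) * (D / (8 * k)) = D / 8 := by field_simp
  have hAk : ((A k).card : ℝ) ≤ m := by
    refine le_trans (le_of_eq ?_) (hball' v hv)
    have : D / 8 + D / 8 = D / 4 := by ring
    simp only [hA, hkk, this]
  obtain ⟨i, hik, hi⟩ := exists_slow_step k hk (fun i => ((A i).card : ℝ)) hApos
  have hrad : ∀ y ∈ A i, dist v y ≤ D / 4 := by
    intro y hy
    have h1 := ((memA _ _).1 hy).2
    have : (i : ℝ) * (D / (8 * k)) ≤ k * (D / (8 * k)) := by gcongr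
    linarith
  have hdi : ∀ x ∈ A i, ∀ y ∈ A i, dist x y ≤ D / 2 := by
    intro x hx y hy
    have := dist_triangle_left x y v
    linarith [hrad x hx, hrad y hy]
  have hAX : ∀ i, A i ⊆ X := fun i => Finset.filter_subset _ _
  have hcard1 : (A i).card < n := by
    rw [← hX]
    apply Finset.card_lt_card
    refine ⟨hAX i, fun hs => ?_⟩
    have := hdi a (hs hab.1) b (hs hab.2)
    linarith
  have hcard2 : (X \ A (i + 1)).card < n := by
    rw [← hX]
    apply Finset.card_lt_card
    refine ⟨Finset.sdiff_subset, fun hs => ?_⟩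
    exact (Finset.mem_sdiff.1 (hs hv)).2 (hvA _)
  have hA0 : A 0 = X.filter (fun y => dist v y ≤ D / 8) := by simp [hA]
  obtain ⟨S, hS, hSc, ρ, hρ⟩ := ih _ hcard1 (A i) rfl (D / 2) (by positivity) hdi
    ((A 0).card : ℝ) (by exact_mod_cast Finset.card_pos.2 ⟨v, hvA 0⟩) (by
      intro x hx
      norm_cast
      rw [hA0]
      refine le_trans (Finset.card_le_card ?_) (hvmax x (hAX i hx))
      intro y hy
      rw [Finset.mem_filter] at hy ⊢
      exact ⟨hAX i hy.1, by linarith [hy.2]⟩)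
  obtain ⟨T, hT, hTc, σ, hσ⟩ := ih _ hcard2 (X \ A (i + 1)) rfl D hDpos.le
    (fun x hx y hy => hdD x (Finset.sdiff_subset hx) y (Finset.sdiff_subset hy)) m hm (by
      intro x hx
      refine le_trans ?_ (hball' x (Finset.sdiff_subset hx))
      norm_cast
      apply Finset.card_le_card
      exact Finset.filter_subset_filter _ Finset.sdiff_subset)
  have hAA : A i ⊆ A (i + 1) := by
    intro y hy
    rw [memA] at hy ⊢
    refine ⟨hy.1, hy.2.trans ?_⟩
    push_cast
    nlinarith
  have hST : Disjoint S T := by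
    rw [Finset.disjoint_left]
    intro x hx hx'
    exact (Finset.mem_sdiff.1 (hT hx')).2 (hAA (hS hx))
  obtain ⟨τ, hτ⟩ := glue_um (hρ.mono (by linarith : D / 2 ≤ D)) hσ hST
    (fun x hx y hy => hdD x (hAX i (hS hx)) y (Finset.sdiff_subset (hT hy))) (by
      intro x hx y hy
      have h1 := ((memA _ _).1 (hS hx)).2
      have h2 := Finset.mem_sdiff.1 (hT hy)
      have h3 : D / 8 + ((i + 1 : ℕ) : ℝ) * (D / (8 * k)) < dist v y := by
        by_contra! h
        exact h2.2 ((memA _ _).2 ⟨h2.1, h⟩)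
      push_cast at h3
      have h4 := dist_triangle v x y
      have h5 : D / (8 * k) ≤ dist x y := by nlinarith
      rw [div_le_iff₀ (by positivity)] at h5
      linarith)
  refine ⟨S ∪ T, Finset.union_subset (hS.trans (hAX i)) (hT.trans Finset.sdiff_subset), ?_,
    τ, hτ.mono hDD⟩
  have e1 : ((A (i + 1)).card : ℝ) ≤ S.card * m ^ (1 / (k : ℝ)) := by
    have hp : 0 < ((A 0).card : ℝ) ^ (1 / (k : ℝ)) := Real.rpow_pos_of_pos (hApos 0) _
    have hq : 0 < ((A k).card : ℝ) ^ (1 / (k : ℝ)) := Real.rpow_pos_of_pos (hApos k) _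
    have hqm : ((A k).card : ℝ) ^ (1 / (k : ℝ)) ≤ m ^ (1 / (k : ℝ)) :=
      Real.rpow_le_rpow (hApos k).le hAk (by positivity)
    refine le_of_mul_le_mul_right ?_ hp
    calc _ ≤ _ := hi
      _ ≤ (S.card * ((A 0).card : ℝ) ^ (1 / (k : ℝ))) * ((A k).card : ℝ) ^ (1 / (k : ℝ)) := by
        gcongr
      _ ≤ (S.card * ((A 0).card : ℝ) ^ (1 / (k : ℝ))) * m ^ (1 / (k : ℝ)) := by
        gcongr
      _ = _ := by ring
  have e2 : (X.card : ℝ) = (X \ A (i + 1)).card + (A (i + 1)).card := by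
    exact_mod_cast (Finset.card_sdiff_add_card_eq_card (hAX (i + 1))).symm
  rw [Finset.card_union_of_disjoint hST, e2]
  push_cast
  linarith

theorem nonlinear_dvoretzky_finite :
    ∃ c : ℝ, 0 < c ∧ ∀ ε : ℝ, ε ∈ Set.Ioo (0 : ℝ) 1 →
      ∀ (M : Type u) [MetricSpace M] [Fintype M],
        ∃ S : Finset M, ((Fintype.card M : ℝ) ^ (1 - ε) ≤ (S.card : ℝ)) ∧
          ∃ ρ : S → S → ℝ, IsUltrametricOn ρ ∧
            ∀ x y : S, dist (x : M) (y : M) ≤ ρ x y ∧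
              ρ x y ≤ (c / ε) * dist (x : M) (y : M) := by
  classical
  refine ⟨16, by norm_num, ?_⟩
  rintro ε ⟨h0, h1⟩ M _ _
  obtain ⟨k, hk, hk1, hk2⟩ : ∃ k : ℕ, 0 < k ∧ 1 / (k : ℝ) ≤ ε ∧ 8 * (k : ℝ) ≤ 16 / ε := by
    have hpos : 0 < 1 / ε := by positivity
    have hk : 0 < ⌈1 / ε⌉₊ := Nat.ceil_pos.2 hpos
    refine ⟨⌈1 / ε⌉₊, hk, ?_, ?_⟩
    · rw [one_div_le (by exact_mod_cast hk) h0]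
      exact Nat.le_ceil _
    · have := Nat.ceil_lt_add_one hpos.le
      have h2 : 1 ≤ 1 / ε := by rw [le_div_iff₀ h0]; linarith
      have : (16 : ℝ) / ε = 16 * (1 / ε) := by ring
      linarith
  rcases isEmpty_or_nonempty M with hM | hM
  · refine ⟨∅, ?_, fun _ _ => 0, ?_, ?_⟩
    · simp [Real.zero_rpow (by linarith : 1 - ε ≠ 0)]
    · exact ⟨⟨fun x => (hM.false x.1).elim, fun x => (hM.false x.1).elim,
        fun x => (hM.false x.1).elim, fun x => (hM.false x.1).elim⟩, fun x => (hM.false x.1).elim⟩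
    · exact fun x => (hM.false x.1).elim
  have hN : (1 : ℝ) ≤ Fintype.card M := by exact_mod_cast Fintype.card_pos
  obtain ⟨S, -, hS, ρ, r1, r2, r3, r4, -⟩ := core_um k hk _ (Finset.univ : Finset M) rfl
    (Metric.diam (Set.univ : Set M)) Metric.diam_nonneg
    (fun x _ y _ => Metric.dist_le_diam_of_mem Set.finite_univ.isBounded trivial trivial)
    (Fintype.card M : ℝ) hN (fun v _ => by exact_mod_cast Finset.card_le_univ _)
  refine ⟨S, ?_, fun x y => ρ x y, ?_, ?_⟩
  · rw [Finset.card_univ] at hS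
    rw [Real.rpow_sub (by linarith), Real.rpow_one, div_le_iff₀ (by positivity)]
    refine hS.trans ?_
    gcongr
  · have nn : ∀ x y : S, 0 ≤ ρ x y := fun x y => dist_nonneg.trans (r3 x x.2 y y.2)
    have ul : ∀ x y z : S, ρ x z ≤ max (ρ x y) (ρ y z) := fun x y z => r2 x x.2 y y.2 z z.2
    refine ⟨⟨nn, ?_, fun x y => r1 x x.2 y y.2, fun x y z => ?_⟩, ul⟩
    · intro x y
      constructor
      · intro h
        have := r3 x x.2 y y.2
        replace this := this.trans_eq h
        exact Subtype.ext (dist_le_zero.1 this)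
      · rintro rfl
        refine le_antisymm ?_ (nn _ _)
        simpa using r4 x x.2 x x.2
    · exact (ul x y z).trans (max_le_add_of_nonneg (nn _ _) (nn _ _))
  · intro x y
    refine ⟨r3 x x.2 y y.2, (r4 x x.2 y y.2).trans ?_⟩
    gcongr
end

section
/- There exists a universal constant c ∈ (0,∞) such that for every ε ∈ (0,1) and every α ∈ (0,∞), any compact metric space (M, d_M) of Hausdorff dimension strictly greater than α has a closed subset S ⊆ M of Hausdorff dimension at least (1−ε)α such that (S,d_M) embeds into an ultrametric space with distortion at most c/ε, i.e., there is an ultrametric ρ on S with d_M(x,y) ≤ ρ(x,y) ≤ (c/ε) d_M(x,y) for all x,y ∈ S. -/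
universe u

section NDHelpers
open MeasureTheory
lemma grow (k : ℕ) (hk : 0 < k) (ε : ℝ) (hε : 1 ≤ ε * k) (a : ℕ → ℝ) (ha0 : 0 < a 0)
    (hmono : Monotone a) : ∃ j < k, a (j+1) * a 0 ^ ε ≤ a j * a k ^ ε := by
  by_contra! h
  have hpos : ∀ j, 0 < a j := fun j => ha0.trans_le (hmono (Nat.zero_le j))
  set l := (a k / a 0) ^ ε with hl
  have hl0 : 0 < l := Real.rpow_pos_of_pos (div_pos (hpos k) ha0) _
  have h0 : 0 < a 0 ^ ε := Real.rpow_pos_of_pos ha0 _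
  have h1 : ∀ j < k, a j * l < a (j+1) := by
    intro j hj
    have := h j hj
    rw [hl, Real.div_rpow (hpos k).le ha0.le, ← mul_div_assoc, div_lt_iff₀ h0]
    exact this
  have h2 : ∀ j ≤ k, a 0 * l ^ j ≤ a j := by
    intro j
    induction j with
    | zero => intro _; simp
    | succ j ih =>
      intro hj
      calc a 0 * l ^ (j+1) = (a 0 * l ^ j) * l := by ring
        _ ≤ a j * l := by gcongr; exact ih (by omega)
        _ ≤ _ := (h1 j (by omega)).le
  have h3 : a 0 * l ^ k < a k := by
    obtain ⟨j, rfl⟩ : ∃ j, k = j + 1 := ⟨k - 1, by omega⟩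
    calc a 0 * l ^ (j+1) = (a 0 * l ^ j) * l := by ring
        _ ≤ a j * l := by gcongr; exact h2 j (by omega)
        _ < _ := (h1 j (by omega))
  have h4 : a k / a 0 ≤ l ^ k := by
    rw [hl, ← Real.rpow_natCast, ← Real.rpow_mul (div_pos (hpos k) ha0).le]
    refine Real.self_le_rpow_of_one_le ?_ hε
    rw [one_le_div ha0]; exact hmono (Nat.zero_le k)
  rw [div_le_iff₀ ha0] at h4
  linarith

structure NDCont {M : Type*} (m : Set M → ℝ) : Prop where
  nonneg : ∀ A, 0 ≤ m A
  empty : m ∅ = 0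
  mono : ∀ A B, A ⊆ B → m A ≤ m B
  union : ∀ A B, m (A ∪ B) ≤ m A + m B

lemma NDCont.biUnion {M : Type*} {m : Set M → ℝ} (hm : NDCont m) (t : Finset M) (A : M → Set M) :
    m (⋃ c ∈ t, A c) ≤ ∑ c ∈ t, m (A c) := by
  classical
  induction t using Finset.induction_on with
  | empty => simp [hm.empty]
  | insert a s ha ih =>
    rw [Finset.set_biUnion_insert, Finset.sum_insert ha]
    exact (hm.union _ _).trans (by linarith)

lemma decomp {M : Type*} [MetricSpace M] (m : Set M → ℝ) (hm : NDCont m) (ε : ℝ)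
    (hε0 : 0 < ε) (hε1 : ε < 1) (K : ℝ) (hK : 1 < K) (Δ : ℝ) (hΔ : 0 < Δ) (t : Finset M)
    (ht : ∀ x, ∃ c ∈ t, dist x c < Δ / 16) : ∀ (N : ℕ) (X : Set M), IsClosed X →
    {c | c ∈ t ∧ ∃ x ∈ X, dist x c < Δ / 16}.ncard ≤ N → ∃ F : Finset (Set M × ℝ),
    (∀ p ∈ F, IsClosed p.1 ∧ p.1 ⊆ X ∧ 0 < m p.1 ∧ 0 < p.2 ∧ ∃ x ∈ X,
      p.1 ⊆ Metric.closedBall x (Δ / 4) ∧ p.2 ≤ m (Metric.closedBall x (Δ / 4) ∩ X) ∧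
      ∀ y ∈ p.1, p.2 * m (Metric.closedBall y (Δ / 8) ∩ p.1) ^ ε ≤
        K * m p.1 * m (Metric.closedBall x (Δ / 4) ∩ X) ^ ε) ∧
    (∀ p ∈ F, ∀ q ∈ F, p ≠ q → ∀ x ∈ p.1, ∀ y ∈ q.1, Δ * ε / 16 ≤ dist x y) ∧
    m X ≤ ∑ p ∈ F, p.2 := by
  classical
  intro N
  induction N with
  | zero =>
    intro X hX hc
    have hfin : {c | c ∈ t ∧ ∃ x ∈ X, dist x c < Δ / 16}.Finite :=
      t.finite_toSet.subset (fun c hc => hc.1)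
    have : X = ∅ := by
      rw [Set.eq_empty_iff_forall_notMem]
      intro x hx
      obtain ⟨c, hc1, hc2⟩ := ht x
      have h0 := (Set.ncard_eq_zero hfin).1 (Nat.le_zero.1 hc)
      exact (Set.eq_empty_iff_forall_notMem.1 h0) c ⟨hc1, x, hx, hc2⟩
    exact ⟨∅, by simp, by simp, by simp [this, hm.empty]⟩
  | succ N ih =>
    intro X hX hc
    rcases (hm.nonneg X).eq_or_lt with h0 | hmX
    · exact ⟨∅, by simp, by simp, by simp [← h0]⟩
    have hpos : ∃ y ∈ X, 0 < m (Metric.closedBall y (Δ / 8) ∩ X) := by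
      by_contra! h
      have h1 : m X ≤ ∑ c ∈ t, m (Metric.ball c (Δ / 16) ∩ X) := by
        refine (hm.mono _ _ ?_).trans (hm.biUnion t _)
        intro x hx
        obtain ⟨c, hc1, hc2⟩ := ht x
        simp only [Set.mem_iUnion]
        exact ⟨c, hc1, hc2, hx⟩
      have h2 : ∑ c ∈ t, m (Metric.ball c (Δ / 16) ∩ X) ≤ 0 := by
        refine Finset.sum_nonpos fun c _ => ?_
        rcases (Metric.ball c (Δ / 16) ∩ X).eq_empty_or_nonempty with h3 | ⟨y, hy1, hy2⟩
        · rw [h3, hm.empty]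
        · refine (hm.mono _ _ ?_).trans (h y hy2)
          rintro z ⟨hz1, hz2⟩
          refine ⟨?_, hz2⟩
          rw [Metric.mem_ball] at hz1 hy1
          rw [Metric.mem_closedBall]
          have := dist_triangle_right z y c
          linarith
      linarith
    obtain ⟨x, hxX, hxpos, hxmax⟩ : ∃ x ∈ X, 0 < m (Metric.closedBall x (Δ / 8) ∩ X) ∧
        ∀ y ∈ X, m (Metric.closedBall y (Δ / 8) ∩ X) ≤
          K ^ (1/ε) * m (Metric.closedBall x (Δ / 8) ∩ X) := by
      obtain ⟨y0, hy0, hy0p⟩ := hpos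
      set V := (fun y => m (Metric.closedBall y (Δ / 8) ∩ X)) '' X with hV
      have hbdd : BddAbove V := ⟨m X, by
        rintro _ ⟨y, hy, rfl⟩; exact hm.mono _ _ Set.inter_subset_right⟩
      have hs : 0 < sSup V := hy0p.trans_le (le_csSup hbdd ⟨y0, hy0, rfl⟩)
      have hL : 1 < K ^ (1/ε) := Real.one_lt_rpow hK (by positivity)
      obtain ⟨_, ⟨x, hx, rfl⟩, hx2⟩ := exists_lt_of_lt_csSup (s := V) ⟨_, ⟨y0, hy0, rfl⟩⟩
        (div_lt_self hs hL)
      refine ⟨x, hx, lt_trans (by positivity) hx2, fun y hy => ?_⟩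
      rw [div_lt_iff₀ (by positivity)] at hx2
      have := le_csSup hbdd ⟨y, hy, rfl⟩
      simp only at this hx2
      linarith
    set k := ⌈1/ε⌉₊ with hk
    have hk1 : 1 / ε ≤ k := Nat.le_ceil _
    have hk0 : 0 < k := Nat.ceil_pos.2 (by positivity)
    have hk0' : (0:ℝ) < k := by exact_mod_cast hk0
    have hk2 : (k:ℝ) < 1/ε + 1 := Nat.ceil_lt_add_one (by positivity)
    have hk3 : ε * k ≤ 2 := by
      have h1 : ε * k < ε * (1/ε + 1) := by gcongr
      have h2 : ε * (1/ε + 1) = 1 + ε := by field_simp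
      linarith
    have hk4 : 1 ≤ ε * k := by
      rw [div_le_iff₀ hε0] at hk1; linarith
    set r : ℕ → ℝ := fun j => Δ/8 + j * (Δ/(8*k)) with hr
    have hrmono : Monotone r := by
      intro i j hij
      simp only [hr]
      gcongr
    have hr0 : r 0 = Δ/8 := by simp [hr]
    have hrk : r k = Δ/4 := by simp only [hr]; field_simp; ring
    obtain ⟨j, hjk, hj⟩ := grow k hk0 ε hk4 (fun j => m (Metric.closedBall x (r j) ∩ X))
      (by simpa [hr0] using hxpos)
      (fun i j hij => hm.mono _ _ (Set.inter_subset_inter_left _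
        (Metric.closedBall_subset_closedBall (hrmono hij))))
    simp only [hr0, hrk] at hj
    have hrj : r (j+1) = r j + Δ/(8*k) := by simp only [hr]; push_cast; ring
    have hstep : Δ * ε / 16 ≤ Δ/(8*k) := by
      rw [div_le_div_iff₀ (by norm_num) (by positivity)]
      nlinarith
    have hrj8 : Δ/8 ≤ r j := hr0 ▸ hrmono (Nat.zero_le j)
    have hrj4 : r (j+1) ≤ Δ/4 := hrk ▸ hrmono hjk
    have hkp : 0 < Δ/(8*k) := by positivity
    set P := Metric.closedBall x (r j) ∩ X with hP
    set Q := X \ Metric.ball x (r (j+1)) with hQ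
    set w := m (Metric.closedBall x (r (j+1)) ∩ X) with hw
    have hPm : m (Metric.closedBall x (Δ / 8) ∩ X) ≤ m P :=
      hm.mono _ _ (Set.inter_subset_inter_left _ (Metric.closedBall_subset_closedBall hrj8))
    have hPw : m P ≤ w :=
      hm.mono _ _ (Set.inter_subset_inter_left _
        (Metric.closedBall_subset_closedBall (by linarith)))
    have hQX : Q ⊆ X := Set.sdiff_subset
    have hQcl : IsClosed Q := hX.sdiff Metric.isOpen_ball
    obtain ⟨F, hF1, hF2, hF3⟩ := ih Q hQcl (by
      have hfin : {c | c ∈ t ∧ ∃ x ∈ X, dist x c < Δ / 16}.Finite :=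
        t.finite_toSet.subset (fun c hc => hc.1)
      refine Nat.le_of_lt_succ (lt_of_lt_of_le (Set.ncard_lt_ncard ?_ hfin) hc)
      have hsub : {c | c ∈ t ∧ ∃ x ∈ Q, dist x c < Δ / 16} ⊆
          {c | c ∈ t ∧ ∃ x ∈ X, dist x c < Δ / 16} := by
        rintro c ⟨hc1, y, hy, hyc⟩
        exact ⟨hc1, y, hQX hy, hyc⟩
      rw [Set.ssubset_iff_of_subset hsub]
      obtain ⟨c, hc1, hc2⟩ := ht x
      refine ⟨c, ⟨hc1, x, hxX, hc2⟩, ?_⟩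
      rintro ⟨_, y, hy, hyc⟩
      apply hy.2
      rw [Metric.mem_ball]
      have := dist_triangle_right y x c
      linarith)
    have hsep : ∀ y ∈ P, ∀ z ∈ Q, Δ * ε / 16 ≤ dist y z := by
      intro y hy z hz
      have h1 : dist y x ≤ r j := hy.1
      have h2 : r (j+1) ≤ dist z x := by
        by_contra! h; exact hz.2 h
      have := dist_triangle z y x
      rw [dist_comm z y] at this
      linarith
    refine ⟨insert (P, w) F, ?_, ?_, ?_⟩
    · intro p hp
      rw [Finset.mem_insert] at hp
      rcases hp with rfl | hp
      · refine ⟨Metric.isClosed_closedBall.inter hX, Set.inter_subset_right, by linarith,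
          by linarith, x, hxX, ?_, ?_, ?_⟩
        · exact Set.inter_subset_left.trans (Metric.closedBall_subset_closedBall (by linarith))
        · exact hm.mono _ _ (Set.inter_subset_inter_left _
            (Metric.closedBall_subset_closedBall hrj4))
        · intro y hy
          have h1 : m (Metric.closedBall y (Δ / 8) ∩ P) ^ ε ≤
              K * m (Metric.closedBall x (Δ / 8) ∩ X) ^ ε := by
            calc m (Metric.closedBall y (Δ / 8) ∩ P) ^ ε
                ≤ (K ^ (1/ε) * m (Metric.closedBall x (Δ / 8) ∩ X)) ^ ε := by
                  refine Real.rpow_le_rpow (hm.nonneg _) ?_ hε0.le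
                  exact (hm.mono _ _ (Set.inter_subset_inter_right _ Set.inter_subset_right)).trans
                    (hxmax y hy.2)
              _ = _ := by
                  rw [Real.mul_rpow (by positivity) (hm.nonneg _), ← Real.rpow_mul (by linarith),
                    one_div_mul_cancel hε0.ne', Real.rpow_one]
          calc w * m (Metric.closedBall y (Δ / 8) ∩ P) ^ ε
              ≤ w * (K * m (Metric.closedBall x (Δ / 8) ∩ X) ^ ε) := by
                gcongr; exact hm.nonneg _
            _ = K * (w * m (Metric.closedBall x (Δ / 8) ∩ X) ^ ε) := by ring
            _ ≤ K * (m P * m (Metric.closedBall x (Δ / 4) ∩ X) ^ ε) := by gcongr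
            _ = _ := by ring
      · obtain ⟨h1, h2, h3, h4, y, hy, h5, h6, h7⟩ := hF1 p hp
        have hmm : m (Metric.closedBall y (Δ / 4) ∩ Q) ≤ m (Metric.closedBall y (Δ / 4) ∩ X) :=
          hm.mono _ _ (Set.inter_subset_inter_right _ hQX)
        refine ⟨h1, h2.trans hQX, h3, h4, y, hQX hy, h5, h6.trans hmm, fun z hz => ?_⟩
        refine (h7 z hz).trans ?_
        have := Real.rpow_le_rpow (hm.nonneg _) hmm hε0.le
        gcongr
    · intro p hp q hq hpq
      rw [Finset.mem_insert] at hp hq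
      rcases hp with rfl | hp <;> rcases hq with rfl | hq
      · exact absurd rfl hpq
      · intro y hy z hz
        exact hsep y hy z ((hF1 q hq).2.1 hz)
      · intro y hy z hz
        rw [dist_comm]
        exact hsep z hz y ((hF1 p hp).2.1 hy)
      · exact hF2 p hp q hq hpq
    · have hnot : (P, w) ∉ F := by
        intro h
        have h1 := (hF1 _ h).2.1
        have h2 : x ∈ P := ⟨Metric.mem_closedBall_self (by linarith), hxX⟩
        have := hsep x h2 x (h1 h2)
        rw [dist_self] at this
        have : 0 < Δ * ε / 16 := by positivity
        linarith
      rw [Finset.sum_insert hnot]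
      have : m X ≤ m (Metric.closedBall x (r (j+1)) ∩ X) + m Q := by
        refine (hm.mono _ _ ?_).trans (hm.union _ _)
        intro y hy
        by_cases h : y ∈ Metric.ball x (r (j+1))
        · exact Or.inl ⟨Metric.ball_subset_closedBall h, hy⟩
        · exact Or.inr ⟨hy, h⟩
      linarith

def NDInv {M : Type*} [MetricSpace M] (m : Set M → ℝ) (ε K D C β : ℝ) (n : ℕ)
    (p : Set M × ℝ) : Prop :=
  IsClosed p.1 ∧ 0 < m p.1 ∧ 0 < p.2 ∧ (∀ x ∈ p.1, ∀ y ∈ p.1, dist x y ≤ D * (1/2)^n) ∧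
  (∀ x ∈ p.1, p.2 * m (Metric.closedBall x (D * (1/2)^n / 4) ∩ p.1) ^ ε ≤ K ^ n * m p.1) ∧
  p.2 ≤ C * ((1/2)^n) ^ β

lemma nd_step {M : Type*} [MetricSpace M] [CompactSpace M] (m : Set M → ℝ) (hm : NDCont m)
    (ε : ℝ) (hε0 : 0 < ε) (hε1 : ε < 1) (K : ℝ) (hK : 1 < K) (D : ℝ) (hD : 0 < D) (C β γ B : ℝ)
    (hB : 0 < B)
    (hball : ∀ (x : M) (r : ℝ), 0 < r → ∀ A ⊆ Metric.closedBall x r, m A ≤ (B * r) ^ γ)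
    (hKC : ∀ n : ℕ, K ^ n * ((B * (D * (1/2)^n / 4)) ^ γ) ^ (1 - ε) ≤ C * ((1/2)^(n+1)) ^ β)
    (n : ℕ) (p : Set M × ℝ) (hp : NDInv m ε K D C β n p) :
    ∃ F : Finset (Set M × ℝ), (∀ q ∈ F, NDInv m ε K D C β (n+1) q ∧ q.1 ⊆ p.1) ∧
      ∑ q ∈ F, q.2 = p.2 ∧
      (∀ q ∈ F, ∀ q' ∈ F, q ≠ q' → ∀ x ∈ q.1, ∀ y ∈ q'.1, D * (1/2)^n * ε / 16 ≤ dist x y) := by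
  classical
  obtain ⟨hcl, hmp, hv, hdiam, hpot, hvb⟩ := hp
  set Δ := D * (1/2)^n with hΔdef
  have hΔ : 0 < Δ := by positivity
  obtain ⟨t0, -, ht0, htc⟩ := finite_cover_balls_of_compact (isCompact_univ (X := M))
    (show 0 < Δ/16 by positivity)
  obtain ⟨F, hF1, hF2, hF3⟩ := decomp m hm ε hε0 hε1 K hK Δ hΔ ht0.toFinset (by
    intro x
    have := htc (Set.mem_univ x)
    simp only [Set.mem_iUnion] at this
    obtain ⟨c, hc, hx⟩ := this
    exact ⟨c, by simpa using hc, hx⟩) _ p.1 hcl le_rfl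
  set W := ∑ q ∈ F, q.2 with hW
  have hWpos : 0 < W := by linarith
  have hinj : Function.Injective (fun q : Set M × ℝ => (q.1, p.2 * q.2 / W)) := by
    rintro ⟨a, b⟩ ⟨a', b'⟩ h
    simp only [Prod.mk.injEq] at h
    obtain ⟨rfl, h⟩ := h
    field_simp at h
    rw [h]
  refine ⟨F.image (fun q => (q.1, p.2 * q.2 / W)), ?_, ?_, ?_⟩
  · intro q' hq'
    obtain ⟨q, hq, rfl⟩ := Finset.mem_image.1 hq'
    obtain ⟨h1, h2, h3, h4, x, hx, h5, h6, h7⟩ := hF1 q hq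
    have hle : p.2 * q.2 / W ≤ p.2 * q.2 / m p.1 := by gcongr
    have hpx := hpot x hx
    set b := m (Metric.closedBall x (Δ / 4) ∩ p.1) with hb
    have hb0 : 0 < b := by linarith
    have h2n : D * (1/2)^(n+1) = Δ/2 := by rw [hΔdef]; ring
    refine ⟨⟨h1, h3, by positivity, ?_, ?_, ?_⟩, h2⟩
    · intro y hy z hz
      have hy' := h5 hy
      have hz' := h5 hz
      rw [Metric.mem_closedBall] at hy' hz'
      have := dist_triangle_right y z x
      rw [h2n]; linarith
    · intro y hy
      have h8 := h7 y hy
      rw [h2n, show Δ / 2 / 4 = Δ / 8 by ring]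
      simp only
      set a := m (Metric.closedBall y (Δ / 8) ∩ q.1) ^ ε with ha
      have ha0 : 0 ≤ a := Real.rpow_nonneg (hm.nonneg _) _
      calc p.2 * q.2 / W * a ≤ p.2 * q.2 / m p.1 * a := by gcongr
        _ = p.2 / m p.1 * (q.2 * a) := by ring
        _ ≤ p.2 / m p.1 * (K * m q.1 * b ^ ε) := by gcongr
        _ = K * m q.1 * (p.2 * b ^ ε) / m p.1 := by ring
        _ ≤ K * m q.1 * (K ^ n * m p.1) / m p.1 := by gcongr
        _ = K ^ (n+1) * m q.1 := by field_simp; ring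
    · refine le_trans ?_ (hKC n)
      refine hle.trans ?_
      have hbb : b ≤ (B * (Δ / 4)) ^ γ := hball x _ (by positivity) _ Set.inter_subset_left
      calc p.2 * q.2 / m p.1 ≤ p.2 * b / m p.1 := by gcongr
        _ = (p.2 * b ^ ε) * b ^ (1 - ε) / m p.1 := by
            rw [mul_assoc, ← Real.rpow_add hb0]; simp
        _ ≤ (K ^ n * m p.1) * ((B * (Δ / 4)) ^ γ) ^ (1 - ε) / m p.1 := by
            have : b ^ (1 - ε) ≤ ((B * (Δ / 4)) ^ γ) ^ (1 - ε) :=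
              Real.rpow_le_rpow hb0.le hbb (by linarith)
            gcongr
        _ = K ^ n * ((B * (Δ / 4)) ^ γ) ^ (1 - ε) := by field_simp
  · rw [Finset.sum_image hinj.injOn]
    simp only
    rw [← Finset.sum_div, ← Finset.mul_sum, ← hW]
    field_simp
  · intro q hq q' hq' hne
    obtain ⟨q0, hq0, rfl⟩ := Finset.mem_image.1 hq
    obtain ⟨q0', hq0', rfl⟩ := Finset.mem_image.1 hq'
    exact hF2 q0 hq0 q0' hq0' (fun h => hne (by rw [h]))

lemma nd_ultra {S : Type*} [MetricSpace S] (sim : ℕ → S → S → Prop) (D c : ℝ) (hD : 0 < D)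
    (hrefl : ∀ n x, sim n x x) (hsymm : ∀ n x y, sim n x y → sim n y x)
    (htrans : ∀ n x y z, sim n x y → sim n y z → sim n x z)
    (h0 : ∀ x y, sim 0 x y) (hle : ∀ n x y, sim n x y → dist x y ≤ D * (1/2)^n)
    (hge : ∀ n x y, ¬ sim (n+1) x y → D * (1/2)^n ≤ c * dist x y) :
    ∃ ρ : S → S → ℝ, IsUltrametricOn ρ ∧ ∀ x y : S, dist x y ≤ ρ x y ∧ ρ x y ≤ c * dist x y := by
  classical
  have hex : ∀ x y : S, x ≠ y → ∃ n, ¬ sim (n+1) x y := by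
    intro x y hxy
    by_contra! h
    have h1 : Filter.Tendsto (fun n : ℕ => D * (1/2:ℝ)^(n+1)) Filter.atTop (nhds (D * 0)) := by
      refine Filter.Tendsto.const_mul _ ?_
      exact (tendsto_pow_atTop_nhds_zero_of_lt_one (by norm_num) (by norm_num)).comp
        (Filter.tendsto_add_atTop_nat 1)
    have := ge_of_tendsto' h1 (fun n => hle (n+1) x y (h n))
    have := dist_pos.2 hxy
    linarith
  set ρ : S → S → ℝ := fun x y => if h : ∃ n, ¬ sim (n+1) x y then D * (1/2)^(Nat.find h) else 0
    with hρ
  have hself : ∀ x, ρ x x = 0 := by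
    intro x; simp [hρ, hrefl]
  have hpos : ∀ x y, x ≠ y → 0 < ρ x y := by
    intro x y hxy
    simp only [hρ, dif_pos (hex x y hxy)]; positivity
  have hnn : ∀ x y, 0 ≤ ρ x y := by
    intro x y
    simp only [hρ]; split_ifs <;> positivity
  have hsy : ∀ x y, ρ x y = ρ y x := by
    intro x y
    have : ∀ n, sim n x y ↔ sim n y x := fun n => ⟨hsymm n x y, hsymm n y x⟩
    simp only [hρ, this]
  have hult : ∀ x y z, ρ x z ≤ max (ρ x y) (ρ y z) := by
    intro x y z
    by_cases h : ∃ n, ¬ sim (n+1) x z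
    · have hs := Nat.find_spec h
      have hkey : ∀ a b, ¬ sim (Nat.find h + 1) a b → ρ x z ≤ ρ a b := by
        intro a b hab
        have hab' : ∃ n, ¬ sim (n+1) a b := ⟨_, hab⟩
        simp only [hρ, dif_pos h, dif_pos hab']
        have : Nat.find hab' ≤ Nat.find h := Nat.find_min' _ hab
        have := pow_le_pow_of_le_one (by norm_num : (0:ℝ) ≤ 1/2) (by norm_num) this
        gcongr
      by_cases h1 : sim (Nat.find h + 1) x y
      · exact le_max_of_le_right (hkey y z fun h2 => hs (htrans _ _ _ _ h1 h2))
      · exact le_max_of_le_left (hkey x y h1)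
    · have : ρ x z = 0 := by simp only [hρ, dif_neg h]
      rw [this]; exact le_max_of_le_left (hnn _ _)
  refine ⟨ρ, ⟨⟨hnn, ?_, hsy, ?_⟩, hult⟩, ?_⟩
  · intro x y
    constructor
    · intro h; by_contra hne; exact (hpos x y hne).ne' h
    · rintro rfl; exact hself x
  · intro x y z
    refine (hult x y z).trans (max_le ?_ ?_)
    · linarith [hnn y z]
    · linarith [hnn x y]
  · intro x y
    by_cases hxy : x = y
    · subst hxy; simp [hself]
    · have hh := hex x y hxy
      simp only [hρ, dif_pos hh]
      refine ⟨hle _ _ _ ?_, hge _ _ _ (Nat.find_spec hh)⟩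
      rcases hN : Nat.find hh with _ | N
      · exact h0 _ _
      · have := Nat.find_min hh (m := N) (by omega)
        push Not at this
        exact this

theorem nd_tree {M : Type*} [MetricSpace M] [CompactSpace M] (I : ℕ → Set M × ℝ → Prop)
    (ε D C β : ℝ) (hε : 0 < ε) (hD : 0 < D) (hC : 0 < C) (hβ : 0 < β)
    (hI : ∀ n p, I n p → IsClosed p.1 ∧ p.1.Nonempty ∧ 0 < p.2 ∧
      (∀ x ∈ p.1, ∀ y ∈ p.1, dist x y ≤ D * (1/2)^n) ∧ p.2 ≤ C * ((1/2)^n) ^ β)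
    (hstep : ∀ n p, I n p → ∃ F : Finset (Set M × ℝ), (∀ q ∈ F, I (n+1) q ∧ q.1 ⊆ p.1) ∧
      ∑ q ∈ F, q.2 = p.2 ∧
      (∀ q ∈ F, ∀ q' ∈ F, q ≠ q' → ∀ x ∈ q.1, ∀ y ∈ q'.1, D * (1/2)^n * ε / 16 ≤ dist x y))
    (p0 : Set M × ℝ) (hp0 : I 0 p0) :
    ∃ S : Set M, IsClosed S ∧ ENNReal.ofReal β ≤ dimH S ∧
      ∃ ρ : S → S → ℝ, IsUltrametricOn ρ ∧
        ∀ x y : S, dist (x : M) (y : M) ≤ ρ x y ∧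
          ρ x y ≤ (16 / ε) * dist (x : M) (y : M) := by
  classical
  choose! T hT1 hT2 hT3 using hstep
  let F : ℕ → Finset (Set M × ℝ) := fun n => Nat.rec {p0} (fun n G => G.biUnion (T n)) n
  have hF0 : F 0 = {p0} := rfl
  have hFs : ∀ n, F (n+1) = (F n).biUnion (T n) := fun n => rfl
  have hFI : ∀ n, ∀ p ∈ F n, I n p := by
    intro n
    induction n with
    | zero => intro p hp; rw [hF0, Finset.mem_singleton] at hp; rwa [hp]
    | succ n ih =>
      intro p hp
      rw [hFs, Finset.mem_biUnion] at hp
      obtain ⟨q, hq, hpq⟩ := hp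
      exact (hT1 n q (ih q hq) p hpq).1
  have hsep : ∀ n, ∀ p ∈ F n, ∀ q ∈ F n, p ≠ q → ∀ x ∈ p.1, ∀ y ∈ q.1,
      D * (1/2)^n * ε / 8 ≤ dist x y := by
    intro n
    induction n with
    | zero =>
      intro p hp q hq hpq
      rw [hF0, Finset.mem_singleton] at hp hq
      exact absurd (hp.trans hq.symm) hpq
    | succ n ih =>
      intro p hp q hq hpq x hx y hy
      rw [hFs, Finset.mem_biUnion] at hp hq
      obtain ⟨p', hp', hp⟩ := hp
      obtain ⟨q', hq', hq⟩ := hq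
      by_cases h : p' = q'
      · subst h
        have := hT3 n p' (hFI n p' hp') p hp q hq hpq x hx y hy
        refine le_trans (le_of_eq ?_) this
        ring
      · have := ih p' hp' q' hq' h x ((hT1 n p' (hFI n p' hp') p hp).2 hx) y
          ((hT1 n q' (hFI n q' hq') q hq).2 hy)
        refine le_trans ?_ this
        have h1 : (0:ℝ) < (1/2)^n := by positivity
        rw [pow_succ]
        have h2 : 0 < D * (1/2)^n * ε := by positivity
        nlinarith
  have hdisj : ∀ n, ∀ p ∈ F n, ∀ q ∈ F n, ∀ x ∈ p.1, x ∈ q.1 → p = q := by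
    intro n p hp q hq x hx hx'
    by_contra hne
    have := hsep n p hp q hq hne x hx x hx'
    rw [dist_self] at this
    have : 0 < D * (1/2)^n * ε / 8 := by positivity
    linarith
  set S : Set M := ⋂ n, ⋃ p ∈ F n, p.1 with hS
  have hSmem : ∀ x : S, ∀ n, ∃ p ∈ F n, (x:M) ∈ p.1 := by
    intro x n
    have := Set.mem_iInter.1 x.2 n
    simpa only [Set.mem_iUnion, exists_prop] using this
  refine ⟨S, ?_, ?_, ?_⟩
  · refine isClosed_iInter fun n => ?_
    exact (F n).finite_toSet.isClosed_biUnion fun p hp => (hI n p (hFI n p hp)).1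
  · by_contra! hdim
    borelize M
    have hμ : μH[β] S = 0 := by
      have := hausdorffMeasure_of_dimH_lt (s := S) (d := β.toNNReal) hdim
      rwa [Real.coe_toNNReal _ hβ.le] at this
    set A : ℝ := C * (16 / (D * ε)) ^ β with hA
    have hApos : 0 < A := by positivity
    have hv0 : 0 < p0.2 := (hI 0 p0 hp0).2.2.1
    set η : ENNReal := ENNReal.ofReal (p0.2 / (2 * A)) with hη
    have hηpos : 0 < η := ENNReal.ofReal_pos.2 (by positivity)
    obtain ⟨t, htS, htsum⟩ : ∃ t : ℕ → Set M, S ⊆ ⋃ n, t n ∧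
        ∑' n, Metric.ediam (t n) ^ β < η := by
      rw [Measure.hausdorffMeasure_apply] at hμ
      have h1 := (ENNReal.iSup_eq_zero.1 hμ) 1
      have h2 := (ENNReal.iSup_eq_zero.1 h1) one_pos
      rw [← h2] at hηpos
      simp only [iInf_lt_iff] at hηpos
      obtain ⟨t, ht1, ht2, ht3⟩ := hηpos
      refine ⟨t, ht1, lt_of_le_of_lt (ENNReal.tsum_le_tsum fun n => ?_) ht3⟩
      rcases (t n).eq_empty_or_nonempty with h | h
      · simp [h, hβ]
      · exact le_iSup_of_le h le_rfl
    obtain ⟨η', hη'pos, hη'sum⟩ := ENNReal.exists_pos_sum_of_countable hηpos.ne' ℕ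
    set g : ℕ → ENNReal := fun i => Metric.ediam (t i) ^ β + η' i with hg
    have hgpos : ∀ i, 0 < g i := fun i => by
      have : (0:ENNReal) < η' i := by exact_mod_cast hη'pos i
      exact this.trans_le le_add_self
    set e : ℕ → ENNReal := fun i => ENNReal.ofReal A * g i with he
    have hesum : ∑' i, e i < ENNReal.ofReal p0.2 := by
      simp only [he, hg]
      rw [ENNReal.tsum_mul_left, ENNReal.tsum_add]
      have h1 : ENNReal.ofReal p0.2 = ENNReal.ofReal A * (η + η) := by
        rw [hη, ← ENNReal.ofReal_add (by positivity) (by positivity),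
          ← ENNReal.ofReal_mul hApos.le]
        congr 1; field_simp; norm_num
      rw [h1]
      refine (ENNReal.mul_lt_mul_iff_right (ENNReal.ofReal_pos.2 hApos).ne'
        ENNReal.ofReal_ne_top).2 ?_
      exact ENNReal.add_lt_add htsum hη'sum
    set s : ℕ → ℝ := fun j => D * (1/2)^j * ε / 16 with hs
    have hspos : ∀ j, 0 < s j := fun j => by simp only [hs]; positivity
    have hbig : ∀ j, ∀ p ∈ F j, ∀ i, ENNReal.ofReal (s j) ^ β ≤ g i → ENNReal.ofReal p.2 ≤ e i := by
      intro j p hp i hi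
      calc ENNReal.ofReal p.2 ≤ ENNReal.ofReal (C * ((1/2)^j) ^ β) :=
            ENNReal.ofReal_le_ofReal (hI j p (hFI j p hp)).2.2.2.2
        _ = ENNReal.ofReal A * ENNReal.ofReal (s j) ^ β := by
            rw [ENNReal.ofReal_rpow_of_pos (hspos j), ← ENNReal.ofReal_mul hApos.le, hA, mul_assoc,
              ← Real.mul_rpow (by positivity) (hspos j).le]
            congr 3
            simp only [hs]; field_simp
        _ ≤ e i := by simp only [he]; gcongr
    let cost : Set M × ℝ → ENNReal := fun p => ∑' i, if (t i ∩ p.1).Nonempty then e i else 0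
    have hbadstep : ∀ j, ∀ p ∈ F j, cost p < ENNReal.ofReal p.2 →
        ∃ q ∈ T j p, cost q < ENNReal.ofReal q.2 := by
      intro j p hp hbad
      by_contra! hcon
      have hIp := hFI j p hp
      have hsmall : ∀ i, (t i ∩ p.1).Nonempty → g i < ENNReal.ofReal (s j) ^ β := by
        intro i hi
        by_contra! h
        have h1 := hbig j p hp i h
        have h2 : e i ≤ cost p := by
          have := ENNReal.le_tsum (f := fun i => if (t i ∩ p.1).Nonempty then e i else 0) i
          simpa only [if_pos hi] using this
        exact absurd hbad (not_lt.2 (h1.trans h2))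
      have h3 : ENNReal.ofReal p.2 ≤ ∑ q ∈ T j p, cost q := by
        rw [← hT2 j p hIp, ENNReal.ofReal_sum_of_nonneg]
        · exact Finset.sum_le_sum hcon
        · intro q hq; exact (hI _ q (hT1 j p hIp q hq).1).2.2.1.le
      have h4 : ∑ q ∈ T j p, cost q ≤ cost p := by
        simp only [cost]
        rw [← Summable.tsum_finsetSum (fun i _ => ENNReal.summable)]
        refine ENNReal.tsum_le_tsum fun i => ?_
        by_cases hex : ∃ q ∈ T j p, (t i ∩ q.1).Nonempty
        · obtain ⟨q, hq, hqn⟩ := hex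
          have hpn : (t i ∩ p.1).Nonempty :=
            hqn.mono (Set.inter_subset_inter_right _ (hT1 j p hIp q hq).2)
          rw [if_pos hpn, Finset.sum_eq_single_of_mem q hq, if_pos hqn]
          intro q' hq' hne
          rw [if_neg]
          rintro ⟨y, hy1, hy2⟩
          obtain ⟨x, hx1, hx2⟩ := hqn
          have h5 := hT3 j p hIp q' hq' q hq hne y hy2 x hx2
          have h6 : ENNReal.ofReal (s j) ≤ Metric.ediam (t i) := by
            refine le_trans ?_ (Metric.edist_le_ediam_of_mem hy1 hx1)
            rw [edist_dist]
            exact ENNReal.ofReal_le_ofReal h5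
          have h7 : ENNReal.ofReal (s j) ^ β ≤ g i :=
            (ENNReal.rpow_le_rpow h6 hβ.le).trans le_self_add
          exact absurd (hsmall i hpn) (not_lt.2 h7)
        · push Not at hex
          rw [Finset.sum_eq_zero]
          · exact zero_le
          · intro q hq
            rw [if_neg]
            rw [hex q hq]; exact Set.not_nonempty_empty
      exact absurd hbad (not_lt.2 (h3.trans h4))
    choose! G hG1 hG2 using hbadstep
    let P : ℕ → Set M × ℝ := fun n => Nat.rec p0 (fun n p => G n p) n
    have hPs : ∀ n, P (n+1) = G n (P n) := fun n => rfl
    have hP : ∀ n, P n ∈ F n ∧ cost (P n) < ENNReal.ofReal (P n).2 := by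
      intro n
      induction n with
      | zero =>
        refine ⟨by rw [hF0]; exact Finset.mem_singleton_self _, ?_⟩
        refine lt_of_le_of_lt (ENNReal.tsum_le_tsum fun i => ?_) hesum
        split_ifs
        · exact le_rfl
        · exact zero_le
      | succ n ih =>
        rw [hPs]
        refine ⟨?_, hG2 n _ ih.1 ih.2⟩
        rw [hFs, Finset.mem_biUnion]
        exact ⟨_, ih.1, hG1 n _ ih.1 ih.2⟩
    obtain ⟨x, hx⟩ := IsCompact.nonempty_iInter_of_sequence_nonempty_isCompact_isClosed
      (fun n => (P n).1)
      (fun n => (hT1 n _ (hFI n _ (hP n).1) _ (hG1 n _ (hP n).1 (hP n).2)).2)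
      (fun n => (hI n _ (hFI n _ (hP n).1)).2.1)
      ((hI 0 _ (hFI 0 _ (hP 0).1)).1.isCompact)
      (fun n => (hI n _ (hFI n _ (hP n).1)).1)
    rw [Set.mem_iInter] at hx
    have hxS : x ∈ S := by
      refine Set.mem_iInter.2 fun n => ?_
      simp only [Set.mem_iUnion]
      exact ⟨P n, (hP n).1, hx n⟩
    obtain ⟨i, hi⟩ := Set.mem_iUnion.1 (htS hxS)
    obtain ⟨j, hj⟩ : ∃ j, ENNReal.ofReal (s j) ^ β < g i := by
      have h1 : Filter.Tendsto s Filter.atTop (nhds 0) := by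
        have := (tendsto_pow_atTop_nhds_zero_of_lt_one (r := (1/2:ℝ)) (by norm_num)
          (by norm_num)).const_mul (D * ε / 16)
        rw [mul_zero] at this
        refine this.congr fun n => ?_
        simp only [hs]; ring
      have h2 : Filter.Tendsto (fun j => ENNReal.ofReal (s j) ^ β) Filter.atTop (nhds 0) := by
        have := (ENNReal.continuous_rpow_const (y := β)).tendsto 0
        rw [ENNReal.zero_rpow_of_pos hβ] at this
        refine this.comp ?_
        rw [← ENNReal.ofReal_zero]
        exact ENNReal.tendsto_ofReal h1
      exact (h2.eventually (gt_mem_nhds (hgpos i))).exists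
    have h1 := hbig j _ (hP j).1 i hj.le
    have h2 : e i ≤ cost (P j) := by
      have := ENNReal.le_tsum (f := fun i => if (t i ∩ (P j).1).Nonempty then e i else 0) i
      have hne : (t i ∩ (P j).1).Nonempty := ⟨x, hi, hx j⟩
      simpa only [if_pos hne] using this
    exact absurd (hP j).2 (not_lt.2 (h1.trans h2))
  · refine nd_ultra (fun n (x y : S) => ∃ p ∈ F n, (x:M) ∈ p.1 ∧ (y:M) ∈ p.1) D (16/ε) hD
      ?_ ?_ ?_ ?_ ?_ ?_
    · intro n x
      obtain ⟨p, hp, hx⟩ := hSmem x n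
      exact ⟨p, hp, hx, hx⟩
    · rintro n x y ⟨p, hp, h1, h2⟩
      exact ⟨p, hp, h2, h1⟩
    · rintro n x y z ⟨p, hp, h1, h2⟩ ⟨q, hq, h3, h4⟩
      obtain rfl := hdisj n p hp q hq y h2 h3
      exact ⟨p, hp, h1, h4⟩
    · intro x y
      obtain ⟨p, hp, hx⟩ := hSmem x 0
      obtain ⟨q, hq, hy⟩ := hSmem y 0
      rw [hF0, Finset.mem_singleton] at hp hq
      exact ⟨p, by rw [hF0, hp]; exact Finset.mem_singleton_self _, hx, by rw [hp, ← hq]; exact hy⟩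
    · rintro n x y ⟨p, hp, h1, h2⟩
      exact (hI n p (hFI n p hp)).2.2.2.1 x h1 y h2
    · intro n x y h
      obtain ⟨p, hp, hx⟩ := hSmem x (n+1)
      obtain ⟨q, hq, hy⟩ := hSmem y (n+1)
      have hne : p ≠ q := by
        rintro rfl; exact h ⟨p, hp, hx, hy⟩
      have := hsep (n+1) p hp q hq hne x hx y hy
      rw [div_mul_eq_mul_div, le_div_iff₀ hε]
      rw [pow_succ] at this
      change D * (1/2)^n * ε ≤ 16 * dist (x:M) (y:M)
      linarith

lemma nd_frost {M : Type*} [MetricSpace M] [CompactSpace M] (γ : NNReal) (hγ : 0 < γ)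
    (h : (γ : ENNReal) < dimH (Set.univ : Set M)) :
    ∃ (m : Set M → ℝ) (D : ℝ) (X : Set M), NDCont m ∧ 0 < D ∧ IsClosed X ∧ 0 < m X ∧
      (∀ x ∈ X, ∀ y ∈ X, dist x y ≤ D) ∧
      (∀ (x : M) (r : ℝ), 0 < r → ∀ A ⊆ Metric.closedBall x r, m A ≤ (2 * r) ^ (γ:ℝ)) := by
  classical
  borelize M
  have htop := hausdorffMeasure_of_lt_dimH h
  obtain ⟨r, hr, hpre⟩ : ∃ r : ENNReal, 0 < r ∧
      OuterMeasure.mkMetric'.pre (fun s : Set M => Metric.ediam s ^ (γ:ℝ)) r Set.univ ≠ 0 := by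
    by_contra! hcon
    have h1 : μH[(γ:ℝ)] (Set.univ : Set M) = 0 := by
      have : (μH[(γ:ℝ)] : Measure M).toOuterMeasure Set.univ = 0 := by
        rw [Measure.hausdorffMeasure, Measure.mkMetric_toOuterMeasure, OuterMeasure.mkMetric,
          OuterMeasure.mkMetric']
        simp only [OuterMeasure.iSup_apply, ENNReal.iSup_eq_zero]
        intro r hr
        exact hcon r hr
      exact this
    rw [h1] at htop
    exact ENNReal.zero_ne_top htop
  set ν := OuterMeasure.mkMetric'.pre (fun s : Set M => Metric.ediam s ^ (γ:ℝ)) r with hν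
  set D : ℝ := (min r 1).toReal with hD
  have hmt : min r 1 ≠ ⊤ := ((min_le_right _ _).trans_lt ENNReal.one_lt_top).ne
  have hDpos : 0 < D := ENNReal.toReal_pos (lt_min hr one_pos).ne' hmt
  have hDr : ENNReal.ofReal D ≤ r := by
    rw [hD, ENNReal.ofReal_toReal hmt]; exact min_le_left _ _
  obtain ⟨t, -, ht, htc⟩ := finite_cover_balls_of_compact (isCompact_univ (X := M))
    (show 0 < D/2 by positivity)
  obtain ⟨c, hc⟩ : ∃ c, ν (Metric.closedBall c (D/2)) ≠ 0 := by
    by_contra! hcon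
    apply hpre
    refine measure_mono_null htc ?_
    rw [measure_biUnion_null_iff ht.countable]
    intro c _
    exact measure_mono_null Metric.ball_subset_closedBall (hcon c)
  set X := Metric.closedBall c (D/2) with hX
  have hdist : ∀ x ∈ X, ∀ y ∈ X, dist x y ≤ D := by
    intro x hx y hy
    rw [hX, Metric.mem_closedBall] at hx hy
    have := dist_triangle_right x y c
    linarith
  have hdiam : ∀ A : Set M, Metric.ediam (A ∩ X) ≤ ENNReal.ofReal D := by
    intro A
    refine Metric.ediam_le fun x hx y hy => ?_
    rw [edist_dist]
    exact ENNReal.ofReal_le_ofReal (hdist x hx.2 y hy.2)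
  have hle : ∀ A : Set M, ν (A ∩ X) ≤ Metric.ediam (A ∩ X) ^ (γ:ℝ) := fun A =>
    OuterMeasure.mkMetric'.pre_le ((hdiam A).trans hDr)
  have hfin : ∀ A : Set M, ν (A ∩ X) ≠ ⊤ := by
    intro A
    refine ((hle A).trans_lt ?_).ne
    exact ENNReal.rpow_lt_top_of_nonneg γ.2 ((hdiam A).trans_lt ENNReal.ofReal_lt_top).ne
  refine ⟨fun A => (ν (A ∩ X)).toReal, D, X, ⟨?_, ?_, ?_, ?_⟩, hDpos, Metric.isClosed_closedBall,
    ?_, hdist, ?_⟩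
  · intro A; exact ENNReal.toReal_nonneg
  · simp
  · intro A B hAB
    exact ENNReal.toReal_mono (hfin B) (measure_mono (Set.inter_subset_inter_left _ hAB))
  · intro A B
    rw [← ENNReal.toReal_add (hfin A) (hfin B)]
    refine ENNReal.toReal_mono (ENNReal.add_ne_top.2 ⟨hfin A, hfin B⟩) ?_
    rw [Set.union_inter_distrib_right]
    exact measure_union_le _ _
  · simp only
    refine ENNReal.toReal_pos ?_ (hfin X)
    rwa [Set.inter_self]
  · intro x s hs A hA
    have h1 : Metric.ediam (A ∩ X) ≤ ENNReal.ofReal (2 * s) := by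
      refine Metric.ediam_le fun y hy z hz => ?_
      rw [edist_dist]
      refine ENNReal.ofReal_le_ofReal ?_
      have hy' := hA hy.1
      have hz' := hA hz.1
      rw [Metric.mem_closedBall] at hy' hz'
      have := dist_triangle_right y z x
      linarith
    refine ENNReal.toReal_le_of_le_ofReal (by positivity) ?_
    rw [← ENNReal.ofReal_rpow_of_pos (by positivity)]
    exact (hle A).trans (ENNReal.rpow_le_rpow h1 γ.2)

end NDHelpers

/-- **Nonlinear Dvoretzky theorem for Hausdorff dimension (Mendel–Naor).** There is a universal
constant `c > 0` such that for every `ε ∈ (0,1)` and `α > 0`, every compact metric space of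
Hausdorff dimension `> α` has a closed subset of Hausdorff dimension `≥ (1-ε)α` that embeds
into an ultrametric space with distortion at most `c/ε`. -/
theorem nonlinear_dvoretzky_hausdorff :
    ∃ c : ℝ, 0 < c ∧ ∀ ε : ℝ, ε ∈ Set.Ioo (0 : ℝ) 1 → ∀ α : ℝ, 0 < α →
      ∀ (M : Type u) [MetricSpace M] [CompactSpace M],
        ENNReal.ofReal α < dimH (Set.univ : Set M) →
        ∃ S : Set M, IsClosed S ∧ ENNReal.ofReal ((1 - ε) * α) ≤ dimH S ∧
          ∃ ρ : S → S → ℝ, IsUltrametricOn ρ ∧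
            ∀ x y : S, dist (x : M) (y : M) ≤ ρ x y ∧
              ρ x y ≤ (c / ε) * dist (x : M) (y : M) := by
  refine ⟨16, by norm_num, ?_⟩
  rintro ε ⟨hε0, hε1⟩ α hα M _ _ hdim
  obtain ⟨γ, hγ1, hγ2⟩ := ENNReal.lt_iff_exists_nnreal_btwn.1 hdim
  have hγα : α < γ := by
    rw [← ENNReal.ofReal_coe_nnreal] at hγ1
    exact (ENNReal.ofReal_lt_ofReal_iff_of_nonneg hα.le).1 hγ1
  have hγpos : 0 < γ := by
    have : (0:ℝ) < γ := hα.trans hγα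
    exact_mod_cast this
  obtain ⟨m, D, X, hm, hD, hXcl, hmX, hXd, hball⟩ := nd_frost γ hγpos hγ2
  have h1ε : 0 < 1 - ε := by linarith
  set β := (1 - ε) * α with hβ
  have hβpos : 0 < β := by positivity
  set κ := (1 - ε) * (γ - α) with hκ
  have hκpos : 0 < κ := mul_pos h1ε (by linarith)
  set K : ℝ := 2 ^ κ with hK
  have hK1 : 1 < K := Real.one_lt_rpow (by norm_num) hκpos
  set v0 := m X ^ (1 - ε) with hv0
  have hv0pos : 0 < v0 := Real.rpow_pos_of_pos hmX _
  set C0 := ((D/2) ^ (γ:ℝ)) ^ (1 - ε) * 2 ^ β with hC0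
  have hC0pos : 0 < C0 := by positivity
  set C := C0 + v0 with hC
  have hCpos : 0 < C := by positivity
  refine nd_tree (NDInv m ε K D C β) ε D C β hε0 hD hCpos hβpos ?_ ?_ (X, v0) ?_
  · rintro n p ⟨h1, h2, h3, h4, h5, h6⟩
    refine ⟨h1, ?_, h3, h4, h6⟩
    rw [Set.nonempty_iff_ne_empty]
    intro h
    rw [h, hm.empty] at h2
    exact lt_irrefl _ h2
  · refine fun n p hp => nd_step m hm ε hε0 hε1 K hK1 D hD C β γ 2 (by norm_num) hball ?_ n p hp
    intro n
    set h : ℝ := (1/2)^n with hh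
    have hhpos : 0 < h := by positivity
    have hKn : K ^ n = h ^ (-κ) := by
      rw [hK, hh, one_div, inv_pow, Real.inv_rpow (by positivity), Real.rpow_neg (by positivity),
        inv_inv, ← Real.rpow_natCast, ← Real.rpow_natCast, ← Real.rpow_mul (by norm_num),
        ← Real.rpow_mul (by norm_num), mul_comm]
    have e1 : ((2 * (D * h / 4)) ^ (γ:ℝ)) ^ (1 - ε)
        = ((D/2) ^ (γ:ℝ)) ^ (1 - ε) * h ^ (γ * (1 - ε)) := by
      rw [show 2 * (D * h / 4) = (D/2) * h by ring, Real.mul_rpow (by positivity) (by positivity),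
        Real.mul_rpow (by positivity) (by positivity), ← Real.rpow_mul hhpos.le]
    have e2 : h ^ (-κ) * h ^ (γ * (1 - ε)) = h ^ β := by
      rw [← Real.rpow_add hhpos]; congr 1; rw [hκ, hβ]; ring
    have e3 : ((1/2:ℝ)^(n+1)) ^ β = h ^ β * (2 ^ β)⁻¹ := by
      rw [pow_succ, Real.mul_rpow (by positivity) (by positivity), one_div,
        Real.inv_rpow (by norm_num), hh, one_div]
    have h2β : (0:ℝ) < 2 ^ β := by positivity
    calc K ^ n * ((2 * (D * h / 4)) ^ (γ:ℝ)) ^ (1 - ε)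
        = ((D/2) ^ (γ:ℝ)) ^ (1 - ε) * (h ^ (-κ) * h ^ (γ * (1 - ε))) := by
          rw [hKn, e1]; ring
      _ = C0 * ((1/2)^(n+1)) ^ β := by
          rw [e2, e3, hC0]; field_simp
      _ ≤ C * ((1/2)^(n+1)) ^ β := by
          gcongr; linarith
  · refine ⟨hXcl, hmX, hv0pos, ?_, ?_, ?_⟩
    · simpa using hXd
    · intro x _
      simp only [pow_zero, mul_one, one_mul]
      calc v0 * m (Metric.closedBall x (D / 4) ∩ X) ^ ε ≤ v0 * m X ^ ε := by
            have := Real.rpow_le_rpow (hm.nonneg _) (hm.mono _ _ (Set.inter_subset_right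
              (s := Metric.closedBall x (D / 4)) (t := X))) hε0.le
            gcongr
        _ = m X := by rw [hv0, ← Real.rpow_add hmX]; simp
    · simp only [pow_zero, Real.one_rpow, mul_one]
      linarith
end

section
/- Fix n ∈ ℕ and let (M, d_M) be a compact metric space of Hausdorff dimension strictly greater than n. Then there exists a Lipschitz mapping from M onto the cube [0,1]^n, i.e., there exist a surjection f : M → [0,1]^n and L ∈ (0,∞) such that ‖f(x) − f(y)‖ ≤ L d_M(x,y) for all x,y ∈ M. -/
open scoped ENNReal
universe u

def KMZClaim {M : Type u} [MetricSpace M] (h : Finset M → ℝ) (α θ ε C R : ℝ) : Prop :=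
  ∀ (S : Finset M) (m : ℝ), 0 < m →
    (∀ x ∈ S, ∀ A ⊆ S, (∀ y ∈ A, dist y x ≤ R) → h A ≤ m) →
    ∀ a : ℝ, a ≤ R ^ α → a * m ^ θ ≤ h S →
    ∃ x : ℝ → M, (∀ u ∈ Set.Ico 0 a, x u ∈ S) ∧
      ∀ u ∈ Set.Ico 0 a, ∀ v ∈ Set.Ico 0 a, u < v →
        v - u ≤ ε ∨ v - u ≤ C * dist (x u) (x v) ^ α

lemma kmz_ratio (b : ℕ → ℝ) (T : ℕ) (hT : 0 < T) (m : ℝ) (hm0 : 0 < m) (h0 : 0 < b 0)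
    (hm : b T ≤ m) :
    ∃ t < T, b (t + 1) ≤ (m / b 0) ^ (1 / (T : ℝ)) * b t := by
  by_contra! hcon
  set q := (m / b 0) ^ (1 / (T : ℝ)) with hq
  have hTR : (T : ℝ) ≠ 0 := by exact_mod_cast hT.ne'
  have hq0 : 0 ≤ q := by positivity
  have key : ∀ t ≤ T, q ^ t * b 0 ≤ b t ∧ (0 < t → q ^ t * b 0 < b t) := by
    intro t
    induction t with
    | zero => intro _; simp
    | succ t ih =>
      intro ht
      obtain ⟨h1, h2⟩ := ih (by omega)
      have := hcon t (by omega)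
      have h5 : q ^ (t + 1) * b 0 ≤ q * b t := by
        rw [pow_succ', mul_assoc]
        exact mul_le_mul_of_nonneg_left h1 hq0
      exact ⟨by linarith, fun _ => by linarith⟩
  have h1 := (key T le_rfl).2 hT
  have h2 : q ^ T = m / b 0 := by
    rw [hq, ← Real.rpow_natCast, ← Real.rpow_mul (by positivity), one_div,
      inv_mul_cancel₀ hTR, Real.rpow_one]
  rw [h2, div_mul_cancel₀ _ h0.ne'] at h1
  linarith

lemma kmz_step {M : Type u} [MetricSpace M] [Nonempty M] (h : Finset M → ℝ) (h0 : h ∅ = 0)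
    (hmono : ∀ A B, A ⊆ B → h A ≤ h B)
    (hsub : ∀ A B : Finset M, ∀ D : Finset M, (∀ x ∈ D, x ∈ A ∨ x ∈ B) → h D ≤ h A + h B)
    (T : ℕ) (hT : 0 < T) (α ε r : ℝ) (hr : 0 < r) (hα : 0 < α)
    (hcap : ∀ (A : Finset M) (x : M), (∀ y ∈ A, dist y x ≤ (T + 1) * r) →
      h A ^ (1 - 1 / (T : ℝ)) ≤ r ^ α)
    (next : KMZClaim h α (1 / (T : ℝ)) ε ((T + 1 : ℝ) ^ α) r) :
    KMZClaim h α (1 / (T : ℝ)) ε ((T + 1 : ℝ) ^ α) ((T + 1) * r) := by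
  classical
  have hTR : (0 : ℝ) < T := by exact_mod_cast hT
  have hnn : ∀ A, 0 ≤ h A := fun A => h0 ▸ hmono _ _ (Finset.empty_subset A)
  set θ := 1 / (T : ℝ) with hθ
  intro S
  induction S using Finset.strongInduction with
  | H S ih =>
  intro m hm hball a haR ham
  rcases le_or_gt a 0 with ha | ha
  · refine ⟨fun _ => Classical.arbitrary M, ?_, ?_⟩
    · intro u hu; exact absurd (hu.1.trans_lt hu.2) (by linarith)
    · intro u hu; exact absurd (hu.1.trans_lt hu.2) (by linarith)
  have hmθ : 0 < m ^ θ := Real.rpow_pos_of_pos hm _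
  have hSpos : 0 < h S := lt_of_lt_of_le (mul_pos ha hmθ) ham
  have hSne : S.Nonempty := by
    rw [Finset.nonempty_iff_ne_empty]; rintro rfl; linarith
  obtain ⟨x0, hx0, hmax⟩ := Finset.exists_max_image S
    (fun x => h (S.filter (fun y => dist y x ≤ r))) hSne
  set b : ℕ → ℝ := fun t => h (S.filter (fun y => dist y x0 ≤ (t + 1) * r)) with hb
  have hb0 : b 0 = h (S.filter (fun y => dist y x0 ≤ r)) := by simp [hb]
  have ballS' : ∀ S' ⊆ S, ∀ x ∈ S', ∀ A ⊆ S', (∀ y ∈ A, dist y x ≤ (T + 1) * r) → h A ≤ m :=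
    fun S' hS' x hx A hA => hball x (hS' hx) A (hA.trans hS')
  rcases (hnn (S.filter (fun y => dist y x0 ≤ r))).eq_or_lt with hz | hpos
  · set S' := S.filter (fun y => ¬ dist y x0 ≤ r) with hS'
    have hss : S' ⊂ S := by
      refine Finset.filter_ssubset.2 ⟨x0, hx0, by simp [hr.le]⟩
    have h1 := hsub (S.filter (fun y => dist y x0 ≤ r)) S' S (by
      intro x hx
      by_cases hd : dist x x0 ≤ r
      · exact Or.inl (Finset.mem_filter.2 ⟨hx, hd⟩)
      · exact Or.inr (Finset.mem_filter.2 ⟨hx, hd⟩))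
    obtain ⟨x, hx1, hx2⟩ := ih S' hss m hm (ballS' S' hss.1) a haR (by linarith)
    exact ⟨x, fun u hu => hss.1 (hx1 u hu), hx2⟩
  have hbT : b T ≤ m := hball x0 hx0 _ (Finset.filter_subset _ _) (by
    intro y hy; exact (Finset.mem_filter.1 hy).2)
  obtain ⟨t, htT, ht⟩ := kmz_ratio b T hT m hm (hb0 ▸ hpos) hbT
  set m' := b 0 with hm'
  have hm'pos : 0 < m' := hb0 ▸ hpos
  have hm'θ : 0 < m' ^ θ := Real.rpow_pos_of_pos hm'pos _
  set C := S.filter (fun y => dist y x0 ≤ (t + 1) * r) with hC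
  set S' := S.filter (fun y => ¬ dist y x0 ≤ ((t + 1 : ℕ) + 1) * r) with hS'
  have hss : S' ⊂ S := by
    refine Finset.filter_ssubset.2 ⟨x0, hx0, ?_⟩
    simp only [dist_self, not_not]; positivity
  have hSle := hsub (S.filter (fun y => dist y x0 ≤ ((t + 1 : ℕ) + 1) * r)) S' S (by
      intro x hx
      by_cases hd : dist x x0 ≤ ((t + 1 : ℕ) + 1) * r
      · exact Or.inl (Finset.mem_filter.2 ⟨hx, hd⟩)
      · exact Or.inr (Finset.mem_filter.2 ⟨hx, hd⟩))
  change h S ≤ b (t + 1) + h S' at hSle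
  have hbt : b t = h C := rfl
  rw [Real.div_rpow hm.le hm'pos.le] at ht
  have hrα : 0 < r ^ α := Real.rpow_pos_of_pos hr _
  have hbt1 : b (t + 1) ≤ r ^ α * m ^ θ := by
    have h1 : ∀ y ∈ S.filter (fun y => dist y x0 ≤ ((t + 1 : ℕ) + 1) * r),
        dist y x0 ≤ (T + 1) * r := by
      intro y hy
      refine (Finset.mem_filter.1 hy).2.trans ?_
      have : ((t + 1 : ℕ) : ℝ) ≤ T := by exact_mod_cast htT
      gcongr
    have h2 : b (t + 1) ≤ m := hball x0 hx0 _ (Finset.filter_subset _ _) h1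
    have h3 : b (t + 1) ^ (1 - θ) ≤ r ^ α := hcap _ x0 h1
    have h4 : 0 ≤ b (t + 1) := hnn _
    have hθ0 : 0 < θ := by positivity
    calc b (t + 1) = b (t + 1) ^ (1 - θ) * b (t + 1) ^ θ := by
          rw [← Real.rpow_add' h4 (by simp)]; simp
      _ ≤ r ^ α * m ^ θ := by gcongr
  obtain ⟨a1, ha1, ha1a, ha1r, ha1m, ha2⟩ : ∃ a1 : ℝ, 0 ≤ a1 ∧ a1 ≤ a ∧ a1 ≤ r ^ α ∧
      a1 * m' ^ θ ≤ h C ∧ (a - a1) * m ^ θ ≤ h S' := by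
    have hq : 0 ≤ h C / m' ^ θ := div_nonneg (hnn _) hm'θ.le
    refine ⟨min a (min (r ^ α) (h C / m' ^ θ)), by positivity, min_le_left _ _,
      (min_le_right _ _).trans (min_le_left _ _), ?_, ?_⟩
    · rw [← le_div_iff₀ hm'θ]
      exact (min_le_right _ _).trans (min_le_right _ _)
    · rcases min_choice a (min (r ^ α) (h C / m' ^ θ)) with h1 | h1
      · rw [h1]; simpa using hnn _
      · rw [h1]
        rcases min_choice (r ^ α) (h C / m' ^ θ) with h2 | h2
        · rw [h2]; nlinarith
        · rw [h2]
          have : h C / m' ^ θ * m ^ θ = m ^ θ / m' ^ θ * b t := by rw [hbt]; ring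
          rw [sub_mul, this]; linarith
  obtain ⟨x1, hx1, hx1'⟩ := next C m' hm'pos (by
    intro x hx A hA hAx
    refine le_trans (hmono _ _ ?_) ((hmax x (Finset.filter_subset _ _ hx)).trans_eq hb0.symm)
    intro y hy
    exact Finset.mem_filter.2 ⟨Finset.filter_subset _ _ (hA hy), hAx y hy⟩) a1 ha1r ha1m
  obtain ⟨x2, hx2, hx2'⟩ := ih S' hss m hm (ballS' S' hss.1) (a - a1) (by linarith) ha2
  refine ⟨fun u => if u < a1 then x1 u else x2 (u - a1), ?_, ?_⟩
  · intro u hu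
    by_cases hua : u < a1
    · simp only [hua, if_true]
      exact Finset.filter_subset _ _ (hx1 u ⟨hu.1, hua⟩)
    · simp only [hua, if_false]
      exact hss.1 (hx2 _ ⟨by linarith, by linarith [hu.2]⟩)
  · intro u hu v hv huv
    by_cases hua : u < a1 <;> by_cases hva : v < a1
    · simp only [hua, hva, if_true]
      exact hx1' u ⟨hu.1, hua⟩ v ⟨hv.1, hva⟩ huv
    · simp only [hua, hva, if_true, if_false]
      right
      have e1 := (Finset.mem_filter.1 (hx1 u ⟨hu.1, hua⟩)).2
      have e2 := (Finset.mem_filter.1 (hx2 (v - a1) ⟨by linarith, by linarith [hv.2]⟩)).2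
      have e3 : r ≤ dist (x1 u) (x2 (v - a1)) := by
        have := dist_triangle (x2 (v - a1)) (x1 u) x0
        rw [dist_comm (x2 _) (x1 _)] at this
        push_cast at e2
        nlinarith
      calc v - u ≤ a := by linarith [hv.2, hu.1]
        _ ≤ _ := haR
        _ = (T + 1 : ℝ) ^ α * r ^ α := Real.mul_rpow (by positivity) hr.le
        _ ≤ _ := by gcongr
    · linarith
    · simp only [hua, hva, if_false]
      have := hx2' (u - a1) ⟨by linarith, by linarith [hu.2]⟩ (v - a1)
        ⟨by linarith, by linarith [hv.2]⟩ (by linarith)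
      simpa using this

lemma kmz_tree {M : Type u} [MetricSpace M] [Nonempty M] (h : Finset M → ℝ) (h0 : h ∅ = 0)
    (hmono : ∀ A B, A ⊆ B → h A ≤ h B)
    (hsub : ∀ A B : Finset M, ∀ D : Finset M, (∀ x ∈ D, x ∈ A ∨ x ∈ B) → h D ≤ h A + h B)
    (T : ℕ) (hT : 0 < T) (α r : ℝ) (hr : 0 < r) (hα : 0 < α) (K : ℕ)
    (hcap : ∀ ρ : ℝ, r ≤ ρ → ρ ≤ (T + 1) ^ K * r → ∀ (A : Finset M) (x : M),
      (∀ y ∈ A, dist y x ≤ ρ) → h A ^ (1 - 1 / (T : ℝ)) ≤ (ρ / (T + 1)) ^ α) :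
    KMZClaim h α (1 / (T : ℝ)) (r ^ α) ((T + 1 : ℝ) ^ α) ((T + 1) ^ K * r) := by
  have hTR : (0 : ℝ) < T := by exact_mod_cast hT
  have key : ∀ k ≤ K,
      KMZClaim h α (1 / (T : ℝ)) (r ^ α) ((T + 1 : ℝ) ^ α) ((T + 1) ^ k * r) := by
    intro k
    induction k with
    | zero =>
      intro _ S m hm _ a haR ham
      rw [pow_zero, one_mul] at haR
      rcases le_or_gt a 0 with ha | ha
      · refine ⟨fun _ => Classical.arbitrary M, ?_, ?_⟩
        · intro u hu; exact absurd (hu.1.trans_lt hu.2) (by linarith)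
        · intro u hu; exact absurd (hu.1.trans_lt hu.2) (by linarith)
      have hSpos : 0 < h S := lt_of_lt_of_le (mul_pos ha (Real.rpow_pos_of_pos hm _)) ham
      have hSne : S.Nonempty := by
        rw [Finset.nonempty_iff_ne_empty]; rintro rfl; linarith
      obtain ⟨x, hx⟩ := hSne
      exact ⟨fun _ => x, fun _ _ => hx, fun u hu v hv _ => Or.inl (by linarith [hu.1, hv.2])⟩
    | succ k ih =>
      intro hk
      rw [pow_succ', mul_assoc]
      have h1 : (1 : ℝ) ≤ (T + 1) ^ (k + 1) := one_le_pow₀ (by linarith)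
      refine kmz_step h h0 hmono hsub T hT α (r ^ α) _ (by positivity) hα ?_ (ih (by omega))
      intro A x hA
      have := hcap ((T + 1) ^ (k + 1) * r) (le_mul_of_one_le_left hr.le h1)
        (by gcongr; linarith) A x (by rwa [pow_succ', mul_assoc])
      rwa [pow_succ', mul_assoc, mul_div_cancel_left₀ _ (by positivity)] at this
  exact key K le_rfl

lemma kmz_scale (α p τ : ℝ) (hp : α < p) (hτ : 0 < τ) :
    ∃ R : ℝ, 0 < R ∧ ∀ ρ : ℝ, 0 < ρ → ρ ≤ R → (4 * ρ) ^ p ≤ (ρ / τ) ^ α := by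
  have hκ : 0 < (4 ^ p * τ ^ α)⁻¹ := by positivity
  refine ⟨((4 ^ p * τ ^ α)⁻¹) ^ (1 / (p - α)), by positivity, fun ρ h0 h1 => ?_⟩
  have hg : 0 < p - α := by linarith
  have h2 : ρ ^ (p - α) ≤ (4 ^ p * τ ^ α)⁻¹ := by
    calc ρ ^ (p - α) ≤ (((4 ^ p * τ ^ α)⁻¹) ^ (1 / (p - α))) ^ (p - α) := by gcongr
      _ = _ := by
        rw [← Real.rpow_mul hκ.le, one_div, inv_mul_cancel₀ hg.ne', Real.rpow_one]
  rw [Real.mul_rpow (by norm_num) h0.le, Real.div_rpow h0.le hτ.le]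
  have h3 : ρ ^ p = ρ ^ (p - α) * ρ ^ α := by
    rw [← Real.rpow_add h0]; simp
  rw [h3]
  calc (4 : ℝ) ^ p * (ρ ^ (p - α) * ρ ^ α) ≤ 4 ^ p * ((4 ^ p * τ ^ α)⁻¹ * ρ ^ α) := by gcongr
    _ = ρ ^ α / τ ^ α := by
      have : (4 : ℝ) ^ p ≠ 0 := by positivity
      have : τ ^ α ≠ 0 := by positivity
      field_simp

open MeasureTheory in
lemma kmz_content {M : Type u} [MetricSpace M] [CompactSpace M] (β : NNReal)
    (hdim : (β : ℝ≥0∞) < dimH (Set.univ : Set M)) :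
    ∃ (H : OuterMeasure M) (r0 : ℝ), 0 < r0 ∧ H Set.univ ≠ 0 ∧ H Set.univ ≠ ∞ ∧
      ∀ A : Set M, Metric.ediam A ≤ ENNReal.ofReal r0 → H A ≤ Metric.ediam A ^ (β : ℝ) := by
  borelize M
  have h1 : Measure.hausdorffMeasure (β : ℝ) (Set.univ : Set M) = ∞ :=
    hausdorffMeasure_of_lt_dimH hdim
  have h2 : (OuterMeasure.mkMetric (fun r : ℝ≥0∞ => r ^ (β : ℝ)) : OuterMeasure M) Set.univ = ∞ := by
    rw [← Measure.mkMetric_toOuterMeasure]; exact h1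
  have h3 := OuterMeasure.mkMetric'.tendsto_pre_nat
    (fun s : Set M => Metric.ediam s ^ (β : ℝ)) Set.univ
  change Filter.Tendsto _ _ (nhds (OuterMeasure.mkMetric (fun r : ℝ≥0∞ => r ^ (β : ℝ)) _)) at h3
  rw [h2] at h3
  obtain ⟨N, hN, hN0⟩ := ((h3.eventually (lt_mem_nhds (show (0 : ℝ≥0∞) < ∞ by simp))).and
    (Filter.eventually_gt_atTop 0)).exists
  have hNR : (0 : ℝ) < N := by exact_mod_cast hN0
  have hof : ENNReal.ofReal (N : ℝ)⁻¹ = (N : ℝ≥0∞)⁻¹ := by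
    rw [ENNReal.ofReal_inv_of_pos hNR, ENNReal.ofReal_natCast]
  set H := OuterMeasure.mkMetric'.pre (fun s : Set M => Metric.ediam s ^ (β : ℝ)) (N : ℝ≥0∞)⁻¹
  have hH : ∀ A : Set M, Metric.ediam A ≤ ENNReal.ofReal (N : ℝ)⁻¹ →
      H A ≤ Metric.ediam A ^ (β : ℝ) := by
    intro A hA
    rw [hof] at hA
    exact OuterMeasure.mkMetric'.pre_le hA
  refine ⟨H, (N : ℝ)⁻¹, by positivity, hN.ne', ?_, hH⟩
  obtain ⟨t, -, htf, ht⟩ := (isCompact_univ (X := M)).finite_cover_balls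
    (show (0 : ℝ) < (N : ℝ)⁻¹ / 2 by positivity)
  have h4 : H Set.univ ≤ ∑ x ∈ htf.toFinset, H (Metric.ball x ((N : ℝ)⁻¹ / 2)) := by
    refine (H.mono ht).trans ?_
    refine le_trans (H.mono ?_) (measure_biUnion_finset_le htf.toFinset _)
    intro y hy; simpa using hy
  refine ne_top_of_le_ne_top ?_ h4
  refine (ENNReal.sum_lt_top.2 fun x _ => ?_).ne
  have h5 : Metric.ediam (Metric.ball x ((N : ℝ)⁻¹ / 2)) ≤ ENNReal.ofReal (N : ℝ)⁻¹ := by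
    refine Metric.ediam_le fun y hy z hz => ?_
    rw [edist_dist]
    refine ENNReal.ofReal_le_ofReal ?_
    have := dist_triangle_right y z x
    rw [Metric.mem_ball] at hy hz
    linarith
  refine (hH _ h5).trans_lt ?_
  exact ENNReal.rpow_lt_top_of_nonneg β.2 (ne_top_of_le_ne_top ENNReal.ofReal_ne_top h5)

open MeasureTheory in
lemma kmz_approx {M : Type u} [MetricSpace M] [CompactSpace M] [Nonempty M] (α : ℝ) (β : NNReal)
    (hα : 0 < α) (hαβ : α < β) (hdim : (β : ℝ≥0∞) < dimH (Set.univ : Set M)) :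
    ∃ a C : ℝ, 0 < a ∧ 0 < C ∧ ∀ ε : ℝ, 0 < ε → ∃ x : ℝ → M,
      ∀ u ∈ Set.Ico 0 a, ∀ v ∈ Set.Ico 0 a, u < v →
        v - u ≤ ε ∨ v - u ≤ C * dist (x u) (x v) ^ α := by
  obtain ⟨H, r0, hr0, hH0, hHtop, hH⟩ := kmz_content β hdim
  obtain ⟨T, hT⟩ := exists_nat_gt ((β : ℝ) / (β - α))
  have hβα : (0 : ℝ) < β - α := by linarith
  have hβ : (0 : ℝ) < β := by linarith
  have hTR : (0 : ℝ) < T := lt_trans (by positivity) hT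
  have hT0 : 0 < T := by exact_mod_cast hTR
  have hp : α < β * (1 - 1 / (T : ℝ)) := by
    rw [div_lt_iff₀ hβα] at hT
    have : (β : ℝ) / T < β - α := by rw [div_lt_iff₀ hTR]; linarith
    have h2 : (β : ℝ) * (1 - 1 / (T : ℝ)) = β - β / T := by ring
    linarith
  have hθ : 0 ≤ 1 - 1 / (T : ℝ) := by
    by_contra hneg
    push Not at hneg
    nlinarith
  obtain ⟨R1, hR1, hscale⟩ := kmz_scale α _ (T + 1) hp (by linarith)
  set R0 := min R1 (r0 / 4) with hR0
  have hR0pos : 0 < R0 := by positivity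
  set m := (H Set.univ).toReal with hm
  have hmpos : 0 < m := ENNReal.toReal_pos hH0 hHtop
  have hfin : ∀ A, H A ≠ ∞ := fun A => ne_top_of_le_ne_top hHtop (H.mono (Set.subset_univ A))
  refine ⟨min (R0 ^ α) (m / m ^ (1 / (T : ℝ))), (T + 1 : ℝ) ^ α, by positivity, by positivity, ?_⟩
  intro ε hε
  obtain ⟨K, hK⟩ : ∃ K : ℕ, (R0 / (T + 1) ^ K) ^ α ≤ ε := by
    obtain ⟨K, hK⟩ := pow_unbounded_of_one_lt (R0 / ε ^ (1 / α)) (show (1 : ℝ) < T + 1 by linarith)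
    refine ⟨K, ?_⟩
    have h1 : R0 / (T + 1) ^ K ≤ ε ^ (1 / α) := by
      have hε' : 0 < ε ^ (1 / α) := by positivity
      rw [div_lt_iff₀ hε'] at hK
      rw [div_le_iff₀ (by positivity)]
      linarith
    calc (R0 / (T + 1) ^ K) ^ α ≤ (ε ^ (1 / α)) ^ α := by gcongr
      _ = ε := by rw [← Real.rpow_mul hε.le, one_div, inv_mul_cancel₀ hα.ne', Real.rpow_one]
  set r := R0 / (T + 1) ^ K with hr
  have hrpos : 0 < r := by positivity
  have hrK : (T + 1) ^ K * r = R0 := by rw [hr]; field_simp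
  let h : Finset M → ℝ := fun A => (H (⋃ y ∈ A, Metric.closedBall y r)).toReal
  have hcl := kmz_tree h (by simp [h])
    (by
      intro A B hAB
      refine ENNReal.toReal_mono (hfin _) (H.mono ?_)
      exact Set.biUnion_subset_biUnion_left hAB)
    (by
      intro A B D hD
      simp only [h]
      rw [← ENNReal.toReal_add (hfin _) (hfin _)]
      refine ENNReal.toReal_mono (ENNReal.add_ne_top.2 ⟨hfin _, hfin _⟩) ?_
      refine le_trans (H.mono ?_) (measure_union_le _ _)
      intro z hz
      simp only [Set.mem_iUnion, Set.mem_union, exists_prop] at hz ⊢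
      obtain ⟨y, hy, hzy⟩ := hz
      exact (hD y hy).imp (fun h => ⟨y, h, hzy⟩) (fun h => ⟨y, h, hzy⟩))
    T hT0 α r hrpos hα K
    (by
      intro ρ hρ hρ' A x hA
      rw [hrK] at hρ'
      have hρ0 : 0 < ρ := hrpos.trans_le hρ
      refine le_trans ?_ (hscale ρ hρ0 (hρ'.trans (min_le_left _ _)))
      rw [Real.rpow_mul (by positivity)]
      have h1 : Metric.ediam (⋃ y ∈ A, Metric.closedBall y r) ≤ ENNReal.ofReal (4 * ρ) := by
        refine Metric.ediam_le fun y hy z hz => ?_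
        simp only [Set.mem_iUnion, exists_prop, Metric.mem_closedBall] at hy hz
        obtain ⟨y', hy', hyy⟩ := hy
        obtain ⟨z', hz', hzz⟩ := hz
        rw [edist_dist]
        refine ENNReal.ofReal_le_ofReal ?_
        have e1 := dist_triangle_right y z x
        have e2 := dist_triangle y y' x
        have e3 := dist_triangle z z' x
        linarith [hA _ hy', hA _ hz']
      have h2 : h A ≤ (4 * ρ) ^ (β : ℝ) := by
        have h3 := hH _ (h1.trans (ENNReal.ofReal_le_ofReal (by
          linarith [hρ'.trans (min_le_right _ _)])))
        have h4 := h3.trans (ENNReal.rpow_le_rpow h1 hβ.le)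
        rw [ENNReal.ofReal_rpow_of_nonneg (by positivity) hβ.le] at h4
        exact ENNReal.toReal_le_of_le_ofReal (by positivity) h4
      have h5 : 0 ≤ h A := ENNReal.toReal_nonneg
      gcongr)
  rw [hrK] at hcl
  obtain ⟨t, -, htf, ht⟩ := (isCompact_univ (X := M)).finite_cover_balls hrpos
  have hunion : (⋃ y ∈ htf.toFinset, Metric.closedBall y r) = Set.univ := by
    refine Set.eq_univ_of_univ_subset (ht.trans ?_)
    intro z hz
    simp only [Set.mem_iUnion, exists_prop, Set.Finite.mem_toFinset] at hz ⊢
    obtain ⟨y, hy, hzy⟩ := hz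
    exact ⟨y, hy, Metric.ball_subset_closedBall hzy⟩
  have hhm : h htf.toFinset = m := by simp only [h]; rw [hunion]
  obtain ⟨x, -, hx⟩ := hcl htf.toFinset m hmpos
    (fun _ _ A _ _ => ENNReal.toReal_mono hHtop (H.mono (Set.subset_univ _)))
    (min (R0 ^ α) (m / m ^ (1 / (T : ℝ)))) (min_le_left _ _)
    (by
      rw [hhm, ← le_div_iff₀ (by positivity)]
      exact min_le_right _ _)
  exact ⟨x, fun u hu v hv huv => (hx u hu v hv huv).imp (fun h => h.trans hK) id⟩

lemma kmz_param {M : Type u} [MetricSpace M] [CompactSpace M] [Nonempty M] (α : ℝ) (β : NNReal)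
    (hα : 0 < α) (hαβ : α < β) (hdim : (β : ℝ≥0∞) < dimH (Set.univ : Set M)) :
    ∃ a C : ℝ, 0 < a ∧ 0 < C ∧ ∃ x : ℝ → M,
      ∀ u ∈ Set.Ico 0 a, ∀ v ∈ Set.Ico 0 a, u < v → v - u ≤ C * dist (x u) (x v) ^ α := by
  obtain ⟨a, C, ha, hC, hx⟩ := kmz_approx (M := M) α β hα hαβ hdim
  refine ⟨a, C, ha, hC, ?_⟩
  choose x hx using fun N : ℕ => hx (1 / ((N : ℝ) + 1)) (by positivity)
  let U : Ultrafilter ℕ := Filter.hyperfilter ℕ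
  have hlim : ∀ u : ℝ, ∃ y : M, Filter.Tendsto (fun N => x N u) U (nhds y) := fun u =>
    ⟨_, (U.map (fun N => x N u)).le_nhds_lim⟩
  choose y hy using hlim
  refine ⟨y, fun u hu v hv huv => ?_⟩
  have hU : (U : Filter ℕ) ≤ Filter.atTop := by
    rw [← Nat.cofinite_eq_atTop]; exact Filter.hyperfilter_le_cofinite
  have h1 : Filter.Tendsto (fun N => C * dist (x N u) (x N v) ^ α) U
      (nhds (C * dist (y u) (y v) ^ α)) :=
    (((hy u).dist (hy v)).rpow_const (Or.inr hα.le)).const_mul C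
  refine ge_of_tendsto h1 ?_
  have h2 : ∀ᶠ N : ℕ in Filter.atTop, 1 / ((N : ℝ) + 1) < v - u :=
    tendsto_one_div_add_atTop_nhds_zero_nat.eventually (gt_mem_nhds (sub_pos.2 huv))
  filter_upwards [hU h2] with N hN
  rcases hx N u hu v hv huv with h | h
  · exact absurd h (not_le.2 hN)
  · exact h

lemma kmz_digits (n : ℕ) (α : ℝ) (hα : (n : ℝ) < α) :
    ∃ D B : ℝ, 0 < D ∧ 0 < B ∧ ∃ p : (Fin n → ℝ) → ℝ,
      ∀ q, (∀ i, q i ∈ Set.Icc (0 : ℝ) 1) → p q ∈ Set.Icc 0 B ∧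
      ∀ q', (∀ i, q' i ∈ Set.Icc (0 : ℝ) 1) → dist q q' ^ α ≤ D * |p q - p q'| := by
  have hα0 : 0 < α := lt_of_le_of_lt (by positivity) hα
  set l : ℝ := 2 ^ (-α) with hl
  have hl0 : 0 < l := by positivity
  have hl1 : l < 1 := Real.rpow_lt_one_of_one_lt_of_neg (by norm_num) (by linarith)
  have hnl : 2 ^ n * l < 1 := by
    rw [hl, ← Real.rpow_natCast, ← Real.rpow_add (by norm_num)]
    exact Real.rpow_lt_one_of_one_lt_of_neg (by norm_num) (by linarith)
  have hex : ∀ t : ℝ, ∃ d : ℕ → Fin 2, t ∈ Set.Icc (0 : ℝ) 1 → Real.ofDigits d = t := by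
    intro t
    by_cases ht : t ∈ Set.Icc (0 : ℝ) 1
    · obtain ⟨d, -, hd⟩ := Real.ofDigits_SurjOn (b := 2) (by norm_num) ht
      exact ⟨d, fun _ => hd⟩
    · exact ⟨fun _ => 0, fun h => absurd h ht⟩
  choose d hd using hex
  let c : (Fin n → ℝ) → ℕ → ℝ := fun q k =>
    ((finFunctionFinEquiv (fun i => d (q i) k) : Fin (2 ^ n)) : ℕ)
  have hc0 : ∀ q k, 0 ≤ c q k := fun q k => Nat.cast_nonneg _
  have hc1 : ∀ q k, c q k ≤ 2 ^ n - 1 := by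
    intro q k
    have := (finFunctionFinEquiv (fun i => d (q i) k) : Fin (2 ^ n)).2
    have h2 : (((finFunctionFinEquiv (fun i => d (q i) k) : Fin (2 ^ n)) : ℕ) : ℝ) + 1 ≤ 2 ^ n := by
      exact_mod_cast this
    simp only [c]; linarith
  have hN0 : (0 : ℝ) ≤ 2 ^ n - 1 := by
    have : (1 : ℝ) ≤ 2 ^ n := one_le_pow₀ (by norm_num)
    linarith
  have hgeo : Summable (fun k : ℕ => ((2 : ℝ) ^ n - 1) * l ^ k) :=
    (summable_geometric_of_lt_one hl0.le hl1).mul_left _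
  have hsum : ∀ q, Summable (fun k => c q k * l ^ k) := fun q =>
    Summable.of_nonneg_of_le (fun k => mul_nonneg (hc0 q k) (by positivity))
      (fun k => mul_le_mul_of_nonneg_right (hc1 q k) (by positivity)) hgeo
  have h1l : 0 < 1 - l := by linarith
  have h1nl : 0 < 1 - 2 ^ n * l := by linarith
  refine ⟨(1 - l) / (1 - 2 ^ n * l), (2 ^ n - 1) * (1 - l)⁻¹ + 1, by positivity, by positivity,
    fun q => ∑' k, c q k * l ^ k, ?_⟩
  intro q hq
  refine ⟨⟨tsum_nonneg fun k => mul_nonneg (hc0 q k) (by positivity), ?_⟩, ?_⟩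
  · have := (hsum q).tsum_le_tsum
      (fun k => mul_le_mul_of_nonneg_right (hc1 q k) (by positivity)) hgeo
    rw [tsum_mul_left, tsum_geometric_of_lt_one hl0.le hl1] at this
    linarith
  intro q' hq'
  have hdig : ∀ k, c q k = c q' k → ∀ i, d (q i) k = d (q' i) k := by
    intro k hk i
    have h1 : finFunctionFinEquiv (fun i => d (q i) k) = finFunctionFinEquiv (fun i => d (q' i) k) :=
      Fin.ext (by simp only [c] at hk; exact_mod_cast hk)
    exact congrFun (finFunctionFinEquiv.injective h1) i
  by_cases hall : ∀ k, c q k = c q' k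
  · have : q = q' := by
      funext i
      rw [← hd _ (hq i), ← hd _ (hq' i)]
      congr 1
      funext k
      exact hdig k (hall k) i
    subst this
    rw [dist_self, Real.zero_rpow hα0.ne']
    simp
  push Not at hall
  classical
  obtain ⟨k, hk, hmin⟩ : ∃ k, c q k ≠ c q' k ∧ ∀ j < k, c q j = c q' j :=
    ⟨Nat.find hall, Nat.find_spec hall, fun j hj => not_not.1 (Nat.find_min hall hj)⟩
  have hdist : dist q q' ≤ ((2 : ℝ) ^ k)⁻¹ := by
    refine (dist_pi_le_iff (by positivity)).2 fun i => ?_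
    rw [← hd _ (hq i), ← hd _ (hq' i), Real.dist_eq]
    exact_mod_cast Real.abs_ofDigits_sub_ofDigits_le (fun j hj => hdig j (hmin j hj) i)
  have hdl : dist q q' ^ α ≤ l ^ k := by
    calc dist q q' ^ α ≤ (((2 : ℝ) ^ k)⁻¹) ^ α := by gcongr
      _ = l ^ k := by
        rw [hl, ← Real.rpow_natCast, ← Real.rpow_natCast, ← Real.rpow_neg (by norm_num),
          ← Real.rpow_mul (by norm_num), ← Real.rpow_mul (by norm_num)]
        congr 1; ring
  set e : ℕ → ℝ := fun j => (c q j - c q' j) * l ^ j with he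
  have hes : Summable e := by
    have := (hsum q).sub (hsum q')
    refine this.congr fun j => ?_
    simp only [he]; ring
  have hpe : (∑' k, c q k * l ^ k) - (∑' k, c q' k * l ^ k) = ∑' j, e j := by
    rw [← (hsum q).tsum_sub (hsum q')]
    exact tsum_congr fun j => by simp only [he]; ring
  have hsplit : ∑' j, e j = e k + ∑' j, e (j + (k + 1)) := by
    rw [← hes.sum_add_tsum_nat_add (k + 1), Finset.sum_range_succ, Finset.sum_eq_zero, zero_add]
    intro j hj
    simp [he, hmin j (Finset.mem_range.1 hj)]
  have hek : l ^ k ≤ |e k| := by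
    have h1 : (1 : ℝ) ≤ |c q k - c q' k| := by
      have h2 : (1 : ℤ) ≤ |((finFunctionFinEquiv (fun i => d (q i) k) : Fin (2 ^ n)) : ℤ)
          - ((finFunctionFinEquiv (fun i => d (q' i) k) : Fin (2 ^ n)) : ℤ)| := by
        refine Int.one_le_abs (sub_ne_zero.2 fun h => hk ?_)
        simp only [c]
        exact_mod_cast h
      simp only [c]
      have h3 := (Int.cast_le (R := ℝ)).2 h2
      push_cast at h3
      exact h3
    simp only [he]
    rw [abs_mul, abs_of_pos (pow_pos hl0 k)]
    exact le_mul_of_one_le_left (by positivity) h1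
  have htail : |∑' j, e (j + (k + 1))| ≤ (2 ^ n - 1) * l ^ (k + 1) * (1 - l)⁻¹ := by
    have hg : HasSum (fun j : ℕ => ((2 : ℝ) ^ n - 1) * l ^ (k + 1) * l ^ j)
        ((2 ^ n - 1) * l ^ (k + 1) * (1 - l)⁻¹) :=
      (hasSum_geometric_of_lt_one hl0.le hl1).mul_left _
    rw [← Real.norm_eq_abs]
    refine tsum_of_norm_bounded hg fun j => ?_
    simp only [he]
    rw [Real.norm_eq_abs, abs_mul, abs_of_pos (pow_pos hl0 _), pow_add l j, mul_comm (l ^ j),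
      ← mul_assoc]
    have : |c q (j + (k + 1)) - c q' (j + (k + 1))| ≤ 2 ^ n - 1 := by
      rw [abs_le]
      constructor <;> linarith [hc0 q (j + (k + 1)), hc1 q (j + (k + 1)), hc0 q' (j + (k + 1)),
        hc1 q' (j + (k + 1))]
    gcongr
  have hlow : l ^ k * ((1 - 2 ^ n * l) / (1 - l)) ≤ |∑' j, e j| := by
    have h1 : |e k| ≤ |∑' j, e j| + |∑' j, e (j + (k + 1))| := by
      have : e k = (∑' j, e j) - ∑' j, e (j + (k + 1)) := by rw [hsplit]; ring
      rw [this]; exact abs_sub _ _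
    have h2 : l ^ k * ((1 - 2 ^ n * l) / (1 - l)) =
        l ^ k - (2 ^ n - 1) * l ^ (k + 1) * (1 - l)⁻¹ := by
      field_simp; ring
    linarith
  simp only [hpe]
  refine hdl.trans ?_
  calc l ^ k = (1 - l) / (1 - 2 ^ n * l) * (l ^ k * ((1 - 2 ^ n * l) / (1 - l))) := by
        generalize 1 - 2 ^ n * l = w at h1nl ⊢
        field_simp
    _ ≤ _ := by gcongr

/-- **Keleti–Máthé–Zindulka.** Every compact metric space of Hausdorff dimension strictly
greater than `n` admits a Lipschitz map onto the cube `[0,1]ⁿ`. -/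
theorem lipschitz_onto_cube (n : ℕ) (M : Type u) [MetricSpace M] [CompactSpace M]
    (hdim : (n : ℝ≥0∞) < dimH (Set.univ : Set M)) :
    ∃ (f : M → EuclideanSpace ℝ (Fin n)) (L : ℝ), 0 < L ∧
      (∀ x y : M, ‖f x - f y‖ ≤ L * dist x y) ∧
      Set.range f = {z : EuclideanSpace ℝ (Fin n) | ∀ i, z i ∈ Set.Icc (0 : ℝ) 1} := by
  have hne : Nonempty M := by
    by_contra hemp
    rw [not_nonempty_iff] at hemp
    rw [Set.eq_empty_of_isEmpty (Set.univ : Set M), dimH_empty] at hdim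
    simp at hdim
  obtain ⟨β, hnβ, hβ⟩ := ENNReal.lt_iff_exists_nnreal_btwn.1 hdim
  have hnβ' : (n : ℝ) < β := by exact_mod_cast hnβ
  obtain ⟨α, hnα, hαβ⟩ := exists_between hnβ'
  have hα : 0 < α := lt_of_le_of_lt (by positivity) hnα
  obtain ⟨a, C, ha, hC, x, hx⟩ := kmz_param (M := M) α β hα hαβ hβ
  obtain ⟨D, B, hD, hB, p, hp⟩ := kmz_digits n α hnα
  set s : ℝ := a / (2 * B) with hs
  have hs0 : 0 < s := by positivity
  let Q : Set (Fin n → ℝ) := {q | ∀ i, q i ∈ Set.Icc (0 : ℝ) 1}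
  let y : (Fin n → ℝ) → M := fun q => x (s * p q)
  have hmem : ∀ q ∈ Q, s * p q ∈ Set.Ico 0 a := by
    intro q hq
    obtain ⟨⟨h1, h2⟩, -⟩ := hp q hq
    refine ⟨by positivity, ?_⟩
    calc s * p q ≤ s * B := by gcongr
      _ = a / 2 := by rw [hs]; field_simp
      _ < a := by linarith
  have habs : ∀ q ∈ Q, ∀ q' ∈ Q, s * |p q - p q'| ≤ C * dist (y q) (y q') ^ α := by
    intro q hq q' hq'
    have e : s * |p q - p q'| = |s * p q - s * p q'| := by
      rw [← mul_sub, abs_mul, abs_of_pos hs0]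
    rw [e]
    rcases lt_trichotomy (s * p q) (s * p q') with h | h | h
    · rw [abs_sub_comm, abs_of_pos (by linarith)]
      exact hx _ (hmem q hq) _ (hmem q' hq') h
    · rw [h, sub_self, abs_zero]; positivity
    · rw [abs_of_pos (by linarith), dist_comm]
      exact hx _ (hmem q' hq') _ (hmem q hq) h
  set L0 : ℝ := (D * C / s) ^ (1 / α) with hL0
  have hL0pos : 0 < L0 := by positivity
  have hlip : ∀ q ∈ Q, ∀ q' ∈ Q, dist q q' ≤ L0 * dist (y q) (y q') := by
    intro q hq q' hq'
    have h1 := (hp q hq).2 q' hq'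
    have h2 := habs q hq q' hq'
    have h3 : dist q q' ^ α ≤ (L0 * dist (y q) (y q')) ^ α := by
      rw [Real.mul_rpow hL0pos.le dist_nonneg, hL0, ← Real.rpow_mul (by positivity), one_div,
        inv_mul_cancel₀ hα.ne', Real.rpow_one]
      calc dist q q' ^ α ≤ D * |p q - p q'| := h1
        _ = D / s * (s * |p q - p q'|) := by field_simp
        _ ≤ D / s * (C * dist (y q) (y q') ^ α) := by gcongr
        _ = _ := by ring
    exact (Real.rpow_le_rpow_iff dist_nonneg (by positivity) hα).1 h3
  have hinj : Set.InjOn y Q := by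
    intro q hq q' hq' h
    have := hlip q hq q' hq'
    rw [h, dist_self, mul_zero] at this
    exact dist_le_zero.1 this
  let g0 : M → Fin n → ℝ := Function.invFunOn y Q
  have hg0 : ∀ q ∈ Q, g0 (y q) = q := fun q hq => hinj.leftInvOn_invFunOn hq
  have hg0lip : LipschitzOnWith L0.toNNReal g0 (y '' Q) := by
    refine LipschitzOnWith.of_dist_le_mul ?_
    rintro _ ⟨q, hq, rfl⟩ _ ⟨q', hq', rfl⟩
    rw [hg0 q hq, hg0 q' hq', Real.coe_toNNReal _ hL0pos.le]
    exact hlip q hq q' hq'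
  obtain ⟨g, hg, hgeq⟩ := hg0lip.extend_pi
  let g1 : M → Fin n → ℝ := fun z i => max (min (g z i) 1) 0
  have hg1 : ∀ z w, dist (g1 z) (g1 w) ≤ L0 * dist z w := by
    intro z w
    refine (dist_pi_le_iff (by positivity)).2 fun i => ?_
    have h1 : dist (g z) (g w) ≤ L0 * dist z w := by
      have := hg.dist_le_mul z w
      rwa [Real.coe_toNNReal _ hL0pos.le] at this
    refine le_trans ?_ ((dist_le_pi_dist (g z) (g w) i).trans h1)
    simp only [g1, Real.dist_eq]
    exact (abs_max_sub_max_le_abs _ _ _).trans (abs_inf_sub_inf_le_abs _ _ _)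
  obtain ⟨K', hlp⟩ : ∃ K' : NNReal, LipschitzWith K'
      (WithLp.toLp 2 : (Fin n → ℝ) → EuclideanSpace ℝ (Fin n)) :=
    ⟨_, PiLp.lipschitzWith_toLp 2 (fun _ : Fin n => ℝ)⟩
  refine ⟨fun z => WithLp.toLp 2 (g1 z), K' * L0 + 1, ?_, ?_, ?_⟩
  rotate_left
  · intro z w
    have := hlp.dist_le_mul (g1 z) (g1 w)
    rw [← dist_eq_norm]
    refine this.trans ?_
    refine (mul_le_mul_of_nonneg_left (hg1 z w) (NNReal.coe_nonneg _)).trans ?_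
    rw [← mul_assoc, add_mul]
    linarith [dist_nonneg (x := z) (y := w)]
  · ext z
    constructor
    · rintro ⟨w, rfl⟩ i
      exact ⟨le_max_right _ _, max_le (min_le_right _ _) zero_le_one⟩
    · intro hz
      have hzQ : (WithLp.ofLp z) ∈ Q := hz
      refine ⟨y (WithLp.ofLp z), ?_⟩
      have h1 : g (y (WithLp.ofLp z)) = WithLp.ofLp z := by
        rw [← hgeq ⟨_, hzQ, rfl⟩]; exact hg0 _ hzQ
      ext i
      simp only [g1, h1]
      rw [min_eq_left (hz i).2, max_eq_left (hz i).1]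
  · positivity
end
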